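/- Let K be a number field with ring of integers O_K, let 𝔭 ⊊ O_K be a proper ideal, and fix an integer i ≥ 0 and a field k. Then there exists a polynomial P(T) with rational coefficients and an integer N such that for all n ≥ N, the dimension over k of the group homology H_i(Γ_n(𝔭); k) (with trivial coefficients in k) equals P(n). -/

import Mathlib

open CategoryTheory AlgebraicTopology

/-- The simplicial `k`-module of chains on the nerve of the one-object category `BG`. -/
noncomputable def barChains (k : Type) [CommRing k] (G : Type) [Group G] :
    SimplicialObject (ModuleCat k) :=
  ((SimplicialObject.whiskering (Type) (ModuleCat k)).obj (ModuleCat.free k)).obj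
    (CategoryTheory.nerve (CategoryTheory.SingleObj G))

/-- Group homology `H_i(G; k)` with trivial coefficients in `k`, defined as the `i`-th
homology of the complex of simplicial chains on the classifying space of `G` (the nerve
of the one-object category `BG`). -/
noncomputable def grpHomology (k : Type) [CommRing k] (G : Type) [Group G] (i : ℕ) :
    ModuleCat k :=
  (HomologicalComplex.homologyFunctor (ModuleCat k) (ComplexShape.down ℕ) i).obj
    ((AlgebraicTopology.alternatingFaceMapComplex (ModuleCat k)).obj (barChains k G))

/-- The congruence subgroup `Γ_n(𝔭)`: the kernel of the reduction map
`GL_n(O_K) → GL_n(O_K/𝔭)`. -/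
def congruenceSubgroup (K : Type) [Field K] [NumberField K]
    (𝔭 : Ideal (NumberField.RingOfIntegers K)) (n : ℕ) :
    Subgroup (GL (Fin n) (NumberField.RingOfIntegers K)) :=
  (Matrix.GeneralLinearGroup.map (Ideal.Quotient.mk 𝔭)).ker

namespace Cong

section Chains
variable (k : Type*) [CommRing k] {V W : Type*}

/-- boundary of an ordered list -/
noncomputable def bd : List V → (List V →₀ k)
  | [] => 0
  | x :: l => Finsupp.single l 1 - Finsupp.lmapDomain k k (List.cons x) (bd l)

/-- boundary operator -/
noncomputable def dd : (List V →₀ k) →ₗ[k] (List V →₀ k) :=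
  Finsupp.linearCombination k (bd k)

/-- cone operator -/
noncomputable def cone (x : V) : (List V →₀ k) →ₗ[k] (List V →₀ k) :=
  Finsupp.lmapDomain k k (List.cons x)

@[simp] lemma dd_single (l : List V) (a : k) : dd k (Finsupp.single l a) = a • bd k l := by
  simp [dd]

@[simp] lemma cone_single (x : V) (l : List V) (a : k) :
    cone k x (Finsupp.single l a) = Finsupp.single (x :: l) a := by
  simp [cone]

lemma bd_cons (x : V) (l : List V) :
    bd k (x :: l) = Finsupp.single l 1 - cone k x (bd k l) := rfl

lemma bd_nil : bd k ([] : List V) = 0 := rfl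

lemma dd_cone (x : V) (z : List V →₀ k) : dd k (cone k x z) = z - cone k x (dd k z) := by
  induction z using Finsupp.induction_linear with
  | zero => simp
  | add f g hf hg => simp only [map_add, hf, hg]; abel
  | single l a =>
    simp [bd_cons, smul_sub]

lemma dd_bd (l : List V) : dd k (bd k l) = 0 := by
  induction l with
  | nil => simp [bd_nil]
  | cons x l ih => rw [bd_cons, map_sub, dd_cone, ih]; simp

lemma dd_dd (z : List V →₀ k) : dd k (dd k z) = 0 := by
  induction z using Finsupp.induction_linear with
  | zero => simp
  | add f g hf hg => simp only [map_add, hf, hg]; abel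
  | single l a => simp [dd_bd]

/-- chains supported on a set of lists, of given length -/
def Ch (K : List V → Prop) (p : ℕ) : Submodule k (List V →₀ k) :=
  Finsupp.supported k k {l | K l ∧ l.length = p}

lemma single_mem_Ch {K : List V → Prop} {p : ℕ} {l : List V} (h : K l) (hl : l.length = p) (a : k) :
    Finsupp.single l a ∈ Ch k K p :=
  Finsupp.single_mem_supported k a ⟨h, hl⟩

/-- induction principle for supported chains -/
lemma supp_le {X : Type*} {S : Set X} {M : Type*} [AddCommGroup M] [Module k M]
    (f : (X →₀ k) →ₗ[k] M) (T : Submodule k M) (h : ∀ x ∈ S, f (Finsupp.single x 1) ∈ T)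
    {z : X →₀ k} (hz : z ∈ Finsupp.supported k k S) : f z ∈ T := by
  have : Finsupp.supported k k S ≤ T.comap f := by
    rw [Finsupp.supported_eq_span_single, Submodule.span_le]
    rintro _ ⟨x, hx, rfl⟩
    exact h x hx
  exact this hz

/-- closed under taking sublists -/
def Closed (K : List V → Prop) : Prop := ∀ l l', l'.Sublist l → K l → K l'

lemma bd_mem_supported (l : List V) :
    bd k l ∈ Finsupp.supported k k {l' | l'.Sublist l ∧ l'.length + 1 = l.length} := by
  induction l with
  | nil => simp [bd_nil]
  | cons x l ih =>
    rw [bd_cons]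
    refine Submodule.sub_mem _ (Finsupp.single_mem_supported k _ ?_) ?_
    · simp
    · refine supp_le k (cone k x) _ ?_ ih
      rintro l' ⟨h1, h2⟩
      rw [cone_single]
      exact Finsupp.single_mem_supported k _ ⟨h1.cons_cons x, by simpa using h2⟩

lemma dd_mem {K : List V → Prop} (hK : Closed K) {p : ℕ} {z : List V →₀ k}
    (hz : z ∈ Ch k K (p + 1)) : dd k z ∈ Ch k K p := by
  refine supp_le k (dd k) _ ?_ hz
  rintro l ⟨h1, h2⟩
  rw [dd_single, one_smul]
  refine Finsupp.supported_mono ?_ (bd_mem_supported k l)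
  rintro l' ⟨h3, h4⟩
  exact ⟨hK _ _ h3 h1, by omega⟩

lemma dd_zero_len {K : List V → Prop} {z : List V →₀ k}
    (hz : z ∈ Ch k K 0) : dd k z = 0 := by
  have : dd k z ∈ (⊥ : Submodule k (List V →₀ k)) := by
    refine supp_le k (dd k) _ ?_ hz
    rintro l ⟨h1, h2⟩
    rw [List.length_eq_zero_iff] at h2
    subst h2
    simp [bd_nil]
  simpa using this

/-- acyclicity of a complex in chain lengths `< c` -/
def Acyc (K : List V → Prop) (c : ℕ) : Prop :=
  ∀ p < c, ∀ z ∈ Ch k K p, dd k z = 0 → ∃ y ∈ Ch k K (p + 1), dd k y = z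

lemma Acyc.mono {K : List V → Prop} {c c' : ℕ} (h : Acyc k K c) (hc : c' ≤ c) : Acyc k K c' :=
  fun p hp => h p (lt_of_lt_of_le hp hc)

lemma acyc_cone {K : List V → Prop} (x : V) (h : ∀ l, K l → K (x :: l)) (c : ℕ) : Acyc k K c := by
  intro p _ z hz hdz
  refine ⟨cone k x z, ?_, ?_⟩
  · refine supp_le k (cone k x) _ ?_ hz
    rintro l ⟨h1, h2⟩
    rw [cone_single]
    exact single_mem_Ch k (h l h1) (by simpa using h2) 1
  · rw [dd_cone, hdz]; simp

/-! ### The double complex -/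

/-- total boundary of a pair of lists -/
noncomputable def bb : List V → List W → (List V × List W →₀ k)
  | [], t => Finsupp.lmapDomain k k (Prod.mk []) (bd k t)
  | x :: s, t => Finsupp.single (s, t) 1 -
      Finsupp.lmapDomain k k (Prod.map (List.cons x) id) (bb s t)

noncomputable def DD : (List V × List W →₀ k) →ₗ[k] (List V × List W →₀ k) :=
  Finsupp.linearCombination k (fun p => bb k p.1 p.2)

@[simp] lemma DD_single (l : List V × List W) (a : k) :
    DD k (Finsupp.single l a) = a • bb k l.1 l.2 := by
  simp [DD]

lemma DD_cons (x : V) (z : List V × List W →₀ k) :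
    DD k (Finsupp.lmapDomain k k (Prod.map (List.cons x) id) z) =
      z - Finsupp.lmapDomain k k (Prod.map (List.cons x) id) (DD k z) := by
  induction z using Finsupp.induction_linear with
  | zero => simp
  | add f g hf hg => simp only [map_add, hf, hg]; abel
  | single l a =>
    simp [bb, smul_sub]

lemma DD_nil (z : List W →₀ k) :
    DD k (Finsupp.lmapDomain k k (Prod.mk ([] : List V)) z) =
      Finsupp.lmapDomain k k (Prod.mk ([] : List V)) (dd k z) := by
  induction z using Finsupp.induction_linear with
  | zero => simp
  | add f g hf hg => simp only [map_add, hf, hg]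
  | single l a =>
    simp [bb]

lemma DD_bb (s : List V) (t : List W) : DD k (bb k s t) = 0 := by
  induction s with
  | nil => rw [bb, DD_nil, dd_bd]; simp
  | cons x l ih => rw [bb, map_sub, DD_cons, ih]; simp

lemma DD_DD (z : List V × List W →₀ k) : DD k (DD k z) = 0 := by
  induction z using Finsupp.induction_linear with
  | zero => simp
  | add f g hf hg => simp only [map_add, hf, hg]; abel
  | single l a => simp [DD_bb]

/-- slot a W-chain next to a fixed list -/
noncomputable def ins (s : List V) : (List W →₀ k) →ₗ[k] (List V × List W →₀ k) :=
  Finsupp.lmapDomain k k (Prod.mk s)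

noncomputable def ins' (t : List W) : (List V →₀ k) →ₗ[k] (List V × List W →₀ k) :=
  Finsupp.lmapDomain k k (fun s => (s, t))

@[simp] lemma ins_single (s : List V) (t : List W) (a : k) :
    ins k s (Finsupp.single t a) = Finsupp.single (s, t) a := by simp [ins]
@[simp] lemma ins'_single (s : List V) (t : List W) (a : k) :
    ins' k t (Finsupp.single s a) = Finsupp.single (s, t) a := by simp [ins']

lemma bb_eq (s : List V) (t : List W) :
    bb k s t = ins' k t (bd k s) + (-1 : k) ^ s.length • ins k s (bd k t) := by
  induction s with
  | nil => simp [bb, bd_nil, ins]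
  | cons x s ih =>
    rw [bb, ih, bd_cons, map_sub, ins'_single, map_add, map_smul]
    have h1 : Finsupp.lmapDomain k k (Prod.map (List.cons x) id) (ins' k t (bd k s)) =
        ins' k t (cone k x (bd k s)) := by
      simp only [ins', cone, Finsupp.lmapDomain_apply, ← Finsupp.mapDomain_comp]
      rfl
    have h2 : Finsupp.lmapDomain k k (Prod.map (List.cons x) id) (ins k s (bd k t)) =
        ins k (x :: s) (bd k t) := by
      simp only [ins, Finsupp.lmapDomain_apply, ← Finsupp.mapDomain_comp]
      rfl
    rw [h1, h2, List.length_cons, pow_succ]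
    simp only [mul_neg, mul_one, neg_smul]
    abel

lemma DD_ins (s : List V) (z : List W →₀ k) :
    DD k (ins k s z) = (∑ t ∈ z.support, z t • ins' k t (bd k s)) +
      (-1 : k) ^ s.length • ins k s (dd k z) := by
  have h : z = ∑ t ∈ z.support, Finsupp.single t (z t) := (Finsupp.sum_single z).symm
  conv_lhs => rw [h]
  conv_rhs => rw [show dd k z = dd k (∑ t ∈ z.support, Finsupp.single t (z t)) by rw [← h]]
  simp only [map_sum, ins_single, DD_single, bb_eq, dd_single, smul_add, Finset.sum_add_distrib,
    map_smul, Finset.smul_sum]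
  congr 1
  refine Finset.sum_congr rfl fun t _ => ?_
  rw [smul_comm]

/-- projection to a row -/
noncomputable def pr (s : List V) : (List V × List W →₀ k) →ₗ[k] (List W →₀ k) :=
  Finsupp.lcomapDomain (Prod.mk s) (Prod.mk_right_injective s)

noncomputable def pr' (t : List W) : (List V × List W →₀ k) →ₗ[k] (List V →₀ k) :=
  Finsupp.lcomapDomain (fun s => (s, t)) (Prod.mk_left_injective t)

lemma pr_apply (s : List V) (z : List V × List W →₀ k) (t : List W) : pr k s z t = z (s, t) := rfl
lemma pr'_apply (t : List W) (z : List V × List W →₀ k) (s : List V) : pr' k t z s = z (s, t) := rfl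

lemma pr_ins_self (s : List V) (z : List W →₀ k) : pr k s (ins k s z) = z := by
  ext t
  rw [pr_apply, ins, Finsupp.lmapDomain_apply, Finsupp.mapDomain_apply (Prod.mk_right_injective s)]

lemma pr_ins_ne {s s' : List V} (h : s ≠ s') (z : List W →₀ k) : pr k s (ins k s' z) = 0 := by
  ext t
  rw [pr_apply, ins, Finsupp.lmapDomain_apply, Finsupp.mapDomain_of_notMem_range]; rfl
  rintro ⟨a, ha⟩
  exact h (congrArg Prod.fst ha).symm

lemma pr'_ins'_self (t : List W) (z : List V →₀ k) : pr' k t (ins' k t z) = z := by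
  ext s
  rw [pr'_apply, ins', Finsupp.lmapDomain_apply]
  exact Finsupp.mapDomain_apply (Prod.mk_left_injective t) z s

lemma pr'_ins'_ne {t t' : List W} (h : t ≠ t') (z : List V →₀ k) : pr' k t (ins' k t' z) = 0 := by
  ext s
  rw [pr'_apply, ins', Finsupp.lmapDomain_apply, Finsupp.mapDomain_of_notMem_range]; rfl
  rintro ⟨a, ha⟩
  exact h (congrArg Prod.snd ha).symm

end Chains
end Cong

namespace Cong

section LemmaN
variable (k : Type*) [CommRing k] {V W : Type*}

/-- chains of the double complex of total length `n` -/
def TD (D : List V → List W → Prop) (n : ℕ) : Submodule k (List V × List W →₀ k) :=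
  Finsupp.supported k k {p | D p.1 p.2 ∧ p.1.length + p.2.length = n}

def Closed2 (D : List V → List W → Prop) : Prop :=
  ∀ s t s' t', s'.Sublist s → t'.Sublist t → D s t → D s' t'

lemma ins_mem {s : List V} {S : Set (List W)} {S' : Set (List V × List W)}
    (h : ∀ t ∈ S, (s, t) ∈ S') {z : List W →₀ k} (hz : z ∈ Finsupp.supported k k S) :
    ins k s z ∈ Finsupp.supported k k S' := by
  refine supp_le k (ins k s) _ ?_ hz
  intro t ht
  rw [ins_single]
  exact Finsupp.single_mem_supported k _ (h t ht)

lemma ins'_mem {t : List W} {S : Set (List V)} {S' : Set (List V × List W)}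
    (h : ∀ s ∈ S, (s, t) ∈ S') {z : List V →₀ k} (hz : z ∈ Finsupp.supported k k S) :
    ins' k t z ∈ Finsupp.supported k k S' := by
  refine supp_le k (ins' k t) _ ?_ hz
  intro s ht
  rw [ins'_single]
  exact Finsupp.single_mem_supported k _ (h s ht)

lemma DD_mem {D : List V → List W → Prop} (hD : Closed2 D) {n : ℕ} {z : List V × List W →₀ k}
    (hz : z ∈ TD k D (n + 1)) : DD k z ∈ TD k D n := by
  refine supp_le k (DD k) _ ?_ hz
  rintro ⟨s, t⟩ ⟨h1, h2⟩
  rw [DD_single, one_smul, bb_eq]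
  refine Submodule.add_mem _ ?_ (Submodule.smul_mem _ _ ?_)
  · refine ins'_mem k ?_ (bd_mem_supported k s)
    rintro s' ⟨h3, h4⟩
    exact ⟨hD _ _ _ _ h3 (List.Sublist.refl _) h1, by simp at h2 ⊢; omega⟩
  · refine ins_mem k ?_ (bd_mem_supported k t)
    rintro s' ⟨h3, h4⟩
    exact ⟨hD _ _ _ _ (List.Sublist.refl _) h3 h1, by simp at h2 ⊢; omega⟩

lemma pr_DD {s : List V} {z : List V × List W →₀ k}
    (hz : z ∈ Finsupp.supported k k {p : List V × List W | p.1.length ≤ s.length}) :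
    pr k s (DD k z) = (-1 : k) ^ s.length • dd k (pr k s z) := by
  have h : ((pr k s ∘ₗ DD k - (-1 : k) ^ s.length • (dd k ∘ₗ pr k s) :
      (List V × List W →₀ k) →ₗ[k] (List W →₀ k))) z ∈
      (⊥ : Submodule k (List W →₀ k)) := by
    refine supp_le k _ _ ?_ hz
    rintro ⟨a, t⟩ ha
    simp only [Set.mem_ofPred_eq] at ha
    rw [Submodule.mem_bot]
    simp only [LinearMap.sub_apply, LinearMap.comp_apply, LinearMap.smul_apply, DD_single, one_smul,
      bb_eq, map_add, map_smul]
    have h1 : pr k s (ins' k t (bd k a)) = 0 := by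
      have : (pr k s ∘ₗ ins' k t) (bd k a) ∈ (⊥ : Submodule k (List W →₀ k)) := by
        refine supp_le k _ _ ?_ (bd_mem_supported k a)
        rintro b ⟨_, hb⟩
        rw [LinearMap.comp_apply, ins'_single, ← ins_single, pr_ins_ne]; simp
        rintro rfl; omega
      simpa using this
    rw [h1, zero_add, ← ins_single]
    by_cases hs : s = a
    · subst hs
      rw [pr_ins_self, pr_ins_self, dd_single, one_smul, sub_self]
    · rw [pr_ins_ne k hs, pr_ins_ne k hs]; simp
  rw [Submodule.mem_bot] at h
  simpa [sub_eq_zero] using h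

lemma pr'_DD {t : List W} {z : List V × List W →₀ k}
    (hz : z ∈ Finsupp.supported k k {p : List V × List W | p.2.length ≤ t.length}) :
    pr' k t (DD k z) = dd k (pr' k t z) := by
  have h : ((pr' k t ∘ₗ DD k - (dd k ∘ₗ pr' k t) :
      (List V × List W →₀ k) →ₗ[k] (List V →₀ k))) z ∈
      (⊥ : Submodule k (List V →₀ k)) := by
    refine supp_le k _ _ ?_ hz
    rintro ⟨a, b⟩ ha
    simp only [Set.mem_ofPred_eq] at ha
    rw [Submodule.mem_bot]
    simp only [LinearMap.sub_apply, LinearMap.comp_apply, DD_single, one_smul,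
      bb_eq, map_add, map_smul]
    have h1 : pr' k t (ins k a (bd k b)) = 0 := by
      have : (pr' k t ∘ₗ ins k a) (bd k b) ∈ (⊥ : Submodule k (List V →₀ k)) := by
        refine supp_le k _ _ ?_ (bd_mem_supported k b)
        rintro b ⟨_, hb⟩
        rw [LinearMap.comp_apply, ins_single, ← ins'_single, pr'_ins'_ne]; simp
        rintro rfl; omega
      simpa using this
    rw [h1, smul_zero, add_zero, ← ins'_single]
    by_cases hs : t = b
    · subst hs
      rw [pr'_ins'_self, pr'_ins'_self, dd_single, one_smul, sub_self]
    · rw [pr'_ins'_ne k hs, pr'_ins'_ne k hs]; simp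
  rw [Submodule.mem_bot] at h
  simpa [sub_eq_zero] using h

lemma pr_mem {D : List V → List W → Prop} {n : ℕ} {z : List V × List W →₀ k}
    (hz : z ∈ TD k D n) (s : List V) : pr k s z ∈ Ch k (D s) (n - s.length) := by
  rw [Ch, Finsupp.mem_supported]
  intro t ht
  have ht : z (s, t) ≠ 0 := by simpa [pr_apply] using ht
  have := (Finsupp.mem_supported _ _).1 hz (Finsupp.mem_support_iff.2 ht)
  exact ⟨this.1, by have := this.2; simp at this; omega⟩

lemma pr'_mem {D : List V → List W → Prop} {n : ℕ} {z : List V × List W →₀ k}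
    (hz : z ∈ TD k D n) (t : List W) : pr' k t z ∈ Ch k (fun s => D s t) (n - t.length) := by
  rw [Ch, Finsupp.mem_supported]
  intro s ht
  have ht : z (s, t) ≠ 0 := by simpa [pr'_apply] using ht
  have := (Finsupp.mem_supported _ _).1 hz (Finsupp.mem_support_iff.2 ht)
  exact ⟨this.1, by have := this.2; simp at this; omega⟩

open Classical in
lemma tot_exact {D : List V → List W → Prop} (hD : Closed2 D) {c : ℕ}
    (hr : ∀ s, D s [] → Acyc k (D s) (c - s.length)) {n : ℕ} (hn : n < c) (m : ℕ) :
    ∀ z ∈ TD k D n, z ∈ Finsupp.supported k k {p : List V × List W | p.1.length < m} →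
      DD k z = 0 → ∃ y ∈ TD k D (n + 1), DD k y = z := by
  induction m with
  | zero =>
    intro z _ hz _
    have : z = 0 := by
      simpa [Finsupp.supported_empty] using hz
    exact ⟨0, Submodule.zero_mem _, by simp [this]⟩
  | succ m ih =>
    intro z hz hzm hdz
    have key : ∀ s : List V, ∃ y : List W →₀ k, s ∈ (z.support.image Prod.fst).filter
        (fun s => s.length = m) → y ∈ Ch k (D s) (n - m + 1) ∧ dd k y = pr k s z := by
      intro s
      by_cases hs : s ∈ (z.support.image Prod.fst).filter (fun s => s.length = m)
      · simp only [Finset.mem_filter, Finset.mem_image] at hs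
        obtain ⟨⟨⟨s', t⟩, h1, h2⟩, h3⟩ := hs
        simp only at h2
        subst h2
        have h4 := (Finsupp.mem_supported _ _).1 hz h1
        have h5 := pr_DD k (s := s') (z := z) (Finsupp.supported_mono (by
          intro p hp; simp at hp ⊢; omega) hzm)
        rw [hdz, map_zero] at h5
        have h6 : dd k (pr k s' z) = 0 := by
          have : (-1 : k) ^ s'.length • (-1 : k) ^ s'.length • dd k (pr k s' z) = 0 := by
            rw [← h5, smul_zero]
          rw [smul_smul, ← mul_pow] at this
          simpa using this
        have h7 := h4.2
        simp only at h7
        have := hr s' (hD _ _ _ _ (List.Sublist.refl _) (List.nil_sublist t) h4.1)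
          (n - s'.length) (by omega) _ (pr_mem k hz s') h6
        obtain ⟨y, hy1, hy2⟩ := this
        exact ⟨y, fun _ => ⟨by rw [h3] at hy1; exact hy1, hy2⟩⟩
      · exact ⟨0, fun h => (hs h).elim⟩
    choose y hy using key
    set F := (z.support.image Prod.fst).filter (fun s => s.length = m) with hF
    set Y := ∑ s ∈ F, (-1 : k) ^ m • ins k s (y s) with hY
    have hFm : ∀ s ∈ F, s.length = m ∧ m ≤ n := by
      intro s hs
      simp only [hF, Finset.mem_filter, Finset.mem_image] at hs
      obtain ⟨⟨⟨s', t⟩, h1, h2⟩, h3⟩ := hs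
      have h4 := ((Finsupp.mem_supported _ _).1 hz h1).2
      simp only at h2 h4
      subst h2
      exact ⟨h3, by omega⟩
    have hYD : Y ∈ TD k D (n + 1) := by
      refine Submodule.sum_mem _ fun s hs => Submodule.smul_mem _ _ ?_
      refine ins_mem k ?_ (hy s hs).1
      intro t ht
      have := hFm s hs
      exact ⟨ht.1, by have := ht.2; simp; omega⟩
    have hYm : Y ∈ Finsupp.supported k k {p : List V × List W | p.1.length ≤ m} := by
      refine Submodule.sum_mem _ fun s hs => Submodule.smul_mem _ _ ?_
      refine ins_mem k ?_ (hy s hs).1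
      intro t ht
      exact (hFm s hs).1.le
    have hDYm : DD k Y ∈ Finsupp.supported k k {p : List V × List W | p.1.length ≤ m} := by
      refine supp_le k (DD k) _ ?_ hYm
      rintro ⟨s, t⟩ hs
      simp only [Set.mem_ofPred_eq] at hs
      rw [DD_single, one_smul, bb_eq]
      refine Submodule.add_mem _ ?_ (Submodule.smul_mem _ _ ?_)
      · refine ins'_mem k ?_ (bd_mem_supported k s)
        rintro s' ⟨h3, h4⟩
        change s'.length ≤ m; omega
      · refine ins_mem k ?_ (bd_mem_supported k t)
        rintro s' ⟨h3, h4⟩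
        simpa using hs
    have hpr : ∀ s : List V, s.length = m → pr k s (z - DD k Y) = 0 := by
      intro s hs
      rw [map_sub, pr_DD k (s := s) (by rw [hs]; exact hYm), hY, map_sum]
      by_cases hsF : s ∈ F
      · rw [Finset.sum_eq_single_of_mem s hsF]
        · rw [map_smul, pr_ins_self, map_smul, (hy s hsF).2, smul_smul, hs, ← mul_pow]
          simp
        · intro b _ hb
          rw [map_smul, pr_ins_ne k hb.symm, smul_zero]
      · rw [Finset.sum_eq_zero]
        · have : pr k s z = 0 := by
            ext t
            rw [pr_apply]
            by_contra hne
            apply hsF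
            simp only [hF, Finset.mem_filter, Finset.mem_image]
            exact ⟨⟨(s, t), Finsupp.mem_support_iff.2 hne, rfl⟩, hs⟩
          simp [this]
        · intro b hb
          rw [map_smul, pr_ins_ne k, smul_zero]
          rintro rfl; exact hsF hb
    obtain ⟨y', hy'1, hy'2⟩ := ih (z - DD k Y) (Submodule.sub_mem _ hz (DD_mem k hD hYD)) (by
      have h1 : z - DD k Y ∈ Finsupp.supported k k {p : List V × List W | p.1.length ≤ m} :=
        Submodule.sub_mem _ (Finsupp.supported_mono (by intro p hp; simp at hp ⊢; omega) hzm) hDYm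
      rw [Finsupp.mem_supported] at h1 ⊢
      rintro ⟨s, t⟩ hst
      have h2 : s.length ≤ m := h1 hst
      have h3 : s.length ≠ m := by
        intro h
        have h4 := DFunLike.congr_fun (hpr s h) t
        rw [pr_apply] at h4
        exact (Finsupp.mem_support_iff.1 hst) h4
      simp only [Set.mem_ofPred_eq]; omega) (by rw [map_sub, hdz, DD_DD, sub_zero])
    exact ⟨y' + Y, Submodule.add_mem _ hy'1 hYD, by rw [map_add, hy'2]; abel⟩

open Classical in
lemma tot_reduce {D : List V → List W → Prop} (hD : Closed2 D) {c : ℕ}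
    (hc : ∀ t, D [] t → t ≠ [] → Acyc k (fun s => D s t) (c + 1 - t.length)) {n : ℕ} (hn : n < c)
    (z : List V →₀ k) (m : ℕ) :
    ∀ y ∈ TD k D (n + 1), y ∈ Finsupp.supported k k {p : List V × List W | p.2.length ≤ m} →
      DD k y = ins' k [] z → ∃ y' ∈ TD k D (n + 1),
        y' ∈ Finsupp.supported k k {p : List V × List W | p.2.length ≤ 0} ∧
        DD k y' = ins' k [] z := by
  induction m with
  | zero => intro y h1 h2 h3; exact ⟨y, h1, h2, h3⟩
  | succ m ih =>
    intro y hy hym hdy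
    have key : ∀ t : List W, ∃ u : List V →₀ k, t ∈ (y.support.image Prod.snd).filter
        (fun s => s.length = m + 1) → u ∈ Ch k (fun s => D s t) (n - m + 1) ∧ dd k u = pr' k t y := by
      intro t
      by_cases ht : t ∈ (y.support.image Prod.snd).filter (fun s => s.length = m + 1)
      · simp only [Finset.mem_filter, Finset.mem_image] at ht
        obtain ⟨⟨⟨s, t'⟩, h1, h2⟩, h3⟩ := ht
        simp only at h2
        subst h2
        have h4 := (Finsupp.mem_supported _ _).1 hy h1
        have hne : t' ≠ [] := by rintro rfl; simp at h3
        have h5 := pr'_DD k (t := t') (z := y) (by rw [h3]; exact hym)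
        rw [hdy, pr'_ins'_ne k hne] at h5
        have h7 := h4.2
        simp only at h7
        have := hc t' (hD _ _ _ _ (List.nil_sublist s) (List.Sublist.refl _) h4.1) hne
          (n + 1 - t'.length) (by omega) _ (pr'_mem k hy t') h5.symm
        obtain ⟨u, hu1, hu2⟩ := this
        refine ⟨u, fun _ => ⟨?_, hu2⟩⟩
        rw [h3] at hu1
        simpa using hu1
      · exact ⟨0, fun h => (ht h).elim⟩
    choose u hu using key
    set F := (y.support.image Prod.snd).filter (fun s => s.length = m + 1) with hF
    set U := ∑ t ∈ F, ins' k t (u t) with hU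
    have hFm : ∀ t ∈ F, t.length = m + 1 ∧ m ≤ n := by
      intro t ht
      simp only [hF, Finset.mem_filter, Finset.mem_image] at ht
      obtain ⟨⟨⟨s', t⟩, h1, h2⟩, h3⟩ := ht
      have h4 := ((Finsupp.mem_supported _ _).1 hy h1).2
      simp only at h2 h4
      subst h2
      exact ⟨h3, by omega⟩
    have hUD : U ∈ TD k D (n + 1 + 1) := by
      refine Submodule.sum_mem _ fun s hs => ?_
      refine ins'_mem k ?_ (hu s hs).1
      intro t ht
      have := hFm s hs
      exact ⟨ht.1, by have := ht.2; simp; omega⟩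
    have hUm : U ∈ Finsupp.supported k k {p : List V × List W | p.2.length ≤ m + 1} := by
      refine Submodule.sum_mem _ fun s hs => ?_
      refine ins'_mem k ?_ (hu s hs).1
      intro t ht
      exact (hFm s hs).1.le
    have hDUm : DD k U ∈ Finsupp.supported k k {p : List V × List W | p.2.length ≤ m + 1} := by
      refine supp_le k (DD k) _ ?_ hUm
      rintro ⟨s, t⟩ hs
      simp only [Set.mem_ofPred_eq] at hs
      rw [DD_single, one_smul, bb_eq]
      refine Submodule.add_mem _ ?_ (Submodule.smul_mem _ _ ?_)
      · refine ins'_mem k ?_ (bd_mem_supported k s)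
        rintro s' ⟨h3, h4⟩
        simpa using hs
      · refine ins_mem k ?_ (bd_mem_supported k t)
        rintro s' ⟨h3, h4⟩
        change s'.length ≤ m + 1; omega
    have hpr : ∀ t : List W, t.length = m + 1 → pr' k t (y - DD k U) = 0 := by
      intro s hs
      rw [map_sub, pr'_DD k (t := s) (by rw [hs]; exact hUm), hU, map_sum]
      by_cases hsF : s ∈ F
      · rw [Finset.sum_eq_single_of_mem s hsF]
        · rw [pr'_ins'_self, (hu s hsF).2, sub_self]
        · intro b _ hb
          rw [pr'_ins'_ne k hb.symm]
      · rw [Finset.sum_eq_zero]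
        · have : pr' k s y = 0 := by
            ext t
            rw [pr'_apply]
            by_contra hne
            apply hsF
            simp only [hF, Finset.mem_filter, Finset.mem_image]
            exact ⟨⟨(t, s), Finsupp.mem_support_iff.2 hne, rfl⟩, hs⟩
          simp [this]
        · intro b hb
          rw [pr'_ins'_ne k]
          rintro rfl; exact hsF hb
    refine ih (y - DD k U) (Submodule.sub_mem _ hy (DD_mem k hD hUD)) ?_
      (by rw [map_sub, hdy, DD_DD, sub_zero])
    have h1 : y - DD k U ∈ Finsupp.supported k k {p : List V × List W | p.2.length ≤ m + 1} :=
      Submodule.sub_mem _ hym hDUm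
    rw [Finsupp.mem_supported] at h1 ⊢
    rintro ⟨s, t⟩ hst
    have h2 : t.length ≤ m + 1 := h1 hst
    have h3 : t.length ≠ m + 1 := by
      intro h
      have h4 := DFunLike.congr_fun (hpr t h) s
      rw [pr'_apply] at h4
      exact (Finsupp.mem_support_iff.1 hst) h4
    simp only [Set.mem_ofPred_eq]; omega

/-- The comparison lemma for double complexes. -/
lemma lemmaN {D : List V → List W → Prop} (hD : Closed2 D) {c : ℕ}
    (hr : ∀ s, D s [] → Acyc k (D s) (c - s.length))
    (hc : ∀ t, D [] t → t ≠ [] → Acyc k (fun s => D s t) (c + 1 - t.length)) :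
    Acyc k (fun s => D s []) c := by
  intro n hn z hz hdz
  have h1 : ins' k ([] : List W) z ∈ TD k D n := by
    refine ins'_mem k ?_ hz
    rintro s ⟨h1, h2⟩
    exact ⟨h1, by simpa using h2⟩
  have h0 : ∀ z : List V →₀ k, DD k (ins' k ([] : List W) z) = ins' k [] (dd k z) := by
    intro z
    induction z using Finsupp.induction_linear with
    | zero => simp
    | add f g hf hg => simp only [map_add, hf, hg]
    | single l a => simp [bb_eq, bd_nil]
  obtain ⟨y, hy1, hy2⟩ := tot_exact k hD hr hn (n + 1) _ h1 (by
    refine Finsupp.supported_mono ?_ h1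
    rintro ⟨s, t⟩ ⟨_, h⟩
    simp at h ⊢; omega) (by rw [h0, hdz, map_zero])
  obtain ⟨y', h3, h4, h5⟩ := tot_reduce k hD hc hn z (n + 1) y hy1 (by
    refine Finsupp.supported_mono ?_ hy1
    rintro ⟨s, t⟩ ⟨_, h⟩
    simp at h ⊢; omega) hy2
  refine ⟨pr' k [] y', pr'_mem k h3 [], ?_⟩
  rw [← pr'_DD k (by simpa using h4), h5, pr'_ins'_self]

end LemmaN
end Cong

namespace Cong

section Graph
variable (k : Type*) [CommRing k] {V S : Type*}

/-- lists with at most one vertex of each color, with vertices in `U` -/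
def JU (col : V → S) (U : V → Prop) (l : List V) : Prop :=
  (∀ x ∈ l, U x) ∧ ∀ x ∈ l, ∀ y ∈ l, col x = col y → x = y

lemma acyc_zero {W : Type*} (K : List W → Prop) : Acyc k K 0 := fun p hp => (by omega)

lemma acyc_congr {W : Type*} {K K' : List W → Prop} {c : ℕ} (h : ∀ l, K l ↔ K' l)
    (hA : Acyc k K c) : Acyc k K' c := by
  have : K = K' := funext fun l => propext (h l)
  rwa [← this]

lemma exists_color_notMem (col : V → S) {m : ℕ} (y : Fin m → V)
    (hy : Function.Injective (fun i => col (y i))) (σ : List V) (h : σ.length < m) :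
    ∃ i, ∀ v ∈ σ, col v ≠ col (y i) := by
  classical
  by_contra! hc
  have h1 : (Finset.univ.image (fun i => col (y i))) ⊆ (σ.map col).toFinset := by
    intro s hs
    simp only [Finset.mem_image, Finset.mem_univ, true_and] at hs
    obtain ⟨i, rfl⟩ := hs
    obtain ⟨v, hv, he⟩ := hc i
    simp only [List.mem_toFinset, List.mem_map]
    exact ⟨v, hv, he⟩
  have h2 := Finset.card_le_card h1
  rw [Finset.card_image_of_injective _ hy, Finset.card_univ, Fintype.card_fin] at h2
  have h3 := List.toFinset_card_le (σ.map col)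
  rw [List.length_map] at h3
  omega

lemma acyc_JU (col : V → S) (U : V → Prop) {c m : ℕ} (hcm : c ≤ m) (y : Fin m → V)
    (hyU : ∀ i, U (y i)) (hy : Function.Injective (fun i => col (y i))) :
    Acyc k (JU col U) c := by
  have := lemmaN k (D := fun (σ : List V) (t : List (Fin m)) => JU col U σ ∧
    ∀ v ∈ σ, ∀ s ∈ t, (col v = col (y s) → v = y s)) (c := c) ?_ ?_ ?_
  · refine acyc_congr k ?_ this
    intro l; simp
  · rintro s t s' t' hs ht ⟨⟨h1, h2⟩, h3⟩
    exact ⟨⟨fun x hx => h1 x (hs.subset hx), fun x hx y hy => h2 x (hs.subset hx) y (hs.subset hy)⟩,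
      fun x hx y hy => h3 x (hs.subset hx) y (ht.subset hy)⟩
  · rintro σ ⟨h1, -⟩
    rcases le_or_gt c σ.length with h | h
    · rw [Nat.sub_eq_zero_of_le h]; exact acyc_zero k _
    obtain ⟨i, hi⟩ := exists_color_notMem col y hy σ (by omega)
    refine acyc_cone k i ?_ _
    rintro t ⟨h2, h3⟩
    refine ⟨h2, ?_⟩
    intro v hv s hs
    rcases List.mem_cons.1 hs with rfl | hs
    · intro h; exact (hi v hv h).elim
    · exact h3 v hv s hs
  · rintro t - ht
    obtain ⟨s, t', rfl⟩ := List.exists_cons_of_ne_nil ht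
    refine acyc_cone k (y s) ?_ _
    rintro σ ⟨⟨h1, h2⟩, h3⟩
    refine ⟨⟨?_, ?_⟩, ?_⟩
    · intro x hx
      rcases List.mem_cons.1 hx with rfl | hx
      exacts [hyU s, h1 x hx]
    · intro a ha b hb hab
      rcases List.mem_cons.1 ha with rfl | ha <;> rcases List.mem_cons.1 hb with rfl | hb
      · rfl
      · exact (h3 b hb s (by simp) hab.symm).symm
      · exact (h3 a ha s (by simp) hab)
      · exact h2 a ha b hb hab
    · intro v hv s' hs'
      rcases List.mem_cons.1 hv with rfl | hv
      · intro h; rw [hy h]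
      · exact h3 v hv s' hs'

def XF (adj : V → V → Prop) (F l : List V) : Prop :=
  (∀ x ∈ l, ∀ y ∈ l, adj x y) ∧ ∀ x ∈ l, ∀ y ∈ F, adj x y

lemma acyc_XF (col : V → S) (adj : V → V → Prop) (hrefl : ∀ x, adj x x)
    (hsymm : ∀ x y, adj x y → adj y x) (hcol : ∀ x y, adj x y → col x = col y → x = y)
    (Q m : ℕ) (hm : Q ≤ m)
    (hCN : ∀ F : List V, JU col (fun _ => True) F → F.length ≤ Q →
      ∃ y : Fin m → V, Function.Injective (fun i => col (y i)) ∧ ∀ i, ∀ x ∈ F, adj (y i) x)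
    (c : ℕ) : ∀ F : List V, JU col (fun _ => True) F → F.length + 2 * c ≤ Q →
      Acyc k (XF adj F) c := by
  induction c using Nat.strong_induction_on with
  | _ c ih =>
  intro F hF hFc
  have := lemmaN k (D := fun (σ τ : List V) => XF adj F σ ∧
    JU col (fun y => ∀ x ∈ F, adj y x) τ ∧ ∀ x ∈ σ, ∀ y ∈ τ, adj x y) (c := c) ?_ ?_ ?_
  · refine acyc_congr k ?_ this
    intro l; simp [JU]
  · rintro s t s' t' hs ht ⟨⟨h1, h2⟩, ⟨h3, h4⟩, h5⟩
    exact ⟨⟨fun x hx y hy => h1 x (hs.subset hx) y (hs.subset hy), fun x hx => h2 x (hs.subset hx)⟩,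
      ⟨fun x hx => h3 x (ht.subset hx), fun x hx y hy => h4 x (ht.subset hx) y (ht.subset hy)⟩,
      fun x hx y hy => h5 x (hs.subset hx) y (ht.subset hy)⟩
  · rintro σ ⟨h1, -⟩
    rcases le_or_gt c σ.length with h | h
    · rw [Nat.sub_eq_zero_of_le h]; exact acyc_zero k _
    obtain ⟨y, hy1, hy2⟩ := hCN (F ++ σ) ⟨fun _ _ => trivial, by
      intro a ha b hb hab
      rcases List.mem_append.1 ha with ha | ha <;> rcases List.mem_append.1 hb with hb | hb
      · exact hF.2 a ha b hb hab
      · exact (hcol _ _ (h1.2 b hb a ha) hab.symm).symm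
      · exact hcol _ _ (h1.2 a ha b hb) hab
      · exact hcol _ _ (h1.1 a ha b hb) hab⟩ (by simp; omega)
    refine acyc_congr k ?_ (acyc_JU k col (fun y => ∀ x ∈ F ++ σ, adj y x)
      (c := c - σ.length) (m := m) (by omega) y hy2 hy1)
    intro τ
    constructor
    · rintro ⟨h2, h3⟩
      exact ⟨h1, ⟨fun x hx y hy => h2 x hx y (List.mem_append_left _ hy), h3⟩,
        fun x hx y hy => hsymm _ _ (h2 y hy x (List.mem_append_right _ hx))⟩
    · rintro ⟨-, ⟨h2, h3⟩, h4⟩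
      refine ⟨fun x hx y hy => ?_, h3⟩
      rcases List.mem_append.1 hy with hy | hy
      · exact h2 x hx y hy
      · exact hsymm _ _ (h4 y hy x hx)
  · rintro τ ⟨-, h1, -⟩ hτ
    rcases τ with _ | ⟨y, _ | ⟨y', τ'⟩⟩
    · exact (hτ rfl).elim
    · refine acyc_cone k y ?_ _
      rintro σ ⟨⟨h2, h3⟩, h4, h5⟩
      refine ⟨⟨?_, ?_⟩, h4, ?_⟩
      · intro a ha b hb
        rcases List.mem_cons.1 ha with rfl | ha' <;> rcases List.mem_cons.1 hb with rfl | hb'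
        · exact hrefl _
        · exact hsymm _ _ (h5 b hb' a (by simp))
        · exact h5 a ha' b (by simp)
        · exact h2 a ha' b hb'
      · intro a ha
        rcases List.mem_cons.1 ha with rfl | ha
        · exact h1.1 a (by simp)
        · exact h3 a ha
      · intro a ha b hb
        rcases List.mem_cons.1 ha with rfl | ha
        · rw [List.mem_singleton.1 hb]; exact hrefl _
        · exact h5 a ha b hb
    · set τ := y :: y' :: τ' with hτe
      have hlen : 2 ≤ τ.length := by simp [hτe]
      rcases le_or_gt (c + 1) τ.length with h | h
      · rw [Nat.sub_eq_zero_of_le h]; exact acyc_zero k _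
      refine acyc_congr k ?_ (ih (c + 1 - τ.length) (by omega) (F ++ τ) ⟨fun _ _ => trivial, ?_⟩
        (by simp only [List.length_append]; omega))
      · intro σ
        constructor
        · rintro ⟨h2, h3⟩
          exact ⟨⟨h2, fun x hx y hy => h3 x hx y (List.mem_append_left _ hy)⟩, h1,
            fun x hx y hy => h3 x hx y (List.mem_append_right _ hy)⟩
        · rintro ⟨⟨h2, h3⟩, -, h4⟩
          refine ⟨h2, fun x hx y hy => ?_⟩
          rcases List.mem_append.1 hy with hy | hy
          exacts [h3 x hx y hy, h4 x hx y hy]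
      · intro a ha b hb hab
        rcases List.mem_append.1 ha with ha | ha <;> rcases List.mem_append.1 hb with hb | hb
        · exact hF.2 a ha b hb hab
        · exact (hcol _ _ (h1.1 b hb a ha) hab.symm).symm
        · exact hcol _ _ (h1.1 a ha b hb) hab
        · exact h1.2 a ha b hb hab

/-- Dowker duality step -/
lemma acyc_dowker {Γ : Type*} (col : V → S) (adj : V → V → Prop)
    (vert : Γ → S → V) (hcv : ∀ g s, col (vert g s) = s)
    (hadj : ∀ g s s', adj (vert g s) (vert g s')) (c : ℕ)
    (hX : Acyc k (XF adj []) c)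
    (htr : ∀ τ : List V, XF adj [] τ → τ.length ≤ c → ∃ g, ∀ x ∈ τ, vert g (col x) = x) :
    Acyc k (fun σ : List Γ => ∃ s, ∀ g ∈ σ, ∀ h ∈ σ, vert g s = vert h s) c := by
  have := lemmaN k (D := fun (σ : List Γ) (τ : List V) =>
    (∃ s, ∀ g ∈ σ, ∀ h ∈ σ, vert g s = vert h s) ∧
    XF adj [] τ ∧ ∀ g ∈ σ, ∀ x ∈ τ, vert g (col x) = x) (c := c) ?_ ?_ ?_
  · refine acyc_congr k ?_ this
    intro l; simp [XF]
  · rintro s t s' t' hs ht ⟨⟨a, h1⟩, ⟨h3, h4⟩, h5⟩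
    exact ⟨⟨a, fun x hx y hy => h1 x (hs.subset hx) y (hs.subset hy)⟩,
      ⟨fun x hx y hy => h3 x (ht.subset hx) y (ht.subset hy), fun x hx => h4 x (ht.subset hx)⟩,
      fun x hx y hy => h5 x (hs.subset hx) y (ht.subset hy)⟩
  · rintro σ ⟨⟨s, h1⟩, -⟩
    rcases σ with _ | ⟨g, σ⟩
    · refine acyc_congr k ?_ hX
      intro τ
      simp only [List.not_mem_nil, false_implies, implies_true, and_true]
      exact ⟨fun h => ⟨⟨s, trivial⟩, h⟩, fun h => h.2⟩
    · refine acyc_cone k (vert g s) ?_ _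
      rintro τ ⟨h2, h3, h4⟩
      refine ⟨h2, ⟨?_, by simp⟩, ?_⟩
      · intro a ha b hb
        rcases List.mem_cons.1 ha with rfl | ha <;> rcases List.mem_cons.1 hb with rfl | hb
        · exact hadj _ _ _
        · rw [← h4 g (by simp) b hb]; exact hadj _ _ _
        · rw [← h4 g (by simp) a ha]; exact hadj _ _ _
        · exact h3.1 a ha b hb
      · intro h hh a ha
        rcases List.mem_cons.1 ha with rfl | ha
        · rw [hcv]; exact h1 h hh g (by simp)
        · exact h4 h hh a ha
  · rintro τ ⟨-, h1, -⟩ hτ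
    rcases le_or_gt (c + 1) τ.length with h | h
    · rw [Nat.sub_eq_zero_of_le h]; exact acyc_zero k _
    obtain ⟨g, hg⟩ := htr τ h1 (by omega)
    obtain ⟨x, τ', rfl⟩ := List.exists_cons_of_ne_nil hτ
    refine acyc_cone k g ?_ _
    rintro σ ⟨-, h2, h3⟩
    have h4 : ∀ a ∈ g :: σ, ∀ y ∈ x :: τ', vert a (col y) = y := by
      intro a ha b hb
      rcases List.mem_cons.1 ha with rfl | ha
      exacts [hg b hb, h3 a ha b hb]
    exact ⟨⟨col x, fun a ha b hb => by rw [h4 a ha x (by simp), h4 b hb x (by simp)]⟩, h2, h4⟩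

end Graph
end Cong

namespace Cong

section Bar
variable (k : Type*) [CommRing k] {Γ : Type*} [Group Γ]

/-- translation of chains -/
noncomputable def tr (g : Γ) : (List Γ →₀ k) →ₗ[k] (List Γ →₀ k) :=
  Finsupp.lmapDomain k k (List.map (g * ·))

@[simp] lemma tr_single (g : Γ) (l : List Γ) (a : k) :
    tr k g (Finsupp.single l a) = Finsupp.single (l.map (g * ·)) a := by simp [tr]

/-- first-entry normalisation -/
noncomputable def tl : List Γ → (List Γ →₀ k)
  | [] => 0
  | g :: r => Finsupp.single (r.map (g⁻¹ * ·)) 1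

noncomputable def pi : (List Γ →₀ k) →ₗ[k] (List Γ →₀ k) :=
  Finsupp.linearCombination k (tl k)

@[simp] lemma pi_single (l : List Γ) (a : k) : pi k (Finsupp.single l a) = a • tl k l := by
  simp [pi]

/-- bar differential, in homogeneous coordinates -/
noncomputable def pd : (List Γ →₀ k) →ₗ[k] (List Γ →₀ k) := pi k ∘ₗ dd k ∘ₗ cone k 1

lemma pd_apply (z : List Γ →₀ k) : pd k z = pi k (dd k (cone k 1 z)) := rfl

lemma tr_cone (g x : Γ) (z : List Γ →₀ k) : tr k g (cone k x z) = cone k (g * x) (tr k g z) := by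
  induction z using Finsupp.induction_linear with
  | zero => simp
  | add f g hf hg => simp only [map_add, hf, hg]
  | single l a => simp

lemma tr_bd (g : Γ) (l : List Γ) : tr k g (bd k l) = bd k (l.map (g * ·)) := by
  induction l with
  | nil => simp [bd_nil]
  | cons x l ih => simp [bd_cons, tr_cone, ih]

lemma dd_tr (g : Γ) (z : List Γ →₀ k) : dd k (tr k g z) = tr k g (dd k z) := by
  induction z using Finsupp.induction_linear with
  | zero => simp
  | add f g hf hg => simp only [map_add, hf, hg]
  | single l a => simp [tr_bd]

lemma pi_tr (g : Γ) (z : List Γ →₀ k) : pi k (tr k g z) = pi k z := by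
  induction z using Finsupp.induction_linear with
  | zero => simp
  | add f g hf hg => simp only [map_add, hf, hg]
  | single l a =>
    rcases l with _ | ⟨x, r⟩
    · simp
    · simp [tl, Function.comp_def, mul_assoc]

lemma pi_cone (z : List Γ →₀ k) : pi k (cone k 1 z) = z := by
  induction z using Finsupp.induction_linear with
  | zero => simp
  | add f g hf hg => simp only [map_add, hf, hg]
  | single l a => simp [tl]

lemma single_cons_eq (x : Γ) (r : List Γ) :
    (Finsupp.single (x :: r) 1 : List Γ →₀ k) = tr k x (cone k 1 (tl k (x :: r))) := by
  simp [tl, Function.comp_def]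

/-- an equivariant operator, killing `[]`, can be evaluated on the normalised chain. -/
lemma pi_equiv (h : (List Γ →₀ k) →ₗ[k] (List Γ →₀ k)) (h0 : h (Finsupp.single [] 1) = 0)
    (he : ∀ g z, h (tr k g z) = tr k g (h z)) (z : List Γ →₀ k) :
    pi k (h z) = pi k (h (cone k 1 (pi k z))) := by
  induction z using Finsupp.induction_linear with
  | zero => simp
  | add f g hf hg => simp only [map_add, hf, hg]
  | single l a =>
    rw [← mul_one a, ← smul_eq_mul, ← Finsupp.smul_single]
    simp only [map_smul]
    congr 1
    rcases l with _ | ⟨x, r⟩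
    · simp [h0, tl]
    · conv_lhs => rw [single_cons_eq, he, pi_tr]
      simp

lemma pi_dd (z : List Γ →₀ k) : pi k (dd k z) = pd k (pi k z) :=
  pi_equiv k (dd k) (by simp [bd_nil]) (dd_tr k) z

lemma pd_pd (z : List Γ →₀ k) : pd k (pd k z) = 0 := by
  rw [pd_apply k z, ← pi_dd, dd_dd, map_zero]

/-- all entries lie in a common left coset -/
def UU {S : Type*} (H : S → Subgroup Γ) (σ : List Γ) : Prop :=
  ∃ s, ∀ g ∈ σ, ∀ h ∈ σ, g⁻¹ * h ∈ H s

/-- all entries lie in a common subgroup -/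
def CCp {S : Type*} (H : S → Subgroup Γ) (σ : List Γ) : Prop :=
  ∃ s, ∀ g ∈ σ, g ∈ H s

variable {S : Type*} (H : S → Subgroup Γ)

lemma UU_map (g : Γ) (σ : List Γ) : UU H (σ.map (g * ·)) ↔ UU H σ := by
  simp [UU, mul_assoc]

lemma UU_cons (σ : List Γ) (h : CCp H σ) : UU H (1 :: σ) := by
  obtain ⟨s, hs⟩ := h
  refine ⟨s, ?_⟩
  have : ∀ g ∈ 1 :: σ, g ∈ H s := by
    intro g hg
    rcases List.mem_cons.1 hg with rfl | hg
    exacts [one_mem _, hs g hg]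
  exact fun g hg h hh => mul_mem (inv_mem (this g hg)) (this h hh)

lemma pi_UU {z : List Γ →₀ k} (hz : z ∈ Finsupp.supported k k {l | UU H l}) :
    pi k z ∈ Finsupp.supported k k {l | CCp H l} := by
  refine supp_le k _ _ ?_ hz
  rintro l ⟨s, hs⟩
  rw [pi_single, one_smul]
  rcases l with _ | ⟨x, r⟩
  · exact Submodule.zero_mem _
  · refine Finsupp.single_mem_supported k _ ⟨s, ?_⟩
    intro g hg
    obtain ⟨y, hy, rfl⟩ := List.mem_map.1 hg
    exact hs x (by simp) y (by simp [hy])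

lemma closed_UU : Closed (UU H) := by
  rintro l l' hl ⟨s, hs⟩
  exact ⟨s, fun g hg h hh => hs g (hl.subset hg) h (hl.subset hh)⟩

lemma tr_mem_UU (g : Γ) {z : List Γ →₀ k} (hz : z ∈ Finsupp.supported k k {l | UU H l}) :
    tr k g z ∈ Finsupp.supported k k {l | UU H l} := by
  refine supp_le k _ _ ?_ hz
  intro l hl
  rw [tr_single]
  exact Finsupp.single_mem_supported k _ ((UU_map H g l).2 hl)

/-- chains of length `p` -/
abbrev Cl (p : ℕ) : Submodule k (List Γ →₀ k) := Ch k (fun _ => True) p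

lemma closed_true : Closed (fun _ : List Γ => True) := fun _ _ _ _ => trivial

lemma tr_mem_Cl (g : Γ) {p : ℕ} {z : List Γ →₀ k} (hz : z ∈ Cl k p) : tr k g z ∈ Cl k p := by
  refine supp_le k _ _ ?_ hz
  rintro l ⟨-, hl⟩
  rw [tr_single]
  exact single_mem_Ch k trivial (by simpa using hl) 1

lemma cone_mem_Cl (g : Γ) {p : ℕ} {z : List Γ →₀ k} (hz : z ∈ Cl k p) :
    cone k g z ∈ Cl k (p + 1) := by
  refine supp_le k _ _ ?_ hz
  rintro l ⟨-, hl⟩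
  rw [cone_single]
  exact single_mem_Ch k trivial (by simpa using hl) 1

lemma pi_mem_Cl {p : ℕ} {z : List Γ →₀ k} (hz : z ∈ Cl k (p + 1)) : pi k z ∈ Cl k p := by
  refine supp_le k _ _ ?_ hz
  rintro l ⟨-, hl⟩
  rw [pi_single, one_smul]
  rcases l with _ | ⟨x, r⟩
  · exact Submodule.zero_mem _
  · exact single_mem_Ch k trivial (by simpa using hl) 1

/-- partial contracting homotopy -/
structure Htpy (p : ℕ) (h : (List Γ →₀ k) →ₗ[k] (List Γ →₀ k)) : Prop where
  equiv : ∀ g z, h (tr k g z) = tr k g (h z)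
  zero : ∀ l, UU H l → h (Finsupp.single l 1) = 0
  len : ∀ l : List Γ, h (Finsupp.single l 1) ∈ Cl k (l.length + 1)
  htpy : ∀ l : List Γ, l.length ≤ p → Finsupp.single l 1 - dd k (h (Finsupp.single l 1))
    - h (bd k l) ∈ Finsupp.supported k k {l | UU H l}

lemma Htpy.len' {p : ℕ} {h} (hh : Htpy k H p h) {q : ℕ} {z : List Γ →₀ k} (hz : z ∈ Cl k q) :
    h z ∈ Cl k (q + 1) := by
  refine supp_le k _ _ ?_ hz
  rintro l ⟨-, rfl⟩
  exact hh.len l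

lemma Htpy.htpy' {p : ℕ} {h} (hh : Htpy k H p h) {q : ℕ} (hq : q ≤ p) {z : List Γ →₀ k}
    (hz : z ∈ Cl k q) : z - dd k (h z) - h (dd k z) ∈ Finsupp.supported k k {l | UU H l} := by
  have : (LinearMap.id - dd k ∘ₗ h - h ∘ₗ dd k : (List Γ →₀ k) →ₗ[k] (List Γ →₀ k)) z ∈
      Finsupp.supported k k {l | UU H l} := by
    refine supp_le k _ _ ?_ hz
    rintro l ⟨-, rfl⟩
    simpa using hh.htpy l hq
  simpa using this

open Classical in
lemma exists_htpy [Nonempty S] {c : ℕ} (hA : Acyc k (UU H) c) (p : ℕ) (hp : p ≤ c) :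
    ∃ h, Htpy k H p h := by
  induction p with
  | zero =>
    refine ⟨0, by simp, by simp, by simp, ?_⟩
    intro l hl
    have : l = [] := by simpa using hl
    subst this
    simp only [LinearMap.zero_apply, map_zero, sub_zero]
    exact Finsupp.single_mem_supported k _ ⟨Classical.arbitrary S, by simp⟩
  | succ p ih =>
    obtain ⟨h, hh⟩ := ih (by omega)
    have key : ∀ m : List Γ, ∃ η : List Γ →₀ k, m.length = p → η ∈ Cl k (p + 2) ∧
        Finsupp.single (1 :: m) 1 - dd k η - h (bd k (1 :: m)) ∈
          Finsupp.supported k k {l | UU H l} := by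
      intro m
      by_cases hm : m.length = p
      swap
      · exact ⟨0, fun h => (hm h).elim⟩
      set l := 1 :: m with hl
      have hll : l.length = p + 1 := by simp [hl, hm]
      have hlC : Finsupp.single l 1 ∈ Cl k (Γ := Γ) (p + 1) := single_mem_Ch k trivial hll 1
      have hbl : bd k l ∈ Cl k p := by
        have := dd_mem k closed_true hlC
        simpa using this
      set y0 := Finsupp.single l 1 - h (bd k l) with hy0
      have hy0C : y0 ∈ Cl k (p + 1) := Submodule.sub_mem _ hlC (hh.len' k H hbl)
      have h1 : dd k y0 ∈ Finsupp.supported k k {l | UU H l} := by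
        have := hh.htpy' k H le_rfl hbl
        rw [dd_bd, map_zero, sub_zero] at this
        simpa [hy0] using this
      have h2 : dd k y0 ∈ Ch k (UU H) p := by
        have h3 := dd_mem k closed_true hy0C
        rw [Ch, Finsupp.mem_supported] at h3 ⊢
        rw [Finsupp.mem_supported] at h1
        exact fun x hx => ⟨h1 hx, (h3 hx).2⟩
      obtain ⟨u, hu1, hu2⟩ := hA p (by omega) _ h2 (dd_dd k _)
      have hu3 : u ∈ Cl k (p + 1) :=
        Finsupp.supported_mono (s := {l : List Γ | UU H l ∧ l.length = p + 1})
          (t := {l : List Γ | True ∧ l.length = p + 1}) (fun x hx => ⟨trivial, hx.2⟩) hu1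
      refine ⟨cone k 1 (y0 - u), fun _ => ⟨cone_mem_Cl k 1 (Submodule.sub_mem _ hy0C hu3), ?_⟩⟩
      rw [dd_cone, map_sub (dd k), hu2, sub_self, map_zero, sub_zero]
      have : Finsupp.single l 1 - (y0 - u) - h (bd k l) = u := by rw [hy0]; abel
      rw [this]
      exact Finsupp.supported_mono (fun x hx => hx.1) hu1
    choose η hη using key
    let hf : List Γ → (List Γ →₀ k) := fun l => if l.length = p + 1 then
      (if UU H l then 0 else match l with
        | [] => 0
        | x :: m => tr k x (η (m.map (x⁻¹ * ·)))) else h (Finsupp.single l 1)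
    let h' : (List Γ →₀ k) →ₗ[k] (List Γ →₀ k) := Finsupp.linearCombination k hf
    have h's : ∀ l, h' (Finsupp.single l 1) = hf l := by intro l; simp [h']
    have h'ne : ∀ l : List Γ, l.length ≠ p + 1 →
        h' (Finsupp.single l 1) = h (Finsupp.single l 1) := by
      intro l hl; rw [h's]; simp only [hf, if_neg hl]
    have h'U : ∀ l : List Γ, UU H l → h' (Finsupp.single l 1) = 0 := by
      intro l hl
      by_cases hlp : l.length = p + 1
      · rw [h's]; simp only [hf, if_pos hlp, if_pos hl]
      · rw [h'ne l hlp, hh.zero l hl]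
    have h'c : ∀ x m, (x :: m : List Γ).length = p + 1 → ¬ UU H (x :: m) →
        h' (Finsupp.single (x :: m) 1) = tr k x (η (m.map (x⁻¹ * ·))) := by
      intro x m hl hU
      rw [h's]; simp only [hf, if_pos hl, if_neg hU]
    have heq : ∀ g z, h' (tr k g z) = tr k g (h' z) := by
      intro g z
      induction z using Finsupp.induction_linear with
      | zero => simp
      | add f g hf hg => simp only [map_add, hf, hg]
      | single l a =>
        rw [← mul_one a, ← smul_eq_mul, ← Finsupp.smul_single]
        simp only [map_smul]
        congr 1
        rw [tr_single]
        by_cases hlp : l.length = p + 1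
        swap
        · rw [h'ne l hlp, h'ne _ (by simpa using hlp), ← hh.equiv, tr_single]
        by_cases hU : UU H l
        · rw [h'U l hU, h'U _ ((UU_map H g l).2 hU), map_zero]
        rcases l with _ | ⟨x, m⟩
        · simp at hlp
        rw [h'c x m hlp hU, List.map_cons, h'c]
        · simp only [tr, Finsupp.lmapDomain_apply, List.map_map, ← Finsupp.mapDomain_comp]
          congr 1
          · ext l; simp [Function.comp_def, mul_assoc]
          · congr 1; simp [Function.comp_def, mul_assoc]
        · simpa using hlp
        · rw [← List.map_cons (f := (g * ·)), UU_map]; exact hU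
    refine ⟨h', heq, h'U, ?_, ?_⟩
    · intro l
      by_cases hlp : l.length = p + 1
      swap
      · rw [h'ne l hlp]; exact hh.len l
      by_cases hU : UU H l
      · rw [h'U l hU]; exact Submodule.zero_mem _
      rcases l with _ | ⟨x, m⟩
      · simp at hlp
      rw [h'c x m hlp hU, hlp]
      refine tr_mem_Cl k x (hη _ ?_).1
      simpa using hlp
    · intro l hl
      by_cases hU : UU H l
      · rw [h'U l hU, map_zero, sub_zero]
        refine Submodule.sub_mem _ (Finsupp.single_mem_supported k _ hU) ?_
        have : h' (bd k l) ∈ (⊥ : Submodule k (List Γ →₀ k)) := by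
          refine supp_le k _ _ ?_ (bd_mem_supported k l)
          rintro l' ⟨h1, -⟩
          rw [h'U l' (closed_UU H _ _ h1 hU)]; exact Submodule.zero_mem _
        rw [(Submodule.mem_bot k).1 this]
        exact Submodule.zero_mem _
      have hbd : h' (bd k l) = h (bd k l) := by
        have : (h' - h) (bd k l) ∈ (⊥ : Submodule k (List Γ →₀ k)) := by
          refine supp_le k _ _ ?_ (bd_mem_supported k l)
          rintro l' ⟨-, h1⟩
          rw [LinearMap.sub_apply, h'ne l' (by omega), sub_self]; exact Submodule.zero_mem _
        simpa [sub_eq_zero] using this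
      by_cases hlp : l.length = p + 1
      swap
      · rw [h'ne l hlp, hbd]; exact hh.htpy l (by omega)
      rcases l with _ | ⟨x, m⟩
      · simp at hlp
      rw [h'c x m hlp hU, hbd]
      have h3 := tr_mem_UU k H x (hη (m.map (x⁻¹ * ·)) (by simpa using hlp)).2
      rw [map_sub, map_sub, ← dd_tr, ← hh.equiv, tr_bd, tr_single] at h3
      simpa [Function.comp_def] using h3

/-- vanishing of relative group homology from acyclicity -/
lemma rel_vanish [Nonempty S] {c : ℕ} (hA : Acyc k (UU H) c) {j : ℕ} (hj : j + 1 ≤ c)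
    {z : List Γ →₀ k} (hz : z ∈ Cl k j)
    (hdz : pd k z ∈ Finsupp.supported k k {l | CCp H l}) :
    ∃ y ∈ Cl k (j + 1), z - pd k y ∈ Ch k (CCp H) j := by
  obtain ⟨h, hh⟩ := exists_htpy k H hA (j + 1) hj
  have hw := cone_mem_Cl k 1 hz
  have h1 := hh.htpy' k H le_rfl hw
  have h2 := pi_UU k H h1
  have h0 : h (Finsupp.single [] 1) = 0 := hh.zero [] ⟨Classical.arbitrary S, by simp⟩
  have h3 : pi k (h (dd k (cone k 1 z))) = 0 := by
    rw [pi_equiv k h h0 hh.equiv, ← pd_apply]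
    have : (pi k ∘ₗ h ∘ₗ cone k 1) (pd k z) ∈ (⊥ : Submodule k (List Γ →₀ k)) := by
      refine supp_le k _ _ ?_ hdz
      intro l hl
      simp [hh.zero _ (UU_cons H l hl)]
    simpa using this
  rw [map_sub, map_sub, h3, sub_zero, pi_cone, pi_dd] at h2
  have hy : pi k (h (cone k 1 z)) ∈ Cl k (j + 1) := pi_mem_Cl k (hh.len' k H hw)
  refine ⟨_, hy, ?_⟩
  have h4 : z - pd k (pi k (h (cone k 1 z))) ∈ Cl k j :=
    Submodule.sub_mem _ hz (pi_mem_Cl k (dd_mem k closed_true (cone_mem_Cl k 1 hy)))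
  rw [Cl, Ch, Finsupp.mem_supported] at h4
  rw [Ch, Finsupp.mem_supported]
  rw [Finsupp.mem_supported] at h2
  exact fun x hx => ⟨h2 hx, (h4 hx).2⟩

end Bar
end Cong

namespace Cong

section LemmaU
variable {R : Type*} [CommRing R] {ι : Type*} [Fintype ι]

/-- common kernel of a list of covectors -/
def Ann (Φ : List (ι → R)) : Submodule R (ι → R) where
  carrier := {x | ∀ φ ∈ Φ, φ ⬝ᵥ x = 0}
  add_mem' := by
    intro a b ha hb φ hφ
    rw [dotProduct_add, ha φ hφ, hb φ hφ, add_zero]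
  zero_mem' := by intro φ _; simp
  smul_mem' := by
    intro c x hx φ hφ
    rw [dotProduct_smul, hx φ hφ, smul_zero]

lemma mem_Ann {Φ : List (ι → R)} {x : ι → R} : x ∈ Ann Φ ↔ ∀ φ ∈ Φ, φ ⬝ᵥ x = 0 := Iff.rfl

lemma exists_min_elt [IsDedekindDomain R] (P : Ideal R) [hP : P.IsPrime]
    (𝔞 : Ideal R) (ha : 𝔞 ≠ ⊥) :
    ∃ y ∈ 𝔞, ∀ x ∈ 𝔞, ∃ c ∉ P, ∃ t, c * x = t * y := by
  have h1 : ¬ 𝔞 ≤ 𝔞 * P := by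
    intro h
    have h2 : 𝔞 * P = 𝔞 * 1 := by
      rw [mul_one]; exact le_antisymm Ideal.mul_le_left h
    have h3 := mul_left_cancel₀ ha h2
    exact hP.ne_top (by rw [h3, Ideal.one_eq_top])
  obtain ⟨y, hy, hyP⟩ := SetLike.not_le_iff_exists.1 h1
  refine ⟨y, hy, ?_⟩
  obtain ⟨𝔟, hb⟩ := Ideal.dvd_span_singleton.2 hy
  have h2 : ¬ 𝔟 ≤ P := by
    intro h
    apply hyP
    have : y ∈ 𝔞 * 𝔟 := by rw [← hb]; exact Ideal.mem_span_singleton_self y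
    exact Ideal.mul_mono_right h this
  obtain ⟨c, hc, hcP⟩ := SetLike.not_le_iff_exists.1 h2
  intro x hx
  refine ⟨c, hcP, ?_⟩
  have : c * x ∈ Ideal.span {y} := by
    rw [hb, mul_comm c x]; exact Ideal.mul_mem_mul hx hc
  obtain ⟨t, ht⟩ := Ideal.mem_span_singleton'.1 this
  exact ⟨t, ht.symm⟩

variable {F : Type*} [Field F] (f : R →+* F)

/-- reduction of a submodule -/
def Rd (W : Submodule R (ι → R)) : Submodule F (ι → F) :=
  Submodule.span F ((fun w => f ∘ w) '' (W : Set (ι → R)))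

lemma Rd_step [IsDedekindDomain R] (W : Submodule R (ι → R)) (φ : ι → R) :
    ∃ v : ι → F, Rd f W ≤ Rd f (W ⊓ Ann [φ]) ⊔ Submodule.span F {v} := by
  have hP : (RingHom.ker f).IsPrime := RingHom.ker_isPrime f
  by_cases h0 : W.map (dotProductBilin R R φ) = ⊥
  · refine ⟨0, ?_⟩
    have : W ⊓ Ann [φ] = W := by
      refine inf_eq_left.2 fun x hx => ?_
      rw [mem_Ann]
      intro ψ hψ
      rw [List.mem_singleton.1 hψ]
      have : φ ⬝ᵥ x ∈ W.map (dotProductBilin R R φ) := ⟨x, hx, rfl⟩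
      rw [h0] at this
      exact this
    rw [this]
    exact le_sup_left
  obtain ⟨y, ⟨w0, hw0, rfl⟩, hy⟩ := exists_min_elt (RingHom.ker f) _ h0
  refine ⟨f ∘ w0, ?_⟩
  rw [Rd, Submodule.span_le]
  rintro _ ⟨w, hw, rfl⟩
  obtain ⟨c, hc, t, hct⟩ := hy _ ⟨w, hw, rfl⟩
  have hc' : f c ≠ 0 := fun h => hc ((RingHom.mem_ker).2 h)
  have h1 : c • w - t • w0 ∈ W ⊓ Ann [φ] := by
    refine ⟨W.sub_mem (W.smul_mem _ hw) (W.smul_mem _ hw0), ?_⟩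
    rw [SetLike.mem_coe, mem_Ann]
    intro ψ hψ
    rw [List.mem_singleton.1 hψ, dotProduct_sub, dotProduct_smul, dotProduct_smul]
    exact sub_eq_zero.2 hct
  have h2 : f ∘ w = (f c)⁻¹ • (f ∘ (c • w - t • w0)) + ((f c)⁻¹ * f t) • (f ∘ w0) := by
    ext i
    simp only [Function.comp_apply, Pi.add_apply, Pi.smul_apply, Pi.sub_apply, smul_eq_mul,
      map_sub, map_mul]
    field_simp
    ring
  simp only [SetLike.mem_coe]
  rw [h2]
  refine Submodule.add_mem _ (Submodule.mem_sup_left ?_) (Submodule.mem_sup_right ?_)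
  · exact Submodule.smul_mem _ _ (Submodule.subset_span ⟨_, h1, rfl⟩)
  · exact Submodule.smul_mem _ _ (Submodule.mem_span_singleton_self _)

lemma Rd_rank [IsDedekindDomain R] [DecidableEq ι] (Φ : List (ι → R)) :
    Fintype.card ι ≤ Module.finrank F (Rd f (Ann Φ)) + Φ.length := by
  induction Φ with
  | nil =>
    have : Rd f (Ann ([] : List (ι → R))) = ⊤ := by
      rw [eq_top_iff]
      rintro x -
      rw [pi_eq_sum_univ' x]
      refine Submodule.sum_mem _ fun i _ => Submodule.smul_mem _ _ (Submodule.subset_span ?_)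
      refine ⟨Pi.single i 1, by intro φ hφ; simp at hφ, ?_⟩
      ext j
      by_cases h : i = j
      · subst h; simp
      · simp [h, eq_comm]
    rw [this, finrank_top]
    simp
  | cons φ Φ ih =>
    obtain ⟨v, hv⟩ := Rd_step f (Ann Φ) φ
    have h1 : Ann Φ ⊓ Ann [φ] = Ann (φ :: Φ) := by
      ext x
      simp [mem_Ann, and_comm]
    rw [h1] at hv
    have h2 := Submodule.finrank_mono hv
    have h3 := Submodule.finrank_add_le_finrank_add_finrank (Rd f (Ann (φ :: Φ)))
      (Submodule.span F {v})
    have h4 : Module.finrank F (Submodule.span F {v}) ≤ 1 := by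
      simpa using finrank_span_le_card (R := F) ({v} : Set (ι → F))
    simp only [List.length_cons]
    omega

lemma exists_not_orth [IsDedekindDomain R] [DecidableEq ι] (Φ Ψ : List (ι → R))
    (h : Φ.length + Ψ.length < Fintype.card ι) :
    ∃ x ∈ Ann Φ, ∃ β ∈ Ann Ψ, f (β ⬝ᵥ x) ≠ 0 := by
  by_contra! hc
  have h1 := Rd_rank f Φ
  have h2 := Rd_rank f Ψ
  have h3 : (Rd f (Ann Ψ)).map (dotProductEquiv F ι).toLinearMap ≤
      (Rd f (Ann Φ)).dualAnnihilator := by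
    rw [Submodule.map_le_iff_le_comap, Rd, Submodule.span_le]
    rintro _ ⟨β, hβ, rfl⟩
    simp only [SetLike.mem_coe, Submodule.mem_comap]
    rw [Submodule.mem_dualAnnihilator]
    intro w hw
    have : Rd f (Ann Φ) ≤ LinearMap.ker (dotProductEquiv F ι (f ∘ β)) := by
      rw [Rd, Submodule.span_le]
      rintro _ ⟨x, hx, rfl⟩
      simp only [SetLike.mem_coe, LinearMap.mem_ker, dotProductEquiv_apply_apply]
      rw [← RingHom.map_dotProduct]
      exact hc x hx β hβ
    exact this hw
  have h4 := Submodule.finrank_mono h3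
  have h5 : Module.finrank F ((Rd f (Ann Ψ)).map (dotProductEquiv F ι).toLinearMap) =
      Module.finrank F (Rd f (Ann Ψ)) := LinearEquiv.finrank_map_eq _ _
  have h6 := Subspace.finrank_add_finrank_dualAnnihilator_eq (Rd f (Ann Φ))
  rw [Module.finrank_fintype_fun_eq_card] at h6
  omega

open Classical in
lemma lemmaU [IsDedekindDomain R] [DecidableEq ι] (Φ Vs : List (ι → R))
    (h : Φ.length + Vs.length + 1 < Fintype.card ι) (ψ0 w0 : ι → R) (hw0 : w0 ∈ Ann Φ)
    (ha : ψ0 ⬝ᵥ w0 ≠ 0) (m : R) (hm : ∀ P : Ideal R, P.IsPrime → ψ0 ⬝ᵥ w0 ∈ P → m ∉ P) :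
    ∃ β ∈ Ann Vs, β ⬝ᵥ w0 = 0 ∧ ∃ x ∈ Ann Φ, (ψ0 + m • β) ⬝ᵥ x = 1 := by
  set a := ψ0 ⬝ᵥ w0 with hadef
  have hfin := Ideal.finite_factors (R := R) (I := Ideal.span {a})
    (by simpa using ha)
  set s := hfin.toFinset with hs
  have hmem : ∀ v : IsDedekindDomain.HeightOneSpectrum R, v ∈ s ↔ a ∈ v.asIdeal := by
    intro v
    rw [hs, Set.Finite.mem_toFinset, Set.mem_ofPred_eq, Ideal.dvd_span_singleton]
  have key : ∀ v : IsDedekindDomain.HeightOneSpectrum R, ∃ β ∈ Ann Vs, β ⬝ᵥ w0 = 0 ∧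
      (v ∈ s → ∃ x ∈ Ann Φ, (ψ0 + m • β) ⬝ᵥ x ∉ v.asIdeal) := by
    intro v
    by_cases hv : v ∈ s
    swap
    · exact ⟨0, Submodule.zero_mem _, by simp, fun h => (hv h).elim⟩
    by_cases hx : ∃ x ∈ Ann Φ, ψ0 ⬝ᵥ x ∉ v.asIdeal
    · obtain ⟨x, hx1, hx2⟩ := hx
      exact ⟨0, Submodule.zero_mem _, by simp, fun _ => ⟨x, hx1, by simpa using hx2⟩⟩
    push Not at hx
    have hmax : v.asIdeal.IsMaximal := v.isMaximal
    let _ := Ideal.Quotient.field v.asIdeal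
    obtain ⟨x, hx1, β, hβ, hne⟩ := exists_not_orth (Ideal.Quotient.mk v.asIdeal) Φ (w0 :: Vs)
      (by simp only [List.length_cons]; omega)
    rw [Ne, Ideal.Quotient.eq_zero_iff_mem] at hne
    refine ⟨β, fun y hy => ?_, ?_, fun _ => ⟨x, hx1, ?_⟩⟩
    · exact hβ y (by simp [hy])
    · rw [dotProduct_comm]; exact hβ w0 (by simp)
    · rw [add_dotProduct, smul_dotProduct, Ideal.add_mem_iff_right _ (hx x hx1)]
      intro hmul
      rcases v.isPrime.mem_or_mem hmul with h1 | h1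
      · exact hm _ v.isPrime ((hmem v).1 hv) h1
      · exact hne h1
  choose β hβ1 hβ2 hβ3 using key
  have hcrt : ∀ v : IsDedekindDomain.HeightOneSpectrum R, ∃ e : R, v ∈ s →
      e - 1 ∈ v.asIdeal ∧ ∀ v' ∈ s, v' ≠ v → e ∈ v'.asIdeal := by
    intro v
    obtain ⟨y, hy⟩ := IsDedekindDomain.exists_forall_sub_mem_ideal (s := s)
      (fun v : IsDedekindDomain.HeightOneSpectrum R => v.asIdeal) (fun _ => 1)
      (fun i _ => i.prime) (fun i _ j _ hij h => hij (IsDedekindDomain.HeightOneSpectrum.ext h))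
      (fun w => if w.1 = v then 1 else 0)
    refine ⟨y, fun hv => ⟨?_, fun v' hv' hne => ?_⟩⟩
    · simpa using hy v hv
    · simpa [hne] using hy v' hv'
  choose e he using hcrt
  refine ⟨∑ v ∈ s, e v • β v, Submodule.sum_mem _ fun v _ => Submodule.smul_mem _ _ (hβ1 v), ?_, ?_⟩
  · rw [sum_dotProduct]
    refine Finset.sum_eq_zero fun v _ => ?_
    rw [smul_dotProduct, hβ2 v, smul_zero]
  set B := ∑ v ∈ s, e v • β v with hB
  have hBw : B ⬝ᵥ w0 = 0 := by
    rw [hB, sum_dotProduct]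
    refine Finset.sum_eq_zero fun v _ => ?_
    rw [smul_dotProduct, hβ2 v, smul_zero]
  set 𝔍 : Ideal R := (Ann Φ).map (dotProductBilin R R (ψ0 + m • B)) with hJ
  have htop : 𝔍 = ⊤ := by
    by_contra hne
    obtain ⟨M, hM, hle⟩ := Ideal.exists_le_maximal 𝔍 hne
    have haM : a ∈ M := by
      apply hle
      refine ⟨w0, hw0, ?_⟩
      change (ψ0 + m • B) ⬝ᵥ w0 = a
      rw [add_dotProduct, smul_dotProduct, hBw, smul_zero, add_zero]
    have hMb : M ≠ ⊥ := by
      rintro rfl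
      exact ha (by simpa using haM)
    let v : IsDedekindDomain.HeightOneSpectrum R := ⟨M, hM.isPrime, hMb⟩
    have hv : v ∈ s := (hmem v).2 haM
    obtain ⟨x, hx1, hx2⟩ := hβ3 v hv
    have h1 : (ψ0 + m • B) ⬝ᵥ x ∈ v.asIdeal := hle ⟨x, hx1, rfl⟩
    apply hx2
    have h2 : B ⬝ᵥ x - β v ⬝ᵥ x ∈ v.asIdeal := by
      rw [hB, ← Finset.add_sum_erase s _ hv, add_dotProduct, smul_dotProduct, sum_dotProduct]
      have : e v • (β v ⬝ᵥ x) + ∑ i ∈ s.erase v, (e i • β i) ⬝ᵥ x - β v ⬝ᵥ x =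
        (e v - 1) * (β v ⬝ᵥ x) + ∑ i ∈ s.erase v, (e i • β i) ⬝ᵥ x := by
          rw [smul_eq_mul]; ring
      rw [this]
      refine Ideal.add_mem _ (Ideal.mul_mem_right _ _ (he v hv).1) (Ideal.sum_mem _ fun i hi => ?_)
      rw [smul_dotProduct]
      rw [Finset.mem_erase] at hi
      exact Ideal.mul_mem_right _ _ ((he i hi.2).2 v hv hi.1.symm)
    have h3 : (ψ0 + m • β v) ⬝ᵥ x = (ψ0 + m • B) ⬝ᵥ x - m * (B ⬝ᵥ x - β v ⬝ᵥ x) := by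
      simp only [add_dotProduct, smul_dotProduct, smul_eq_mul]; ring
    rw [h3]
    exact Ideal.sub_mem _ h1 (Ideal.mul_mem_left _ _ h2)
  have : (1 : R) ∈ 𝔍 := by rw [htop]; trivial
  obtain ⟨x, hx1, hx2⟩ := this
  exact ⟨x, hx1, hx2⟩

end LemmaU
end Cong

namespace Cong

section Vertices
variable {R : Type*} [CommRing R] {ι : Type*} [Fintype ι] [DecidableEq ι] (I : Ideal R)

/-- vertices of the complex of partial bases -/
@[ext] structure Vx (A : Finset ι) where
  s : ι
  hs : s ∈ A
  v : ι → R
  φ : ι → R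
  hv : Ideal.Quotient.mk I ∘ v = Pi.single s 1
  hφ : Ideal.Quotient.mk I ∘ φ = Pi.single s 1
  h1 : φ ⬝ᵥ v = 1

variable {I}

lemma exists_w0 (L : List (ι × (ι → R))) (hL : (L.map Prod.fst).Nodup)
    (hred : ∀ p ∈ L, Ideal.Quotient.mk I ∘ p.2 = Pi.single p.1 1) (t : ι) (ht : t ∉ L.map Prod.fst) :
    ∃ w : ι → R, Ideal.Quotient.mk I ∘ w = Pi.single t 1 ∧ ∀ p ∈ L, p.2 ⬝ᵥ w = 0 := by
  induction L generalizing t with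
  | nil =>
    refine ⟨Pi.single t 1, ?_, by simp⟩
    ext i
    by_cases h : i = t
    · subst h; simp
    · simp [h]
  | cons p L ih =>
    obtain ⟨s, φ⟩ := p
    simp only [List.map_cons, List.nodup_cons] at hL
    simp only [List.map_cons, List.mem_cons, not_or] at ht
    have hL2 := fun p hp => hred p (List.mem_cons_of_mem _ hp)
    obtain ⟨w1, h1, h2⟩ := ih hL.2 hL2 t ht.2
    obtain ⟨w2, h3, h4⟩ := ih hL.2 hL2 s hL.1
    have hφ : Ideal.Quotient.mk I ∘ φ = Pi.single s 1 := hred (s, φ) (by simp)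
    have hb : Ideal.Quotient.mk I (φ ⬝ᵥ w1) = 0 := by
      rw [RingHom.map_dotProduct, hφ, h1]
      simp [ht.1]
    have hd : Ideal.Quotient.mk I (φ ⬝ᵥ w2) = 1 := by
      rw [RingHom.map_dotProduct, hφ, h3]; simp
    refine ⟨(φ ⬝ᵥ w2) • w1 - (φ ⬝ᵥ w1) • w2, ?_, ?_⟩
    · ext i
      have := congrFun h1 i
      simp only [Function.comp_apply] at this
      simp [hb, hd, this]
    · intro p hp
      rcases List.mem_cons.1 hp with rfl | hp
      · simp only [dotProduct_sub, dotProduct_smul, smul_eq_mul]; ring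
      · simp only [dotProduct_sub, dotProduct_smul, h2 p hp, h4 p hp]; simp

lemma exists_nbr [IsDedekindDomain R] (hI : I ≠ ⊤) {A : Finset ι} (F : List (Vx I A))
    (hF : (F.map Vx.s).Nodup) (hc : 2 * F.length + 1 < Fintype.card ι) (t : ι) (htA : t ∈ A)
    (ht : t ∉ F.map Vx.s) :
    ∃ y : Vx I A, y.s = t ∧ ∀ x ∈ F, x.φ ⬝ᵥ y.v = 0 ∧ y.φ ⬝ᵥ x.v = 0 := by
  obtain ⟨w0, hw0, hw0'⟩ := exists_w0 (I := I) (F.map fun x => (x.s, x.φ))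
    (by simpa [Function.comp_def] using hF) (by
      intro p hp
      obtain ⟨x, -, rfl⟩ := List.mem_map.1 hp
      exact x.hφ) t (by simpa [Function.comp_def] using ht)
  obtain ⟨ψ0, hψ0, hψ0'⟩ := exists_w0 (I := I) (F.map fun x => (x.s, x.v))
    (by simpa [Function.comp_def] using hF) (by
      intro p hp
      obtain ⟨x, -, rfl⟩ := List.mem_map.1 hp
      exact x.hv) t (by simpa [Function.comp_def] using ht)
  have ha1 : Ideal.Quotient.mk I (ψ0 ⬝ᵥ w0) = 1 := by
    rw [RingHom.map_dotProduct, hψ0, hw0]; simp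
  set a := ψ0 ⬝ᵥ w0 with ha
  have hnt : Nontrivial (R ⧸ I) := Ideal.Quotient.nontrivial_iff.2 hI
  have ha0 : a ≠ 0 := by
    intro h
    rw [h, map_zero] at ha1
    exact zero_ne_one ha1
  obtain ⟨β, hβ1, hβ2, x, hx1, hx2⟩ := lemmaU (F.map Vx.φ) (F.map Vx.v) (by simp; omega) ψ0 w0
    (by
      intro φ hφ
      obtain ⟨x, hx, rfl⟩ := List.mem_map.1 hφ
      exact hw0' (x.s, x.φ) (List.mem_map.2 ⟨x, hx, rfl⟩)) ha0 (1 - a) (by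
      intro P hP h1 h2
      apply hP.ne_top
      rw [Ideal.eq_top_iff_one]
      have := P.add_mem h2 h1
      simpa [← ha] using this)
  have hm : Ideal.Quotient.mk I (1 - a) = 0 := by simp [ha1]
  refine ⟨⟨t, htA, w0 + (1 - a) • x, ψ0 + (1 - a) • β, ?_, ?_, ?_⟩, rfl, ?_⟩
  · ext i
    have := congrFun hw0 i
    simp only [Function.comp_apply] at this
    simp only [Function.comp_apply, Pi.add_apply, Pi.smul_apply, smul_eq_mul, map_add, map_mul, hm,
      this, zero_mul, add_zero]
  · ext i
    have := congrFun hψ0 i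
    simp only [Function.comp_apply] at this
    simp only [Function.comp_apply, Pi.add_apply, Pi.smul_apply, smul_eq_mul, map_add, map_mul, hm,
      this, zero_mul, add_zero]
  · rw [dotProduct_add, dotProduct_smul, hx2, add_dotProduct, smul_dotProduct, hβ2, ← ha]
    simp
  · intro y hy
    constructor
    · simp only
      rw [dotProduct_add, dotProduct_smul, hw0' (y.s, y.φ) (List.mem_map.2 ⟨y, hy, rfl⟩),
        hx1 y.φ (List.mem_map.2 ⟨y, hy, rfl⟩)]
      simp
    · simp only
      rw [dotProduct_comm, dotProduct_add, dotProduct_smul,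
        hψ0' (y.s, y.v) (List.mem_map.2 ⟨y, hy, rfl⟩),
        hβ1 y.v (List.mem_map.2 ⟨y, hy, rfl⟩)]
      simp

/-- adjacency -/
def vadj {A : Finset ι} (x y : Vx I A) : Prop :=
  x = y ∨ (x.s ≠ y.s ∧ x.φ ⬝ᵥ y.v = 0 ∧ y.φ ⬝ᵥ x.v = 0)

open Classical in
lemma vadj_CN [IsDedekindDomain R] (hI : I ≠ ⊤) {A : Finset ι} {Q m : ℕ}
    (hA : 2 * Q + m + 2 ≤ A.card) (F : List (Vx I A)) (hF : JU Vx.s (fun _ => True) F)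
    (hFQ : F.length ≤ Q) :
    ∃ y : Fin m → Vx I A, Function.Injective (fun i => (y i).s) ∧ ∀ i, ∀ x ∈ F, vadj (y i) x := by
  set F' := F.dedup with hF'
  have hlen : F'.length ≤ Q := (List.dedup_sublist F).length_le.trans hFQ
  have hAι : A.card ≤ Fintype.card ι := Finset.card_le_univ A
  have hnd : (F'.map Vx.s).Nodup := by
    refine List.Nodup.map_on ?_ (List.nodup_dedup F)
    intro x hx y hy h
    exact hF.2 x (List.mem_dedup.1 hx) y (List.mem_dedup.1 hy) h
  have hcard : m ≤ (A \ (F'.map Vx.s).toFinset).card := by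
    have h1 := Finset.le_card_sdiff (F'.map Vx.s).toFinset A
    have h2 := List.toFinset_card_le (F'.map Vx.s)
    rw [List.length_map] at h2
    omega
  have key : ∀ t ∈ A \ (F'.map Vx.s).toFinset, ∃ y : Vx I A, y.s = t ∧ ∀ x ∈ F', vadj y x := by
    intro t ht
    rw [Finset.mem_sdiff, List.mem_toFinset] at ht
    obtain ⟨y, hy1, hy2⟩ := exists_nbr hI F' hnd (by omega) t ht.1 ht.2
    refine ⟨y, hy1, fun x hx => Or.inr ⟨?_, (hy2 x hx).2, (hy2 x hx).1⟩⟩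
    rintro h
    exact ht.2 (List.mem_map.2 ⟨x, hx, by rw [← h, hy1]⟩)
  choose y hy1 hy2 using key
  obtain ⟨B, hB1, hB2⟩ := Finset.exists_subset_card_eq hcard
  let e := (Finset.equivFinOfCardEq hB2).symm
  refine ⟨fun i => y (e i).1 (hB1 (e i).2), ?_, ?_⟩
  · intro i j hij
    simp only [hy1] at hij
    exact e.injective (Subtype.ext hij)
  · intro i x hx
    exact hy2 _ _ x (List.mem_dedup.2 hx)

end Vertices

section Transitivity
open Matrix
variable {R : Type*} [CommRing R] {ι : Type*} [Fintype ι] [DecidableEq ι]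

/-- the elementary transvection `1 + u ⊗ ξ` -/
def trv (u ξ : ι → R) (h : ξ ⬝ᵥ u = 0) : GL ι R where
  val := 1 + Matrix.vecMulVec u ξ
  inv := 1 - Matrix.vecMulVec u ξ
  val_inv := by
    have : vecMulVec u ξ * vecMulVec u ξ = 0 := by
      rw [vecMulVec_mul_vecMulVec, h]; simp
    rw [add_mul, mul_sub, mul_sub, this]; simp
  inv_val := by
    have : vecMulVec u ξ * vecMulVec u ξ = 0 := by
      rw [vecMulVec_mul_vecMulVec, h]; simp
    rw [sub_mul, mul_add, mul_add, this]; simp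

lemma trv_mulVec (u ξ : ι → R) (h : ξ ⬝ᵥ u = 0) (x : ι → R) :
    (trv u ξ h).1 *ᵥ x = x + (ξ ⬝ᵥ x) • u := by
  change (1 + Matrix.vecMulVec u ξ) *ᵥ x = _
  rw [add_mulVec, one_mulVec, vecMulVec_mulVec]
  ext i; simp [mul_comm]

lemma vecMul_trv (u ξ : ι → R) (h : ξ ⬝ᵥ u = 0) (x : ι → R) :
    x ᵥ* (trv u ξ h).1 = x + (x ⬝ᵥ u) • ξ := by
  change x ᵥ* (1 + Matrix.vecMulVec u ξ) = _
  rw [vecMul_add, vecMul_one, vecMul_vecMulVec]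

/-- the congruence group -/
abbrev CG (I : Ideal R) : Subgroup (GL ι R) :=
  (Matrix.GeneralLinearGroup.map (Ideal.Quotient.mk I)).ker

lemma mem_CG {I : Ideal R} (g : GL ι R) :
    g ∈ CG (ι := ι) I ↔ ∀ i j, g.1 i j - (1 : Matrix ι ι R) i j ∈ I := by
  rw [MonoidHom.mem_ker, Matrix.GeneralLinearGroup.ext_iff]
  refine forall_congr' fun i => forall_congr' fun j => ?_
  rw [Matrix.GeneralLinearGroup.map_apply, ← Ideal.Quotient.eq_zero_iff_mem, map_sub, sub_eq_zero]
  have : (Ideal.Quotient.mk I) ((1 : Matrix ι ι R) i j) = ((1 : GL ι (R ⧸ I)).1 i j) := by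
    by_cases h : i = j
    · subst h; simp
    · simp [h]
  rw [this]

lemma trv_mem_left {I : Ideal R} (u ξ : ι → R) (h : ξ ⬝ᵥ u = 0) (hu : ∀ i, u i ∈ I) :
    trv u ξ h ∈ CG I := by
  rw [mem_CG]
  intro i j
  change (1 + vecMulVec u ξ) i j - _ ∈ I
  simp only [Matrix.add_apply, vecMulVec_apply, add_sub_cancel_left]
  exact I.mul_mem_right _ (hu i)

lemma trv_mem_right {I : Ideal R} (u ξ : ι → R) (h : ξ ⬝ᵥ u = 0) (hu : ∀ i, ξ i ∈ I) :
    trv u ξ h ∈ CG I := by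
  rw [mem_CG]
  intro i j
  change (1 + vecMulVec u ξ) i j - _ ∈ I
  simp only [Matrix.add_apply, vecMulVec_apply, add_sub_cancel_left]
  exact I.mul_mem_left _ (hu j)

lemma CG_mulVec {I : Ideal R} {g : GL ι R} (hg : g ∈ CG I) (v : ι → R) :
    Ideal.Quotient.mk I ∘ (g.1 *ᵥ v) = Ideal.Quotient.mk I ∘ v := by
  ext i
  simp only [Function.comp_apply, RingHom.map_mulVec]
  have : (Ideal.Quotient.mk I).mapMatrix g.1 = 1 := congrArg Units.val hg
  rw [RingHom.mapMatrix_apply] at this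
  rw [this, one_mulVec]; rfl

lemma CG_vecMul {I : Ideal R} {g : GL ι R} (hg : g ∈ CG I) (v : ι → R) :
    Ideal.Quotient.mk I ∘ (v ᵥ* g.1) = Ideal.Quotient.mk I ∘ v := by
  ext i
  simp only [Function.comp_apply, RingHom.map_vecMul]
  have : (Ideal.Quotient.mk I).mapMatrix g.1 = 1 := congrArg Units.val hg
  rw [RingHom.mapMatrix_apply] at this
  rw [this, vecMul_one]; rfl

/-- the standard basis vector -/
abbrev ee (s : ι) : ι → R := Pi.single s 1

lemma trans_one [IsDedekindDomain R] {I : Ideal R} (T : Finset ι) (s : ι) (hs : s ∉ T)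
    (hcard : 2 * T.card + 3 < Fintype.card ι) (v φ : ι → R) (hvT : ∀ t ∈ T, v t = 0)
    (hφT : ∀ t ∈ T, φ t = 0) (hv : Ideal.Quotient.mk I ∘ v = Pi.single s 1)
    (hφ : Ideal.Quotient.mk I ∘ φ = Pi.single s 1) (h1 : φ ⬝ᵥ v = 1) :
    ∃ g ∈ CG (ι := ι) I, (∀ t ∈ T, g.1 *ᵥ ee t = ee t ∧ ee t ᵥ* g.1 = ee t) ∧
      g.1 *ᵥ ee s = v ∧ φ ᵥ* g.1 = ee s := by
  -- a covector with a nonzero entry off `T ∪ {s}`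
  obtain ⟨ψ0, t0, ht0, hts, hψT, hψv, hψt⟩ : ∃ ψ0 : ι → R, ∃ t0, t0 ∉ T ∧ t0 ≠ s ∧
      (∀ t ∈ T, ψ0 t = 0) ∧ ψ0 ⬝ᵥ v = 1 ∧ ψ0 t0 ≠ 0 := by
    by_cases h : ∃ t0, t0 ∉ T ∧ t0 ≠ s ∧ φ t0 ≠ 0
    · obtain ⟨t0, h2, h3, h4⟩ := h
      exact ⟨φ, t0, h2, h3, hφT, h1, h4⟩
    · push Not at h
      have hφ0 : ∀ i, i ≠ s → φ i = 0 := by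
        intro i hi
        by_cases hiT : i ∈ T
        exacts [hφT i hiT, h i hiT hi]
      have hvs : v s ≠ 0 := by
        intro hvs
        have : φ ⬝ᵥ v = 0 := by
          rw [dotProduct]
          refine Finset.sum_eq_zero fun i _ => ?_
          by_cases hi : i = s
          · subst hi; rw [hvs, mul_zero]
          · rw [hφ0 i hi, zero_mul]
        rw [this] at h1
        exact zero_ne_one h1
      obtain ⟨t0, ht0⟩ : ∃ t0, t0 ∉ insert s T := by
        by_contra! hc
        have := Finset.card_le_card (fun x _ => hc x : (Finset.univ : Finset ι) ⊆ insert s T)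
        rw [Finset.card_univ] at this
        have h5 := Finset.card_insert_le s T
        omega
      rw [Finset.mem_insert, not_or] at ht0
      refine ⟨φ + v s • ee t0 - v t0 • ee s, t0, ht0.2, ht0.1, ?_, ?_, ?_⟩
      · intro t ht
        have h6 : t ≠ t0 := by rintro rfl; exact ht0.2 ht
        have h7 : t ≠ s := by rintro rfl; exact hs ht
        simp [hφT t ht, h6, h7]
      · simp only [sub_dotProduct, add_dotProduct, smul_dotProduct, h1, single_one_dotProduct,
          smul_eq_mul]
        ring
      · simp [hφ0 t0 ht0.1, ht0.1, hvs]
  have hAnn : ∀ (x : ι → R) (t : ι), ee t ⬝ᵥ x = x t := by intro x t; simp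
  obtain ⟨β, hβ1, hβ2, y', hy'1, hy'2⟩ := lemmaU
    ((insert s T).toList.map ee) (v :: T.toList.map ee) (by
      have := Finset.card_insert_le s T
      simp; omega) ψ0 (ee t0) (by
      intro φ hφ
      obtain ⟨t, ht, rfl⟩ := List.mem_map.1 hφ
      rw [Finset.mem_toList, Finset.mem_insert] at ht
      rw [hAnn]
      have : t ≠ t0 := by
        rintro rfl
        rcases ht with h | h
        exacts [hts h, ht0 h]
      simp [this]) (by simpa using hψt) 1 (by
      intro P hP _ h2
      exact hP.ne_top ((Ideal.eq_top_iff_one P).2 h2))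
  rw [one_smul] at hy'2
  set ξ := ψ0 + β with hξ
  have hξT : ∀ t ∈ T, ξ t = 0 := by
    intro t ht
    have : β t = 0 := by
      rw [← hAnn β t]; exact hβ1 _ (List.mem_cons_of_mem _ (List.mem_map.2 ⟨t, by simpa using ht, rfl⟩))
    rw [hξ, Pi.add_apply, hψT t ht, this, add_zero]
  have hξv : ξ ⬝ᵥ v = 1 := by
    rw [hξ, add_dotProduct, hψv, dotProduct_comm β, hβ1 v (by simp), add_zero]
  have hy's : y' s = 0 := by
    rw [← hAnn y' s]; exact hy'1 _ (List.mem_map.2 ⟨s, by simp, rfl⟩)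
  have hy'T : ∀ t ∈ T, y' t = 0 := by
    intro t ht
    rw [← hAnn y' t]; exact hy'1 _ (List.mem_map.2 ⟨t, by simp [ht], rfl⟩)
  have hvs : 1 - v s ∈ I := by
    rw [← Ideal.Quotient.eq_zero_iff_mem, map_sub, map_one]
    have := congrFun hv s
    simp only [Function.comp_apply, Pi.single_eq_same] at this
    rw [this, sub_self]
  have hvI : ∀ i, i ≠ s → v i ∈ I := by
    intro i hi
    rw [← Ideal.Quotient.eq_zero_iff_mem]
    have := congrFun hv i
    simpa [hi] using this
  set y : ι → R := (1 - v s) • ee s - ((1 - v s) * ξ s) • y' with hy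
  have hyI : ∀ i, y i ∈ I := by
    intro i
    rw [hy]
    simp only [Pi.sub_apply, Pi.smul_apply, smul_eq_mul]
    refine I.sub_mem (I.mul_mem_right _ hvs) (I.mul_mem_right _ (I.mul_mem_right _ hvs))
  have hyT : ∀ t ∈ T, y t = 0 := by
    intro t ht
    have h7 : t ≠ s := by rintro rfl; exact hs ht
    simp [hy, h7, hy'T t ht]
  have hξy : ξ ⬝ᵥ y = 0 := by
    rw [hy, dotProduct_sub, dotProduct_smul, dotProduct_smul, hy'2]
    simp
  have hys : y s = 1 - v s := by simp [hy, hy's]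
  set g1 := trv (-y) ξ (by rw [dotProduct_neg, hξy, neg_zero]) with hg1
  set g2 := trv (v + y - ee s) (ee s) (by
    rw [hAnn]; simp [hys]) with hg2
  have hg1m : g1 ∈ CG I := trv_mem_left _ _ _ fun i => I.neg_mem (hyI i)
  have hg2m : g2 ∈ CG I := trv_mem_left _ _ _ fun i => by
    by_cases hi : i = s
    · subst hi
      have : (v + y - ee i : ι → R) i = 0 := by simp [hys]
      rw [this]; exact I.zero_mem
    · simp only [Pi.sub_apply, Pi.add_apply, Pi.single_eq_of_ne hi, sub_zero]
      exact I.add_mem (hvI i hi) (hyI i)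
  have hg1v : ∀ x : ι → R, g1.1 *ᵥ x = x + (ξ ⬝ᵥ x) • (-y) := trv_mulVec _ _ _
  have hg1r : ∀ x : ι → R, x ᵥ* g1.1 = x + (x ⬝ᵥ (-y)) • ξ := vecMul_trv _ _ _
  have hg2v : ∀ x : ι → R, g2.1 *ᵥ x = x + (x s) • (v + y - ee s) := by
    intro x; rw [← hAnn x s]; exact trv_mulVec _ _ _ x
  have hg2r : ∀ x : ι → R, x ᵥ* g2.1 = x + (x ⬝ᵥ (v + y - ee s)) • ee s := vecMul_trv _ _ _
  clear_value g1 g2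
  have h12 : (g1 * g2).1 *ᵥ ee s = v := by
    rw [Units.val_mul, ← mulVec_mulVec, hg2v, hg1v]
    have : ee s + (ee s : ι → R) s • (v + y - ee s) = v + y := by simp
    rw [this, dotProduct_add, hξv, hξy]
    simp
  have h12T : ∀ t ∈ T, (g1 * g2).1 *ᵥ ee t = ee t ∧ ee t ᵥ* (g1 * g2).1 = ee t := by
    intro t ht
    have h7 : t ≠ s := by rintro rfl; exact hs ht
    constructor
    · rw [Units.val_mul, ← mulVec_mulVec, hg2v, hg1v]
      have : ee t + (ee t : ι → R) s • (v + y - ee s) = ee t := by simp [h7.symm]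
      rw [this]
      simp [hξT t ht]
    · rw [Units.val_mul, ← vecMul_vecMul, hg1r, hAnn, hg2r]
      have : ee t + (-y) t • ξ = ee t := by simp [hyT t ht]
      rw [this, hAnn]
      simp [h7, hvT t ht, hyT t ht]
  set φ' := φ ᵥ* (g1 * g2).1 with hφ'
  have hφ's : φ' s = 1 := by
    have : φ' s = φ' ⬝ᵥ ee s := by simp
    rw [this, hφ', ← dotProduct_mulVec, h12, h1]
  have hφ'T : ∀ t ∈ T, φ' t = 0 := by
    intro t ht
    have : φ' t = φ' ⬝ᵥ ee t := by simp
    rw [this, hφ', ← dotProduct_mulVec, (h12T t ht).1]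
    simp [hφT t ht]
  have hφ'I : ∀ i, (ee s - φ' : ι → R) i ∈ I := by
    intro i
    rw [← Ideal.Quotient.eq_zero_iff_mem, Pi.sub_apply, map_sub]
    have h8 := congrFun (CG_vecMul (mul_mem hg1m hg2m) φ) i
    have h9 := congrFun hφ i
    simp only [Function.comp_apply] at h8 h9
    rw [hφ', h8, h9]
    by_cases hi : i = s
    · subst hi; simp
    · simp [hi]
  set g3 := trv (ee s) (ee s - φ') (by
    rw [dotProduct_comm, hAnn]; simp [hφ's]) with hg3
  have hg3v : ∀ x : ι → R, g3.1 *ᵥ x = x + ((ee s - φ') ⬝ᵥ x) • ee s := trv_mulVec _ _ _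
  have hg3r : ∀ x : ι → R, x ᵥ* g3.1 = x + (x ⬝ᵥ ee s) • (ee s - φ') := vecMul_trv _ _ _
  refine ⟨g1 * g2 * g3, mul_mem (mul_mem hg1m hg2m) (trv_mem_right _ _ _ hφ'I), ?_, ?_, ?_⟩
  · intro t ht
    have h7 : t ≠ s := by rintro rfl; exact hs ht
    rw [Units.val_mul, ← mulVec_mulVec, ← vecMul_vecMul, (h12T t ht).2, hg3v, hg3r]
    have h8 : (ee s - φ') ⬝ᵥ ee t = 0 := by
      rw [dotProduct_comm, hAnn]; simp [h7, hφ'T t ht]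
    rw [h8, zero_smul, add_zero, hAnn]
    exact ⟨(h12T t ht).1, by simp [h7]⟩
  · rw [Units.val_mul, ← mulVec_mulVec, hg3v]
    have h8 : (ee s - φ') ⬝ᵥ ee s = 0 := by
      rw [dotProduct_comm, hAnn]; simp [hφ's]
    rw [h8, zero_smul, add_zero, h12]
  · rw [Units.val_mul, ← vecMul_vecMul, ← hφ', hg3r]
    have h8 : φ' ⬝ᵥ ee s = 1 := by rw [dotProduct_comm, hAnn, hφ's]
    rw [h8, one_smul]; abel

end Transitivity
end Cong

namespace Cong

section TransList
open Matrix
variable {R : Type*} [CommRing R] {ι : Type*} [Fintype ι] [DecidableEq ι]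

lemma trans_list [IsDedekindDomain R] {I : Ideal R} {A : Finset ι} (τ : List (Vx I A))
    (hτ : XF vadj [] τ) (hcard : 2 * τ.length + 3 < Fintype.card ι) :
    ∃ g ∈ CG (ι := ι) I, ∀ x ∈ τ, g.1 *ᵥ ee x.s = x.v ∧ x.φ ᵥ* g.1 = ee x.s := by
  classical
  induction τ with
  | nil => exact ⟨1, one_mem _, by simp⟩
  | cons x τ ih =>
    simp only [List.length_cons] at hcard
    obtain ⟨g', hg', h⟩ := ih ⟨fun a ha b hb => hτ.1 a (List.mem_cons_of_mem _ ha) b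
      (List.mem_cons_of_mem _ hb), by simp⟩ (by omega)
    by_cases hx : x ∈ τ
    · refine ⟨g', hg', fun y hy => ?_⟩
      rcases List.mem_cons.1 hy with rfl | hy
      exacts [h _ hx, h _ hy]
    have hadj : ∀ y ∈ τ, x.s ≠ y.s ∧ x.φ ⬝ᵥ y.v = 0 ∧ y.φ ⬝ᵥ x.v = 0 := by
      intro y hy
      rcases hτ.1 x (by simp) y (List.mem_cons_of_mem _ hy) with rfl | h
      exacts [(hx hy).elim, h]
    have hinv : (g'⁻¹ : GL ι R).1 * g'.1 = 1 := by rw [← Units.val_mul]; simp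
    have hinv' : g'.1 * (g'⁻¹ : GL ι R).1 = 1 := by rw [← Units.val_mul]; simp
    obtain ⟨g1, hg1, hT, hv, hφ⟩ := trans_one (I := I) (τ.map Vx.s).toFinset x.s (by
        rw [List.mem_toFinset, List.mem_map]
        rintro ⟨y, hy, hys⟩
        exact (hadj y hy).1 hys.symm) (by
        have := List.toFinset_card_le (τ.map Vx.s)
        rw [List.length_map] at this
        omega) ((g'⁻¹ : GL ι R).1 *ᵥ x.v) (x.φ ᵥ* g'.1) (by
        intro t ht
        rw [List.mem_toFinset, List.mem_map] at ht
        obtain ⟨y, hy, rfl⟩ := ht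
        have h1 : ee y.s ᵥ* (g'⁻¹ : GL ι R).1 = y.φ := by
          rw [← (h y hy).2, vecMul_vecMul, hinv', vecMul_one]
        have h2 : ((g'⁻¹ : GL ι R).1 *ᵥ x.v) y.s = ee y.s ⬝ᵥ ((g'⁻¹ : GL ι R).1 *ᵥ x.v) := by simp
        rw [h2, dotProduct_mulVec, h1, (hadj y hy).2.2]) (by
        intro t ht
        rw [List.mem_toFinset, List.mem_map] at ht
        obtain ⟨y, hy, rfl⟩ := ht
        have h2 : (x.φ ᵥ* g'.1) y.s = (x.φ ᵥ* g'.1) ⬝ᵥ ee y.s := by simp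
        rw [h2, ← dotProduct_mulVec, (h y hy).1, (hadj y hy).2.1]) (by
        rw [CG_mulVec (inv_mem hg'), x.hv]) (by
        rw [CG_vecMul hg', x.hφ]) (by
        rw [← dotProduct_mulVec, mulVec_mulVec, hinv', one_mulVec, x.h1])
    refine ⟨g' * g1, mul_mem hg' hg1, fun y hy => ?_⟩
    rw [Units.val_mul, ← mulVec_mulVec, ← vecMul_vecMul]
    rcases List.mem_cons.1 hy with rfl | hy
    · rw [hv, hφ, mulVec_mulVec, hinv', one_mulVec]
      exact ⟨rfl, rfl⟩
    · have := hT y.s (by rw [List.mem_toFinset]; exact List.mem_map.2 ⟨y, hy, rfl⟩)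
      rw [this.1, (h y hy).1, (h y hy).2, this.2]
      exact ⟨rfl, rfl⟩

/-- the subgroup fixing both the basis vector `e_s` and the coordinate `s` -/
def fixs (s : ι) : Subgroup (GL ι R) where
  carrier := {g | g.1 *ᵥ ee s = ee s ∧ ee s ᵥ* g.1 = ee s}
  one_mem' := ⟨one_mulVec _, vecMul_one _⟩
  mul_mem' := by
    rintro a b ⟨h1, h2⟩ ⟨h3, h4⟩
    refine ⟨?_, ?_⟩
    · rw [Units.val_mul, ← mulVec_mulVec, h3, h1]
    · rw [Units.val_mul, ← vecMul_vecMul, h2, h4]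
  inv_mem' := by
    rintro a ⟨h1, h2⟩
    have hinv : (a⁻¹ : GL ι R).1 * a.1 = 1 := by rw [← Units.val_mul]; simp
    have hinv' : a.1 * (a⁻¹ : GL ι R).1 = 1 := by rw [← Units.val_mul]; simp
    refine ⟨?_, ?_⟩
    · conv_lhs => rw [← h1]
      rw [mulVec_mulVec, hinv, one_mulVec]
    · conv_lhs => rw [← h2]
      rw [vecMul_vecMul, hinv', vecMul_one]

lemma mem_fixs (s : ι) (g : GL ι R) :
    g ∈ fixs s ↔ g.1 *ᵥ ee s = ee s ∧ ee s ᵥ* g.1 = ee s := Iff.rfl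

/-- the vertex of a group element -/
def vertx {I : Ideal R} {A : Finset ι} (g : ↥(CG (ι := ι) I)) (s : ↥A) : Vx I A where
  s := s.1
  hs := s.2
  v := g.1.1 *ᵥ ee s.1
  φ := ee s.1 ᵥ* (g⁻¹).1.1
  hv := by
    rw [CG_mulVec g.2]
    ext i
    by_cases h : i = s
    · subst h; simp
    · simp [h]
  hφ := by
    rw [CG_vecMul (g⁻¹).2]
    ext i
    by_cases h : i = s
    · subst h; simp
    · simp [h]
  h1 := by
    rw [← dotProduct_mulVec, mulVec_mulVec]
    have : (g⁻¹).1.1 * g.1.1 = 1 := by rw [← Units.val_mul]; simp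
    rw [this, one_mulVec]; simp

lemma acyc_matrix (k : Type*) [Field k] [IsDedekindDomain R] {I : Ideal R} (hI : I ≠ ⊤) (c : ℕ)
    {A : Finset ι} (hA : 6 * c + 4 ≤ A.card) :
    Acyc k (UU fun s : ↥A => (fixs s.1).subgroupOf (CG (ι := ι) I)) c := by
  have hAι : A.card ≤ Fintype.card ι := Finset.card_le_univ A
  have hX := acyc_XF k (Vx.s : Vx I A → ι) vadj (fun x => Or.inl rfl)
    (by
      rintro x y (h | ⟨h1, h2, h3⟩)
      exacts [Or.inl h.symm, Or.inr ⟨h1.symm, h3, h2⟩])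
    (by
      rintro x y (h | ⟨h1, h2, h3⟩) h'
      exacts [h, (h1 h').elim]) (2 * c) (2 * c) le_rfl
    (fun F hF hFQ => vadj_CN hI (by omega) F hF hFQ) c [] ⟨by simp, by simp⟩ (by simp)
  have hinv : ∀ g : ↥(CG (ι := ι) I), (g⁻¹).1.1 * g.1.1 = 1 := by
    intro g; rw [← Units.val_mul]; simp
  have hinv' : ∀ g : ↥(CG (ι := ι) I), g.1.1 * (g⁻¹).1.1 = 1 := by
    intro g; rw [← Units.val_mul]; simp
  have := acyc_dowker k (Γ := ↥(CG (ι := ι) I)) (fun x : Vx I A => (⟨x.s, x.hs⟩ : ↥A)) vadj vertx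
    (fun g s => rfl) (by
      intro g s s'
      by_cases h : s = s'
      · subst h; exact Or.inl rfl
      · have h' : s.1 ≠ s'.1 := fun h' => h (Subtype.ext h')
        refine Or.inr ⟨h', ?_, ?_⟩
        · simp only [vertx]
          rw [← dotProduct_mulVec, mulVec_mulVec, hinv, one_mulVec]; simp [h']
        · simp only [vertx]
          rw [← dotProduct_mulVec, mulVec_mulVec, hinv, one_mulVec]; simp [h'.symm]) c hX (by
      intro τ hτ hl
      obtain ⟨g, hg, h⟩ := trans_list τ hτ (by omega)
      refine ⟨⟨g, hg⟩, fun x hx => ?_⟩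
      obtain ⟨h1, h2⟩ := h x hx
      ext1
      · rfl
      · exact h1
      · simp only [vertx]
        rw [← h2, vecMul_vecMul, hinv' ⟨g, hg⟩, vecMul_one])
  refine acyc_congr k ?_ this
  intro σ
  refine exists_congr fun s => ?_
  have key : ∀ g h : ↥(CG (ι := ι) I), vertx g s = vertx h s ↔
      g⁻¹ * h ∈ (fixs s.1).subgroupOf (CG (ι := ι) I) := by
    intro g h
    rw [Subgroup.mem_subgroupOf, mem_fixs, Vx.ext_iff]
    simp only [vertx, true_and]
    have h3 : ((g⁻¹ * h : ↥(CG (ι := ι) I)) : GL ι R).1 = (g⁻¹).1.1 * h.1.1 := rfl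
    rw [h3, ← mulVec_mulVec, ← vecMul_vecMul]
    constructor
    · rintro ⟨h1, h2⟩
      rw [← h1, h2, mulVec_mulVec, vecMul_vecMul, hinv, hinv]
      exact ⟨one_mulVec _, vecMul_one _⟩
    · rintro ⟨h1, h2⟩
      constructor
      · conv_lhs => rw [← h1]
        rw [mulVec_mulVec, hinv', one_mulVec]
      · conv_rhs => rw [← h2]
        rw [vecMul_vecMul, hinv', vecMul_one]
  constructor
  · intro h g hg g' hg'
    exact (key g g').1 (h g hg g' hg')
  · intro h g hg g' hg'
    exact (key g g').2 (h g hg g' hg')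

lemma rel_matrix (k : Type*) [Field k] [IsDedekindDomain R] {I : Ideal R} (hI : I ≠ ⊤) (j : ℕ)
    {A : Finset ι} (hA : 6 * j + 10 ≤ A.card)
    {z : List ↥(CG (ι := ι) I) →₀ k} (hz : z ∈ Cl k j)
    (hdz : pd k z ∈ Finsupp.supported k k
      {l | CCp (fun s : ↥A => (fixs s.1).subgroupOf (CG (ι := ι) I)) l}) :
    ∃ y ∈ Cl k (j + 1), z - pd k y ∈
      Ch k (CCp (fun s : ↥A => (fixs s.1).subgroupOf (CG (ι := ι) I))) j := by
  have : Nonempty ↥A := by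
    have : A.Nonempty := by rw [← Finset.card_pos]; omega
    exact this.to_subtype
  exact rel_vanish k _ (acyc_matrix k hI (j + 1) (by omega)) le_rfl hz hdz

end TransList
end Cong

namespace Cong

section Subq
universe u
variable {k : Type*} [Field k] {M M' : Type u} [AddCommGroup M] [Module k M]
  [AddCommGroup M'] [Module k M']

abbrev Sq (Z B : Submodule k M) := ↥Z ⧸ B.submoduleOf Z

/-- dimension of a subquotient, in `ℕ∞` -/
noncomputable def sdim (Z B : Submodule k M) : ℕ∞ := Cardinal.toENat (Module.rank k (Sq Z B))

/-- the map of subquotients -/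
noncomputable def smap (f : M →ₗ[k] M') (Z B : Submodule k M) (Z' B' : Submodule k M')
    (hZ : ∀ z ∈ Z, f z ∈ Z') (hB : ∀ z ∈ Z, z ∈ B → f z ∈ B') : Sq Z B →ₗ[k] Sq Z' B' :=
  Submodule.mapQ _ _ (f.restrict hZ) (fun z hz => hB z.1 z.2 hz)

lemma smap_inj (f : M →ₗ[k] M') (Z B : Submodule k M) (Z' B' : Submodule k M')
    (hZ : ∀ z ∈ Z, f z ∈ Z') (hB : ∀ z ∈ Z, z ∈ B → f z ∈ B') (h : ∀ z ∈ Z, f z ∈ B' → z ∈ B) :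
    Function.Injective (smap f Z B Z' B' hZ hB) := by
  rw [injective_iff_map_eq_zero]
  intro x
  obtain ⟨z, rfl⟩ := Submodule.Quotient.mk_surjective _ x
  intro hx
  rw [Submodule.Quotient.mk_eq_zero]
  erw [Submodule.Quotient.mk_eq_zero] at hx
  exact h z.1 z.2 hx

lemma smap_surj (f : M →ₗ[k] M') (Z B : Submodule k M) (Z' B' : Submodule k M')
    (hZ : ∀ z ∈ Z, f z ∈ Z') (hB : ∀ z ∈ Z, z ∈ B → f z ∈ B')
    (h : ∀ z' ∈ Z', ∃ z ∈ Z, f z - z' ∈ B') :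
    Function.Surjective (smap f Z B Z' B' hZ hB) := by
  intro x
  obtain ⟨z', rfl⟩ := Submodule.Quotient.mk_surjective _ x
  obtain ⟨z, hz, hz'⟩ := h z'.1 z'.2
  refine ⟨Submodule.Quotient.mk ⟨z, hz⟩, ?_⟩
  exact (Submodule.Quotient.eq _).2 hz'

lemma sdim_eq (f : M →ₗ[k] M') (Z B : Submodule k M) (Z' B' : Submodule k M')
    (hZ : ∀ z ∈ Z, f z ∈ Z') (hB : ∀ z ∈ Z, f z ∈ B' ↔ z ∈ B)
    (h : ∀ z' ∈ Z', ∃ z ∈ Z, f z - z' ∈ B') : sdim Z B = sdim Z' B' := by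
  unfold sdim
  rw [LinearEquiv.rank_eq (LinearEquiv.ofBijective
    (smap f Z B Z' B' hZ (fun z hz => (hB z hz).2))
    ⟨smap_inj _ _ _ _ _ _ _ fun z hz => (hB z hz).1, smap_surj _ _ _ _ _ _ _ h⟩)]

lemma sdim_add (Z1 B1 Z2 B2 Z3 B3 : Submodule k M) (hZ12 : Z1 ≤ Z2) (hZ23 : Z2 ≤ Z3)
    (h0 : Z1 ≤ B3) (hB12 : B1 ≤ B2) (hB23 : B2 ≤ B3) (h1 : ∀ z ∈ Z1, z ∈ B2 → z ∈ B1)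
    (h2 : ∀ z ∈ Z2, z ∈ B3 → ∃ z1 ∈ Z1, z - z1 ∈ B2)
    (h3 : ∀ z ∈ Z3, ∃ z2 ∈ Z2, z - z2 ∈ B3) : sdim Z2 B2 = sdim Z1 B1 + sdim Z3 B3 := by
  set f := smap LinearMap.id Z1 B1 Z2 B2 (fun z hz => hZ12 hz) (fun z _ hz => hB12 hz)
  set g := smap LinearMap.id Z2 B2 Z3 B3 (fun z hz => hZ23 hz) (fun z _ hz => hB23 hz)
  have hf : Function.Injective f := smap_inj _ _ _ _ _ _ _ h1
  have hg : Function.Surjective g := smap_surj _ _ _ _ _ _ _ (by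
    intro z hz
    obtain ⟨z2, hz2, h⟩ := h3 z hz
    refine ⟨z2, hz2, ?_⟩
    rw [← neg_sub]; exact B3.neg_mem h)
  have hk : LinearMap.ker g = LinearMap.range f := by
    apply le_antisymm
    · intro x hx
      obtain ⟨z, rfl⟩ := Submodule.Quotient.mk_surjective _ x
      rw [LinearMap.mem_ker] at hx
      have hx' : z.1 ∈ B3 := (Submodule.Quotient.mk_eq_zero (B3.submoduleOf Z3)).1 hx
      obtain ⟨z1, hz1, h⟩ := h2 z.1 z.2 hx'
      refine ⟨Submodule.Quotient.mk ⟨z1, hz1⟩, ?_⟩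
      refine (Submodule.Quotient.eq _).2 ?_
      change z1 - z.1 ∈ B2
      rw [← neg_sub]; exact B2.neg_mem h
    · rintro _ ⟨x, rfl⟩
      obtain ⟨z, rfl⟩ := Submodule.Quotient.mk_surjective _ x
      rw [LinearMap.mem_ker]
      exact (Submodule.Quotient.mk_eq_zero (B3.submoduleOf Z3)).2 (h0 z.2)
  unfold sdim
  rw [← LinearMap.rank_range_add_rank_ker g, hk, rank_range_of_surjective g hg,
    ← (LinearEquiv.ofInjective f hf).rank_eq, map_add, add_comm]

end Subq
end Cong

namespace Cong

section SysDefs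
universe u
variable (k : Type*) [Field k] (M : Type u) [AddCommGroup M] [Module k M]

/-- sum of the chain groups of the colour-deleted sets -/
def CCs {k : Type*} [Field k] {M : Type u} [AddCommGroup M] [Module k M]
    (C : ℕ → Finset ℕ → Submodule k M) (j : ℕ) (A S : Finset ℕ) : Submodule k M :=
  A.sup fun a => C j (S.erase a)

/-- a system of chain complexes indexed by finite sets of naturals, with symmetries -/
structure Sys where
  C : ℕ → Finset ℕ → Submodule k M
  d : M →ₗ[k] M
  dd : ∀ z, d (d z) = 0
  dC : ∀ {j S z}, z ∈ C (j + 1) S → d z ∈ C j S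
  d0 : ∀ {S z}, z ∈ C 0 S → d z = 0
  mono : ∀ {j S S'}, S ⊆ S' → C j S ≤ C j S'
  dist : ∀ {j s A S z}, s ∉ A → z ∈ C j (S.erase s) → z ∈ CCs C j A S → z ∈ CCs C j A (S.erase s)
  ρ : Equiv.Perm ℕ → M ≃ₗ[k] M
  ρd : ∀ σ z, ρ σ (d z) = d (ρ σ z)
  ρC : ∀ {σ : Equiv.Perm ℕ} {j S T z}, (∀ x ∈ S, σ x ∈ T) → z ∈ C j S → ρ σ z ∈ C j T
  ρsymm : ∀ σ z, (ρ σ).symm z = ρ σ⁻¹ z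
  ρfix : ∀ {s u j S z}, s ∉ S → u ∉ S → z ∈ C j S → ρ (Equiv.swap s u) z = z

variable {k M}
namespace Sys
variable (X : Sys k M)

abbrev CC (j : ℕ) (A S : Finset ℕ) : Submodule k M := CCs X.C j A S

/-- relative cycles -/
def Cyc (j : ℕ) (A S : Finset ℕ) : Submodule k M := X.C j S ⊓ (X.CC (j - 1) A S).comap X.d

/-- relative boundaries -/
def Bd (j : ℕ) (A S : Finset ℕ) : Submodule k M := (X.C (j + 1) S).map X.d ⊔ X.CC j A S

variable {X} {j : ℕ} {A B S S' U : Finset ℕ} {s : ℕ}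

lemma mem_Cyc {z : M} : z ∈ X.Cyc j A S ↔ z ∈ X.C j S ∧ X.d z ∈ X.CC (j - 1) A S := Iff.rfl

lemma mem_Bd {z : M} : z ∈ X.Bd j A S ↔ ∃ y ∈ X.C (j + 1) S, ∃ p ∈ X.CC j A S, X.d y + p = z := by
  simp [Bd, Submodule.mem_sup]

lemma CC_insert : X.CC j (insert s A) S = X.C j (S.erase s) ⊔ X.CC j A S := by
  simp [CC, CCs, Finset.sup_insert]

lemma C_le_CC (h : s ∈ A) : X.C j (S.erase s) ≤ X.CC j A S :=
  Finset.le_sup (f := fun a => X.C j (S.erase a)) h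

lemma CC_le {T : Submodule k M} (h : ∀ a ∈ A, X.C j (S.erase a) ≤ T) : X.CC j A S ≤ T :=
  Finset.sup_le h

lemma CC_le_C : X.CC j A S ≤ X.C j S := CC_le fun a _ => X.mono (Finset.erase_subset a S)

lemma CC_mono (hA : A ⊆ B) (hS : S ⊆ S') : X.CC j A S ≤ X.CC j B S' :=
  CC_le fun _ ha => (X.mono (Finset.erase_subset_erase _ hS)).trans (C_le_CC (hA ha))

lemma dCC {z : M} (hz : z ∈ X.CC (j + 1) A S) : X.d z ∈ X.CC j A S := by
  have : X.CC (j + 1) A S ≤ (X.CC j A S).comap X.d :=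
    CC_le fun a ha z hz => C_le_CC ha (X.dC hz)
  exact this hz

lemma dC' {z : M} (hz : z ∈ X.C j S) : X.d z ∈ X.C (j - 1) S := by
  rcases j with _ | j
  · rw [X.d0 hz]; exact zero_mem _
  · exact X.dC hz

lemma dCC' {z : M} (hz : z ∈ X.CC j A S) : X.d z ∈ X.CC (j - 1) A S := by
  rcases j with _ | j
  · rw [X.d0 (CC_le_C hz)]; exact zero_mem _
  · exact dCC hz

lemma ρCC {σ : Equiv.Perm ℕ} {T : Finset ℕ} (hA : ∀ x ∈ A, σ x ∈ B) (hS : ∀ x ∈ S, σ x ∈ T) {z : M}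
    (hz : z ∈ X.CC j A S) : X.ρ σ z ∈ X.CC j B T := by
  have : X.CC j A S ≤ (X.CC j B T).comap (X.ρ σ).toLinearMap := by
    refine CC_le fun a ha z hz => C_le_CC (hA a ha) (X.ρC ?_ hz)
    intro x hx
    rw [Finset.mem_erase] at hx ⊢
    exact ⟨fun h => hx.1 (σ.injective h), hS x hx.2⟩
  exact this hz

lemma Cyc_mono (hA : A ⊆ B) (hS : S ⊆ S') : X.Cyc j A S ≤ X.Cyc j B S' :=
  fun _ hz => ⟨X.mono hS hz.1, CC_mono hA hS hz.2⟩

lemma Bd_mono (hA : A ⊆ B) (hS : S ⊆ S') : X.Bd j A S ≤ X.Bd j B S' :=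
  sup_le_sup (Submodule.map_mono (X.mono hS)) (CC_mono hA hS)

lemma Bd_le : X.Bd j A S ≤ X.Cyc j A S := by
  intro z hz
  obtain ⟨y, hy, p, hp, rfl⟩ := mem_Bd.1 hz
  refine ⟨add_mem (X.dC hy) (CC_le_C hp), ?_⟩
  rw [SetLike.mem_coe, Submodule.mem_comap, map_add, X.dd, zero_add]
  exact dCC' hp

lemma CC_le_Bd : X.CC j A S ≤ X.Bd j A S := le_sup_right

lemma Bd_d {y : M} (hy : y ∈ X.C (j + 1) S) : X.d y ∈ X.Bd j A S :=
  Submodule.mem_sup_left (Submodule.mem_map_of_mem hy)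

variable (X) in
def Inj (j : ℕ) (A S : Finset ℕ) (s : ℕ) : Prop :=
  ∀ z ∈ X.Cyc j A (S.erase s), z ∈ X.Bd j A S → z ∈ X.Bd j A (S.erase s)

variable (X) in
def Sur (j : ℕ) (A S : Finset ℕ) (s : ℕ) : Prop :=
  ∀ z ∈ X.Cyc j (insert s A) S, ∃ z' ∈ X.Cyc j A S, z - z' ∈ X.Bd j (insert s A) S

lemma Sur_zero : X.Sur 0 A S s := by
  intro z hz
  refine ⟨z, ⟨hz.1, ?_⟩, by simp⟩
  rw [SetLike.mem_coe, Submodule.mem_comap, X.d0 hz.1]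
  exact zero_mem _

lemma Sur_succ (hs : s ∉ A) (h : X.Inj j A S s) : X.Sur (j + 1) A S s := by
  intro z hz
  obtain ⟨hz1, hz2⟩ := mem_Cyc.1 hz
  rw [Nat.add_sub_cancel, CC_insert, Submodule.mem_sup] at hz2
  obtain ⟨x, hx, w, hw, hxw⟩ := hz2
  have hxd : X.d x = - X.d w := by
    have := X.dd z
    rw [← hxw, map_add] at this
    exact eq_neg_of_add_eq_zero_left this
  have hxC : x ∈ X.Cyc j A (S.erase s) := by
    refine ⟨hx, X.dist hs (dC' hx) ?_⟩
    rw [hxd]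
    exact neg_mem (dCC' hw)
  have hxB : x ∈ X.Bd j A S := by
    have : x = X.d z - w := by rw [← hxw]; abel
    rw [this]
    exact sub_mem (Bd_d hz1) (CC_le_Bd hw)
  obtain ⟨y, hy, p, hp, hyp⟩ := mem_Bd.1 (h x hxC hxB)
  refine ⟨z - y, ⟨sub_mem hz1 (X.mono (Finset.erase_subset _ _) hy), ?_⟩, ?_⟩
  · have : X.d (z - y) = w + p := by
      rw [map_sub, ← hxw, ← hyp]; abel
    rw [SetLike.mem_coe, Submodule.mem_comap, this]
    exact add_mem hw (CC_mono subset_rfl (Finset.erase_subset _ _) hp)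
  · rw [sub_sub_cancel]
    exact CC_le_Bd (C_le_CC (Finset.mem_insert_self _ _) hy)

/-- iterated surjectivity -/
lemma Sur_iter (U : Finset ℕ) (hd : Disjoint B U)
    (h : ∀ B' u, B ⊆ B' → B' ⊆ B ∪ U → u ∈ U → u ∉ B' → X.Sur j B' S u) :
    ∀ z ∈ X.Cyc j (B ∪ U) S, ∃ z' ∈ X.Cyc j B S, z - z' ∈ X.Bd j (B ∪ U) S := by
  induction U using Finset.induction_on with
  | empty =>
    intro z hz
    refine ⟨z, by simpa using hz, by simp⟩
  | insert u U hu ih =>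
    intro z hz
    rw [Finset.disjoint_insert_right] at hd
    have hsub : B ∪ U ⊆ B ∪ insert u U := Finset.union_subset_union subset_rfl (Finset.subset_insert _ _)
    have hE : B ∪ insert u U = insert u (B ∪ U) := by rw [Finset.union_insert]
    rw [hE] at hz
    obtain ⟨z1, hz1, h1⟩ := h (B ∪ U) u Finset.subset_union_left hsub (by simp)
      (by simp [hd.1, hu]) z hz
    obtain ⟨z', hz', h2⟩ := ih hd.2 (fun B' u' h1 h2 h3 h4 =>
      h B' u' h1 (h2.trans hsub) (Finset.mem_insert_of_mem h3) h4) z1 hz1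
    refine ⟨z', hz', ?_⟩
    rw [hE]
    have : z - z' = (z - z1) + (z1 - z') := by abel
    rw [this]
    exact add_mem h1 (Bd_mono (Finset.subset_insert _ _) subset_rfl h2)

/-- middle exactness -/
lemma mid (hs : s ∉ A) {z : M} (hz : z ∈ X.Cyc j A S) (hz' : z ∈ X.Bd j (insert s A) S) :
    ∃ q ∈ X.Cyc j A (S.erase s), z - q ∈ X.Bd j A S := by
  obtain ⟨y, hy, p', hp', h⟩ := mem_Bd.1 hz'
  rw [CC_insert, Submodule.mem_sup] at hp'
  obtain ⟨q, hq, p, hp, rfl⟩ := hp'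
  refine ⟨q, ⟨hq, X.dist hs (dC' hq) ?_⟩, ?_⟩
  · have : X.d q = X.d z - X.d p := by
      rw [← h, map_add, map_add, X.dd]; abel
    rw [this]
    exact sub_mem hz.2 (dCC' hp)
  · have : z - q = X.d y + p := by rw [← h]; abel
    rw [this]
    exact add_mem (Bd_d hy) (CC_le_Bd hp)

/-- generation -/
lemma gen (U : Finset ℕ) (hd : Disjoint B U)
    (h : ∀ B' u u', B ⊆ B' → B' ⊆ B ∪ U → u ∈ U → u' ∈ U → u ≠ u' → u ∉ B' → u' ∉ B' →
      X.Sur j B' (S.erase u) u') :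
    ∀ z ∈ X.Cyc j B S, z ∈ X.Bd j (B ∪ U) S →
      z ∈ (U.sup fun u => X.Cyc j B (S.erase u)) ⊔ X.Bd j B S := by
  induction U using Finset.induction_on with
  | empty =>
    intro z hz hz'
    simpa using hz'
  | insert u U hu ih =>
    intro z hz hz'
    rw [Finset.disjoint_insert_right] at hd
    have hsub : B ∪ U ⊆ B ∪ insert u U := Finset.union_subset_union subset_rfl (Finset.subset_insert _ _)
    have hE : B ∪ insert u U = insert u (B ∪ U) := by rw [Finset.union_insert]
    rw [hE] at hz'
    obtain ⟨q, hq, h1⟩ := mid (by simp [hd.1, hu])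
      (Cyc_mono Finset.subset_union_left subset_rfl hz) hz'
    obtain ⟨q', hq', h2⟩ := Sur_iter U hd.2 (fun B' u' h1 h2 h3 h4 =>
      h B' u u' h1 (h2.trans hsub) (by simp) (by simp [h3]) (by rintro rfl; exact hu h3)
        (by
          intro h5
          have := h2 h5
          simp [hd.1, hu] at this) h4) q hq
    have h3 := ih hd.2 (fun B' u u' h1 h2 h3 h4 h5 h6 h7 => h B' u u' h1 (h2.trans hsub)
      (by simp [h3]) (by simp [h4]) h5 h6 h7) (z - q')
      (sub_mem hz (Cyc_mono subset_rfl (Finset.erase_subset _ _) hq')) (by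
        have : z - q' = (z - q) + (q - q') := by abel
        rw [this]
        exact add_mem h1 (Bd_mono subset_rfl (Finset.erase_subset _ _) h2))
    rw [Finset.sup_insert, sup_assoc]
    rw [← sub_add_cancel z q']
    exact add_mem (Submodule.mem_sup_right h3) (Submodule.mem_sup_left hq')

variable (X) in
def Van (j n0 : ℕ) : Prop := ∀ A S : Finset ℕ, A ⊆ S → n0 ≤ A.card → X.Cyc j A S ≤ X.Bd j A S

lemma inj_of_gen (hs : s ∈ S) (hsA : s ∉ A) (U : Finset ℕ) (hUS : U ⊆ S)
    (hd : Disjoint (insert s A) U)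
    (h : ∀ y ∈ X.Cyc (j + 1) (insert s A) S,
      y ∈ (U.sup fun u => X.Cyc (j + 1) (insert s A) (S.erase u)) ⊔ X.Bd (j + 1) (insert s A) S) :
    X.Inj j A S s := by
  intro z hz hz'
  obtain ⟨y, hy, p, hp, hyp⟩ := mem_Bd.1 hz'
  have hyC : y ∈ X.Cyc (j + 1) (insert s A) S := by
    refine ⟨hy, ?_⟩
    have : X.d y = z - p := by rw [← hyp]; abel
    rw [SetLike.mem_coe, Submodule.mem_comap, this, Nat.add_sub_cancel, CC_insert]
    exact sub_mem (Submodule.mem_sup_left hz.1) (Submodule.mem_sup_right hp)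
  set T := X.Bd j A (S.erase s) ⊔ X.CC j A S with hT
  have key : (U.sup fun u => X.Cyc (j + 1) (insert s A) (S.erase u)) ⊔ X.Bd (j + 1) (insert s A) S ≤
      T.comap X.d := by
    refine sup_le (Finset.sup_le ?_) ?_
    · intro u hu y hy
      have hus : u ≠ s := by
        rintro rfl
        exact (Finset.disjoint_left.1 hd (Finset.mem_insert_self _ _)) hu
      have huA : u ∉ A := fun h => (Finset.disjoint_left.1 hd (Finset.mem_insert_of_mem h)) hu
      obtain ⟨hy1, hy2⟩ := mem_Cyc.1 hy
      rw [Nat.add_sub_cancel, CC_insert, Submodule.mem_sup] at hy2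
      obtain ⟨zu, hzu, pu, hpu, hy2⟩ := hy2
      rw [Submodule.mem_comap, ← hy2]
      refine add_mem (Submodule.mem_sup_left ?_) (Submodule.mem_sup_right
        (CC_mono subset_rfl (Finset.erase_subset _ _) hpu))
      have hfix := X.ρfix (s := s) (u := u) (by simp) (by simp) hzu
      rw [← hfix]
      have : zu = X.d y - pu := by rw [← hy2]; abel
      rw [this, map_sub, X.ρd]
      have hsw : ∀ x ∈ S.erase u, Equiv.swap s u x ∈ S.erase s := by
        intro x hx
        rw [Finset.mem_erase] at hx ⊢
        by_cases hxs : x = s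
        · subst hxs
          rw [Equiv.swap_apply_left]
          exact ⟨hus, hUS hu⟩
        · rw [Equiv.swap_apply_of_ne_of_ne hxs hx.1]
          exact ⟨hxs, hx.2⟩
      refine sub_mem (Bd_d (X.ρC hsw hy1)) (CC_le_Bd (ρCC ?_ hsw hpu))
      intro x hx
      rw [Equiv.swap_apply_of_ne_of_ne]
      · exact hx
      · rintro rfl; exact hsA hx
      · rintro rfl; exact huA hx
    · intro w hw
      obtain ⟨y', hy', c, hc, rfl⟩ := mem_Bd.1 hw
      rw [Submodule.mem_comap, map_add, X.dd, zero_add]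
      rw [CC_insert, Submodule.mem_sup] at hc
      obtain ⟨c1, hc1, c2, hc2, rfl⟩ := hc
      rw [map_add]
      exact add_mem (Submodule.mem_sup_left (Bd_d hc1)) (Submodule.mem_sup_right (dCC hc2))
  have hdy : X.d y ∈ T := key (h y hyC)
  have hzT : z ∈ T := by
    rw [← hyp]
    exact add_mem hdy (Submodule.mem_sup_right hp)
  obtain ⟨b, hb, q, hq, hbq⟩ := Submodule.mem_sup.1 hzT
  rw [← hbq]
  refine add_mem hb (CC_le_Bd (X.dist hsA ?_ hq))
  have : q = z - b := by rw [← hbq]; abel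
  rw [this]
  exact sub_mem hz.1 (Bd_le hb).1

lemma inj_all {n0 : ℕ} (hV : X.Van (j + 1) n0) (t : ℕ) :
    ∀ (A S : Finset ℕ) (s : ℕ), A ⊆ S → s ∈ S → s ∉ A → n0 ≤ A.card + 1 + t → n0 + t ≤ S.card →
      X.Inj j A S s := by
  induction t with
  | zero =>
    intro A S s hAS hs hsA h1 h2
    refine inj_of_gen hs hsA ∅ (by simp) (by simp) ?_
    intro y hy
    refine Submodule.mem_sup_right (hV _ _ (Finset.insert_subset hs hAS) ?_ hy)
    rw [Finset.card_insert_of_notMem hsA]; omega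
  | succ t ih =>
    intro A S s hAS hs hsA h1 h2
    have hBS := Finset.insert_subset hs hAS
    have hd : Disjoint (insert s A) (S \ insert s A) := Finset.disjoint_sdiff
    refine inj_of_gen hs hsA (S \ insert s A) Finset.sdiff_subset hd ?_
    intro y hy
    refine gen _ hd ?_ y hy ?_
    · intro B' u u' hB1 hB2 hu hu' huu' huB huB'
      rw [Finset.union_sdiff_of_subset hBS] at hB2
      have huS := (Finset.mem_sdiff.1 hu).1
      have huS' := (Finset.mem_sdiff.1 hu').1
      refine Sur_succ huB' (ih B' (S.erase u) u' ?_ ?_ huB' ?_ ?_)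
      · intro x hx
        rw [Finset.mem_erase]
        exact ⟨by rintro rfl; exact huB hx, hB2 hx⟩
      · rw [Finset.mem_erase]; exact ⟨huu'.symm, huS'⟩
      · have := Finset.card_le_card hB1
        rw [Finset.card_insert_of_notMem hsA] at this
        omega
      · rw [Finset.card_erase_of_mem huS]; omega
    · rw [Finset.union_sdiff_of_subset hBS]
      exact hV S S subset_rfl (by omega) (Cyc_mono hBS subset_rfl hy)

/-- the dimension of the relative homology -/
noncomputable def dim (X : Sys k M) (j a n : ℕ) : ℕ∞ :=
  sdim (X.Cyc j (Finset.range a) (Finset.range n)) (X.Bd j (Finset.range a) (Finset.range n))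

lemma ρCyc {σ : Equiv.Perm ℕ} {T : Finset ℕ} (hA : ∀ x ∈ A, σ x ∈ B) (hS : ∀ x ∈ S, σ x ∈ T) {z : M}
    (hz : z ∈ X.Cyc j A S) : X.ρ σ z ∈ X.Cyc j B T := by
  refine ⟨X.ρC hS hz.1, ?_⟩
  rw [SetLike.mem_coe, Submodule.mem_comap, ← X.ρd]
  exact ρCC hA hS hz.2

lemma ρBd {σ : Equiv.Perm ℕ} {T : Finset ℕ} (hA : ∀ x ∈ A, σ x ∈ B) (hS : ∀ x ∈ S, σ x ∈ T) {z : M}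
    (hz : z ∈ X.Bd j A S) : X.ρ σ z ∈ X.Bd j B T := by
  obtain ⟨y, hy, p, hp, rfl⟩ := mem_Bd.1 hz
  rw [map_add, X.ρd]
  exact add_mem (Bd_d (X.ρC hS hy)) (CC_le_Bd (ρCC hA hS hp))

lemma sdim_perm (σ : Equiv.Perm ℕ) {T : Finset ℕ} (hA : ∀ x ∈ A, σ x ∈ B)
    (hS : ∀ x ∈ S, σ x ∈ T) (hB : ∀ x ∈ B, σ⁻¹ x ∈ A) (hT : ∀ x ∈ T, σ⁻¹ x ∈ S) :
    sdim (X.Cyc j A S) (X.Bd j A S) = sdim (X.Cyc j B T) (X.Bd j B T) := by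
  have hinv : ∀ z, X.ρ σ⁻¹ (X.ρ σ z) = z := fun z => by rw [← X.ρsymm]; simp
  have hinv' : ∀ z, X.ρ σ (X.ρ σ⁻¹ z) = z := fun z => by rw [← X.ρsymm]; simp
  refine sdim_eq (X.ρ σ).toLinearMap _ _ _ _ (fun z hz => ρCyc hA hS hz) ?_ ?_
  · intro z hz
    refine ⟨fun h => ?_, fun h => ρBd hA hS h⟩
    have := ρBd hB hT h
    rwa [LinearEquiv.coe_coe, hinv] at this
  · intro z hz
    refine ⟨X.ρ σ⁻¹ z, ρCyc hB hT hz, ?_⟩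
    rw [LinearEquiv.coe_coe, hinv', sub_self]
    exact zero_mem _

lemma dim_add {j N a n : ℕ} (han : a ≤ n) (hN : N ≤ n + 1)
    (hI : ∀ (A S : Finset ℕ) (s : ℕ), A ⊆ S → s ∈ S → s ∉ A → N ≤ S.card → X.Inj j A S s)
    (hS : ∀ (A S : Finset ℕ) (s : ℕ), A ⊆ S → s ∈ S → s ∉ A → N ≤ S.card → X.Sur j A S s) :
    X.dim j a (n + 1) = X.dim j a n + X.dim j (a + 1) (n + 1) := by
  have hE : Finset.range n = (Finset.range (n + 1)).erase n := by
    ext x; simp only [Finset.mem_range, Finset.mem_erase]; omega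
  have hna : n ∉ Finset.range a := by simp [han]
  have hsub : Finset.range a ⊆ Finset.range (n + 1) := by
    intro x; simp only [Finset.mem_range]; omega
  have h3 : X.dim j (a + 1) (n + 1) = sdim (X.Cyc j (insert n (Finset.range a)) (Finset.range (n + 1)))
      (X.Bd j (insert n (Finset.range a)) (Finset.range (n + 1))) := by
    have hsw : ∀ x, Equiv.swap a n x = if x = a then n else if x = n then a else x :=
      fun x => Equiv.swap_apply_def a n x
    refine sdim_perm (Equiv.swap a n) ?_ ?_ ?_ ?_ <;> intro x hx <;>
      simp only [Equiv.swap_inv, Finset.mem_range, Finset.mem_insert] at hx ⊢ <;>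
      rw [hsw] <;> split_ifs <;> omega
  rw [h3]
  unfold dim
  rw [hE]
  refine sdim_add _ _ _ _ _ _ ?_ ?_ ?_ ?_ ?_ ?_ ?_ ?_
  · exact Cyc_mono subset_rfl (Finset.erase_subset _ _)
  · exact Cyc_mono (Finset.subset_insert _ _) subset_rfl
  · exact fun z hz => CC_le_Bd (C_le_CC (Finset.mem_insert_self _ _) hz.1)
  · exact Bd_mono subset_rfl (Finset.erase_subset _ _)
  · exact Bd_mono (Finset.subset_insert _ _) subset_rfl
  · exact hI _ _ _ hsub (by simp) hna (by simpa using hN)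
  · exact fun z hz hz' => mid hna hz hz'
  · exact hS _ _ _ hsub (by simp) hna (by simpa using hN)

lemma dim_zero {j n0 a n : ℕ} (hV : X.Van j n0) (han : a ≤ n) (ha : n0 ≤ a) : X.dim j a n = 0 := by
  have h := hV (Finset.range a) (Finset.range n) (by intro x; simp only [Finset.mem_range]; omega)
    (by simpa using ha)
  have : Subsingleton (Sq (X.Cyc j (Finset.range a) (Finset.range n))
      (X.Bd j (Finset.range a) (Finset.range n))) := by
    rw [Submodule.Quotient.subsingleton_iff]
    rw [eq_top_iff]
    intro z _
    exact h z.2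
  unfold dim sdim
  rw [rank_subsingleton']
  simp

end Sys
end SysDefs

section Poly

lemma antidiff (P : Polynomial ℚ) : ∃ Q : Polynomial ℚ, ∀ n : ℕ,
    Q.eval ((n : ℚ) + 1) - Q.eval (n : ℚ) = P.eval ((n : ℚ) + 1) := by
  induction P using Polynomial.induction_on' with
  | add p q hp hq =>
    obtain ⟨Q1, h1⟩ := hp
    obtain ⟨Q2, h2⟩ := hq
    refine ⟨Q1 + Q2, fun n => ?_⟩
    rw [Polynomial.eval_add, Polynomial.eval_add, Polynomial.eval_add, ← h1, ← h2]
    ring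
  | monomial m a =>
    refine ⟨Polynomial.C (a / (m + 1)) * (Polynomial.bernoulli (m + 1)).comp (1 + Polynomial.X),
      fun n => ?_⟩
    have h := Polynomial.bernoulli_eval_one_add (m + 1) ((n : ℚ) + 1)
    simp only [Polynomial.eval_mul, Polynomial.eval_C, Polynomial.eval_comp, Polynomial.eval_add,
      Polynomial.eval_one, Polynomial.eval_X, Polynomial.eval_monomial]
    rw [h, add_comm 1 (n : ℚ)]
    have : (m : ℚ) + 1 ≠ 0 := by positivity
    push_cast
    field_simp
    simp
    ring

lemma poly_of_rec {D : ℕ → ℕ → ℕ∞} {N n0 : ℕ}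
    (h1 : ∀ a n, a ≤ n → N ≤ n + 1 → D a (n + 1) = D a n + D (a + 1) (n + 1))
    (h2 : ∀ a n, a ≤ n → n0 ≤ a → D a n = 0) :
    ∃ (P : Polynomial ℚ) (N' : ℕ), ∀ n ≥ N', (((D 0 n).toNat : ℕ) : ℚ) = P.eval (n : ℚ) := by
  have key : ∀ t a, n0 ≤ a + t → ∃ N', (∀ n ≥ N', D a n = ⊤) ∨ ∃ P : Polynomial ℚ,
      ∀ n ≥ N', ∃ m : ℕ, D a n = m ∧ (m : ℚ) = P.eval (n : ℚ) := by
    intro t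
    induction t with
    | zero =>
      intro a ha
      exact ⟨a, Or.inr ⟨0, fun n hn => ⟨0, by simpa using h2 a n hn (by omega), by simp⟩⟩⟩
    | succ t ih =>
      intro a ha
      obtain ⟨N', h | ⟨P, hP⟩⟩ := ih (a + 1) (by omega)
      · refine ⟨N + N' + a + 1, Or.inl fun n hn => ?_⟩
        obtain ⟨m, rfl⟩ : ∃ m, n = m + 1 := ⟨n - 1, by omega⟩
        rw [h1 a m (by omega) (by omega), h (m + 1) (by omega)]
        simp
      · set N1 := N + N' + a + 1 with hN1
        by_cases hT : ∃ n1 ≥ N1, D a n1 = ⊤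
        · obtain ⟨n1, hn1, hT⟩ := hT
          refine ⟨n1, Or.inl fun n hn => ?_⟩
          induction n, hn using Nat.le_induction with
          | base => exact hT
          | succ n hn ih2 =>
            rw [h1 a n (by omega) (by omega), ih2]; simp
        · push Not at hT
          obtain ⟨Q, hQ⟩ := antidiff P
          obtain ⟨m1, hm1⟩ := ENat.ne_top_iff_exists.1 (hT N1 le_rfl)
          refine ⟨N1, Or.inr ⟨Q + Polynomial.C ((m1 : ℚ) - Q.eval (N1 : ℚ)), fun n hn => ?_⟩⟩
          induction n, hn using Nat.le_induction with
          | base => exact ⟨m1, hm1.symm, by simp⟩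
          | succ n hn ih2 =>
            obtain ⟨m, hm, hm'⟩ := ih2
            obtain ⟨r, hr, hr'⟩ := hP (n + 1) (by omega)
            refine ⟨m + r, by rw [h1 a n (by omega) (by omega), hm, hr]; simp, ?_⟩
            have := hQ n
            push_cast at hr' ⊢
            rw [hm', hr', ← this]
            simp only [Polynomial.eval_add, Polynomial.eval_C]
            ring
  obtain ⟨N', h | ⟨P, hP⟩⟩ := key n0 0 (by omega)
  · exact ⟨0, N', fun n hn => by simp [h n hn]⟩
  · refine ⟨P, N', fun n hn => ?_⟩
    obtain ⟨m, hm, hm'⟩ := hP n hn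
    rw [hm, ← hm']; simp

end Poly

section SysMain
universe u
variable {k : Type*} [Field k] {M : Type u} [AddCommGroup M] [Module k M]

theorem Sys.main (X : Sys k M) (hV : ∀ j, ∃ n0, X.Van j n0) (j : ℕ) :
    ∃ (P : Polynomial ℚ) (N' : ℕ), ∀ n ≥ N', (((X.dim j 0 n).toNat : ℕ) : ℚ) = P.eval (n : ℚ) := by
  have hI : ∀ j, ∃ N, ∀ (A S : Finset ℕ) (s : ℕ), A ⊆ S → s ∈ S → s ∉ A → N ≤ S.card →
      X.Inj j A S s := by
    intro j
    obtain ⟨n0, h⟩ := hV (j + 1)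
    exact ⟨n0 + n0, fun A S s h1 h2 h3 h4 => Sys.inj_all h n0 A S s h1 h2 h3 (by omega) h4⟩
  have hS : ∀ j, ∃ N, ∀ (A S : Finset ℕ) (s : ℕ), A ⊆ S → s ∈ S → s ∉ A → N ≤ S.card →
      X.Sur j A S s := by
    intro j
    rcases j with _ | j
    · exact ⟨0, fun A S s _ _ _ _ => Sys.Sur_zero⟩
    · obtain ⟨N, h⟩ := hI j
      exact ⟨N, fun A S s h1 h2 h3 h4 => Sys.Sur_succ h3 (h A S s h1 h2 h3 h4)⟩
  obtain ⟨N1, hI⟩ := hI j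
  obtain ⟨N2, hS⟩ := hS j
  obtain ⟨n0, hV⟩ := hV j
  refine poly_of_rec (D := X.dim j) (N := N1 + N2) (n0 := n0) ?_ ?_
  · intro a n han hN
    exact Sys.dim_add han hN (fun A S s h1 h2 h3 h4 => hI A S s h1 h2 h3 (by omega))
      (fun A S s h1 h2 h3 h4 => hS A S s h1 h2 h3 (by omega))
  · intro a n han ha
    exact Sys.dim_zero hV han ha
end SysMain
end Cong

namespace Cong

section Funct
variable (k : Type*) [CommRing k] {Γ Γ' Γ'' : Type*} [Group Γ] [Group Γ'] [Group Γ'']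

noncomputable def fm (f : Γ →* Γ') : (List Γ →₀ k) →ₗ[k] (List Γ' →₀ k) :=
  Finsupp.lmapDomain k k (List.map f)

@[simp] lemma fm_single (f : Γ →* Γ') (l : List Γ) (a : k) :
    fm k f (Finsupp.single l a) = Finsupp.single (l.map f) a := by simp [fm]

lemma fm_cone (f : Γ →* Γ') (z : List Γ →₀ k) : fm k f (cone k 1 z) = cone k 1 (fm k f z) := by
  induction z using Finsupp.induction_linear with
  | zero => simp
  | add f g hf hg => simp only [map_add, hf, hg]
  | single l a => simp

lemma fm_cone' (f : Γ →* Γ') (x : Γ) (z : List Γ →₀ k) :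
    fm k f (cone k x z) = cone k (f x) (fm k f z) := by
  induction z using Finsupp.induction_linear with
  | zero => simp
  | add f g hf hg => simp only [map_add, hf, hg]
  | single l a => simp

lemma fm_bd (f : Γ →* Γ') (l : List Γ) : fm k f (bd k l) = bd k (l.map f) := by
  induction l with
  | nil => simp [bd_nil]
  | cons x l ih => simp [bd_cons, fm_cone', ih]

lemma fm_dd (f : Γ →* Γ') (z : List Γ →₀ k) : fm k f (dd k z) = dd k (fm k f z) := by
  induction z using Finsupp.induction_linear with
  | zero => simp
  | add f g hf hg => simp only [map_add, hf, hg]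
  | single l a => simp [fm_bd]

lemma fm_pi (f : Γ →* Γ') (z : List Γ →₀ k) : fm k f (pi k z) = pi k (fm k f z) := by
  induction z using Finsupp.induction_linear with
  | zero => simp
  | add f g hf hg => simp only [map_add, hf, hg]
  | single l a =>
    rcases l with _ | ⟨x, r⟩
    · simp [tl]
    · simp [tl, Function.comp_def]

lemma fm_pd (f : Γ →* Γ') (z : List Γ →₀ k) : fm k f (pd k z) = pd k (fm k f z) := by
  rw [pd_apply, pd_apply, fm_pi, fm_dd, fm_cone]

lemma fm_comp (f : Γ →* Γ') (g : Γ' →* Γ'') (z : List Γ →₀ k) :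
    fm k g (fm k f z) = fm k (g.comp f) z := by
  induction z using Finsupp.induction_linear with
  | zero => simp
  | add f g hf hg => simp only [map_add, hf, hg]
  | single l a => simp

lemma fm_id (z : List Γ →₀ k) : fm k (MonoidHom.id Γ) z = z := by
  induction z using Finsupp.induction_linear with
  | zero => simp
  | add f g hf hg => simp only [map_add, hf, hg]
  | single l a => simp

lemma fm_injective (f : Γ →* Γ') (hf : Function.Injective f) : Function.Injective (fm k f) :=
  Finsupp.mapDomain_injective (List.map_injective_iff.2 hf)

lemma fm_mem_Ch (f : Γ →* Γ') {K : List Γ → Prop} {K' : List Γ' → Prop} {j : ℕ}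
    (h : ∀ l, K l → K' (l.map f)) {z : List Γ →₀ k} (hz : z ∈ Ch k K j) : fm k f z ∈ Ch k K' j := by
  refine supp_le k (fm k f) _ ?_ hz
  rintro l ⟨h1, h2⟩
  rw [fm_single]
  exact single_mem_Ch k (h l h1) (by simpa using h2) 1

/-- chains supported on lists from the image lift -/
lemma fm_lift (f : Γ →* Γ') {K : List Γ → Prop} {K' : List Γ' → Prop} {j : ℕ}
    (h : ∀ l', K' l' → ∃ l, K l ∧ l.map f = l') {z : List Γ' →₀ k} (hz : z ∈ Ch k K' j) :
    ∃ y ∈ Ch k K j, fm k f y = z := by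
  have : LinearMap.id (R := k) z ∈ (Ch k K j).map (fm k f) := by
    refine supp_le k LinearMap.id _ ?_ hz
    rintro l' ⟨h1, h2⟩
    obtain ⟨l, hl, rfl⟩ := h l' h1
    exact ⟨Finsupp.single l 1, single_mem_Ch k hl (by simpa using h2) 1, by simp⟩
  exact this

lemma pd_mem_Ch (H : Subgroup Γ) {j : ℕ} {z : List Γ →₀ k}
    (hz : z ∈ Ch k (fun l => ∀ g ∈ l, g ∈ H) (j + 1)) :
    pd k z ∈ Ch k (fun l => ∀ g ∈ l, g ∈ H) j := by
  have h1 : cone k 1 z ∈ Ch k (fun l : List Γ => ∀ g ∈ l, g ∈ H) (j + 2) := by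
    refine supp_le k (cone k 1) _ ?_ hz
    rintro l ⟨h1, h2⟩
    rw [cone_single]
    refine single_mem_Ch k ?_ (by simpa using h2) 1
    intro g hg
    rcases List.mem_cons.1 hg with rfl | hg
    exacts [one_mem _, h1 g hg]
  have h2 := dd_mem k (fun l l' hl h g hg => h g (hl.subset hg)) h1
  rw [pd_apply]
  refine supp_le k (pi k) _ ?_ h2
  rintro l ⟨h1, h2⟩
  rw [pi_single, one_smul]
  rcases l with _ | ⟨x, r⟩
  · simp at h2
  · refine single_mem_Ch k ?_ (by simpa using h2) 1
    intro g hg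
    obtain ⟨y, hy, rfl⟩ := List.mem_map.1 hg
    exact mul_mem (inv_mem (h1 x (by simp))) (h1 y (by simp [hy]))

lemma pd_zero_len {K : List Γ → Prop} {z : List Γ →₀ k} (hz : z ∈ Ch k K 0) : pd k z = 0 := by
  have : pd k z ∈ (⊥ : Submodule k (List Γ →₀ k)) := by
    refine supp_le k (pd k) _ ?_ hz
    rintro l ⟨h1, h2⟩
    rw [List.length_eq_zero_iff] at h2
    subst h2
    simp [pd_apply, bd_cons, bd_nil, tl]
  simpa using this

end Funct

section GroupSys

/-- group-theoretic data -/
structure GD (G : Type*) [Group G] where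
  Cg : Subgroup G
  Fx : ℕ → Subgroup G
  ρ : Equiv.Perm ℕ →* MulAut G
  ρCg : ∀ σ g, g ∈ Cg → ρ σ g ∈ Cg
  ρFx : ∀ σ j g, g ∈ Fx j → ρ σ g ∈ Fx (σ j)
  ρfix : ∀ s u g, g ∈ Fx s → g ∈ Fx u → ρ (Equiv.swap s u) g = g

variable {G : Type*} [Group G] (X : GD G)

/-- the subgroup of elements supported on `S` -/
def GD.Γ (S : Finset ℕ) : Subgroup G where
  carrier := {g | g ∈ X.Cg ∧ ∀ j ∉ S, g ∈ X.Fx j}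
  one_mem' := ⟨one_mem _, fun _ _ => one_mem _⟩
  mul_mem' := fun ha hb => ⟨mul_mem ha.1 hb.1, fun j hj => mul_mem (ha.2 j hj) (hb.2 j hj)⟩
  inv_mem' := fun ha => ⟨inv_mem ha.1, fun j hj => inv_mem (ha.2 j hj)⟩

lemma GD.mem_Γ {S : Finset ℕ} {g : G} : g ∈ X.Γ S ↔ g ∈ X.Cg ∧ ∀ j ∉ S, g ∈ X.Fx j := Iff.rfl

lemma GD.Γ_erase {S : Finset ℕ} {g : G} (a : ℕ) :
    g ∈ X.Γ (S.erase a) ↔ g ∈ X.Γ S ∧ g ∈ X.Fx a := by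
  rw [X.mem_Γ, X.mem_Γ]
  constructor
  · rintro ⟨h1, h2⟩
    exact ⟨⟨h1, fun j hj => h2 j (by simp [hj])⟩, h2 a (by simp)⟩
  · rintro ⟨⟨h1, h2⟩, h3⟩
    refine ⟨h1, fun j hj => ?_⟩
    by_cases h : j = a
    · rwa [h]
    · exact h2 j (fun h' => hj (Finset.mem_erase.2 ⟨h, h'⟩))

variable (k : Type*) [Field k]

/-- chains on `Γ S` -/
noncomputable def GD.C (j : ℕ) (S : Finset ℕ) : Submodule k (List G →₀ k) :=
  Ch k (fun l => ∀ g ∈ l, g ∈ X.Γ S) j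

lemma Ch_mono {V : Type*} {K K' : List V → Prop} (h : ∀ l, K l → K' l) (j : ℕ) :
    Ch k K j ≤ Ch k K' j :=
  Finsupp.supported_mono fun l hl => ⟨h l hl.1, hl.2⟩

lemma GD.CCs_eq (j : ℕ) (A S : Finset ℕ) :
    CCs (X.C k) j A S = Ch k (fun l => ∃ a ∈ A, ∀ g ∈ l, g ∈ X.Γ (S.erase a)) j := by
  apply le_antisymm
  · refine Finset.sup_le fun a ha => Ch_mono k (fun l hl => ⟨a, ha, hl⟩) j
  · intro z hz
    have : LinearMap.id (R := k) z ∈ CCs (X.C k) j A S := by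
      refine supp_le k LinearMap.id _ ?_ hz
      rintro l ⟨⟨a, ha, h1⟩, h2⟩
      exact Finset.le_sup (f := fun a => X.C k j (S.erase a)) ha (single_mem_Ch k h1 h2 1)
    exact this

/-- the system of chain complexes -/
noncomputable def GD.sys : Sys k (List G →₀ k) where
  C := X.C k
  d := pd k
  dd := pd_pd k
  dC := fun hz => pd_mem_Ch k _ hz
  d0 := fun hz => pd_zero_len k hz
  mono := fun h => Ch_mono k (fun l hl g hg => ⟨(hl g hg).1, fun j hj => (hl g hg).2 j
    (fun h' => hj (h h'))⟩) _
  dist := by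
    intro j s A S z _ h1 h2
    rw [GD.CCs_eq] at h2 ⊢
    intro l hl
    obtain ⟨h3, h4⟩ := h1 hl
    obtain ⟨⟨a, ha, h5⟩, _⟩ := h2 hl
    refine ⟨⟨a, ha, fun g hg => ?_⟩, h4⟩
    rw [X.Γ_erase]
    exact ⟨h3 g hg, ((X.Γ_erase a).1 (h5 g hg)).2⟩
  ρ := fun σ => LinearEquiv.ofLinearMap (fm k (X.ρ σ).toMonoidHom) (fm k (X.ρ σ⁻¹).toMonoidHom)
    (by
      refine LinearMap.ext fun z => ?_
      rw [LinearMap.comp_apply, fm_comp, LinearMap.id_apply]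
      convert fm_id k z
      ext g
      change (X.ρ σ * X.ρ σ⁻¹) g = g
      rw [← map_mul]; simp)
    (by
      refine LinearMap.ext fun z => ?_
      rw [LinearMap.comp_apply, fm_comp, LinearMap.id_apply]
      convert fm_id k z
      ext g
      change (X.ρ σ⁻¹ * X.ρ σ) g = g
      rw [← map_mul]; simp)
  ρd := fun σ z => fm_pd k _ z
  ρC := by
    intro σ j S T z h hz
    refine fm_mem_Ch k _ ?_ hz
    intro l hl g hg
    obtain ⟨g', hg', rfl⟩ := List.mem_map.1 hg
    obtain ⟨h1, h2⟩ := hl g' hg'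
    refine ⟨X.ρCg σ g' h1, fun j hj => ?_⟩
    have := X.ρFx σ (σ⁻¹ j) g' (h2 _ (fun h3 => hj (by simpa using h _ h3)))
    simpa using this
  ρsymm := fun σ z => rfl
  ρfix := by
    intro s u j S z hs hu hz
    have : (fm k (X.ρ (Equiv.swap s u)).toMonoidHom - LinearMap.id : (List G →₀ k) →ₗ[k] _) z ∈
        (⊥ : Submodule k (List G →₀ k)) := by
      refine supp_le k _ _ ?_ hz
      rintro l ⟨h1, h2⟩
      rw [Submodule.mem_bot, LinearMap.sub_apply, fm_single, LinearMap.id_apply, sub_eq_zero]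
      congr 1
      conv_rhs => rw [← List.map_id l]
      refine List.map_congr_left fun g hg => ?_
      exact X.ρfix s u g ((h1 g hg).2 s hs) ((h1 g hg).2 u hu)
    rw [Submodule.mem_bot, LinearMap.sub_apply, sub_eq_zero] at this
    exact this

end GroupSys
end Cong

namespace Cong

section Concrete
set_option linter.unusedSectionVars false
open Matrix
variable {R : Type*} [CommRing R]

/-- the permutation action -/
noncomputable def permE : Equiv.Perm ℕ →* ((ℕ →₀ R) ≃ₗ[R] (ℕ →₀ R)) where
  toFun σ := Finsupp.domLCongr σ
  map_one' := LinearEquiv.ext fun _ => Finsupp.ext fun _ => rfl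
  map_mul' _ _ := LinearEquiv.ext fun _ => Finsupp.ext fun _ => rfl

lemma permE_apply (σ : Equiv.Perm ℕ) (v : ℕ →₀ R) (j : ℕ) : permE σ v j = v (σ⁻¹ j) := rfl

lemma permE_single (σ : Equiv.Perm ℕ) (j : ℕ) (a : R) :
    permE σ (Finsupp.single j a) = Finsupp.single (σ j) a := by
  simp [permE]

/-- congruence subgroup of the infinite general linear group -/
def infCg (I : Ideal R) : Subgroup ((ℕ →₀ R) ≃ₗ[R] (ℕ →₀ R)) where
  carrier := {g | ∀ v i, g v i - v i ∈ I}
  one_mem' := by intro v i; simp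
  mul_mem' := by
    intro a b ha hb v i
    have : (a * b) v i - v i = (a (b v) i - b v i) + (b v i - v i) := by
      rw [LinearEquiv.mul_apply]; ring
    rw [this]
    exact I.add_mem (ha _ _) (hb _ _)
  inv_mem' := by
    intro a ha v i
    have h := ha (a⁻¹ v) i
    have h2 : a (a⁻¹ v) = v := by
      rw [← LinearEquiv.mul_apply]; simp
    rw [h2] at h
    rw [← neg_sub]; exact I.neg_mem h

/-- fixing the `j`th basis vector and coordinate -/
def infFx (j : ℕ) : Subgroup ((ℕ →₀ R) ≃ₗ[R] (ℕ →₀ R)) where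
  carrier := {g | g (Finsupp.single j 1) = Finsupp.single j 1 ∧ ∀ v, g v j = v j}
  one_mem' := by simp
  mul_mem' := by
    rintro a b ⟨h1, h2⟩ ⟨h3, h4⟩
    refine ⟨?_, fun v => ?_⟩
    · rw [LinearEquiv.mul_apply, h3, h1]
    · rw [LinearEquiv.mul_apply, h2, h4]
  inv_mem' := by
    rintro a ⟨h1, h2⟩
    have h3 : ∀ v, a (a⁻¹ v) = v := by
      intro v; rw [← LinearEquiv.mul_apply]; simp
    have h4 : ∀ v, a⁻¹ (a v) = v := by
      intro v; rw [← LinearEquiv.mul_apply]; simp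
    refine ⟨?_, fun v => ?_⟩
    · conv_lhs => rw [← h1]
      rw [h4]
    · rw [← h2, h3]

lemma mem_infFx {j : ℕ} {g : (ℕ →₀ R) ≃ₗ[R] (ℕ →₀ R)} :
    g ∈ infFx j ↔ g (Finsupp.single j 1) = Finsupp.single j 1 ∧ ∀ v, g v j = v j := Iff.rfl

lemma mem_infCg {I : Ideal R} {g : (ℕ →₀ R) ≃ₗ[R] (ℕ →₀ R)} :
    g ∈ infCg I ↔ ∀ v i, g v i - v i ∈ I := Iff.rfl

lemma conj_apply (σ : Equiv.Perm ℕ) (g : (ℕ →₀ R) ≃ₗ[R] (ℕ →₀ R)) (v : ℕ →₀ R) :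
    (MulAut.conj.comp permE) σ g v = permE σ (g (permE σ⁻¹ v)) := by
  rw [MonoidHom.comp_apply, MulAut.conj_apply, map_inv, LinearEquiv.mul_apply,
    LinearEquiv.mul_apply]

lemma permE_inv (σ : Equiv.Perm ℕ) (v : ℕ →₀ R) : permE σ (permE σ⁻¹ v) = v := by
  rw [← LinearEquiv.mul_apply, ← map_mul]; simp

lemma permE_swap (s u : ℕ) (v : ℕ →₀ R) :
    permE (Equiv.swap s u) v = v + (v s - v u) • (Finsupp.single u 1 - Finsupp.single s 1) := by
  refine Finsupp.ext fun j => ?_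
  rw [permE_apply, Equiv.swap_inv, Equiv.swap_apply_def]
  simp only [Finsupp.add_apply, Finsupp.smul_apply, Finsupp.sub_apply, Finsupp.single_apply,
    smul_eq_mul]
  by_cases h1 : j = s
  · subst h1
    by_cases h2 : u = j
    · subst h2; simp
    · simp [h2]
  · by_cases h2 : j = u
    · subst h2; simp [Ne.symm h1, h1]
    · simp [h1, h2, Ne.symm h1, Ne.symm h2]

/-- the group data -/
noncomputable def gd (I : Ideal R) : GD ((ℕ →₀ R) ≃ₗ[R] (ℕ →₀ R)) where
  Cg := infCg I
  Fx := infFx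
  ρ := MulAut.conj.comp permE
  ρCg := by
    intro σ g hg v i
    rw [conj_apply, permE_apply]
    have := hg (permE σ⁻¹ v) (σ⁻¹ i)
    rw [permE_apply _ v] at this
    simpa using this
  ρFx := by
    rintro σ j g ⟨h1, h2⟩
    have hs : σ⁻¹ (σ j) = j := σ.symm_apply_apply j
    refine ⟨?_, fun v => ?_⟩
    · rw [conj_apply, permE_single, hs, h1, permE_single]
    · rw [conj_apply, permE_apply, hs, h2, permE_apply, inv_inv]
  ρfix := by
    rintro s u g ⟨h1, h2⟩ ⟨h3, h4⟩
    refine LinearEquiv.ext fun v => ?_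
    rw [conj_apply, Equiv.swap_inv, permE_swap, permE_swap, map_add, map_smul, map_sub, h1, h3]
    simp only [Finsupp.add_apply, Finsupp.smul_apply, Finsupp.sub_apply, smul_eq_mul, h2, h4]
    rw [add_assoc, ← add_smul]
    convert add_zero _
    convert zero_smul R _
    by_cases h : s = u
    · subst h; simp
    · simp [Finsupp.single_apply, h, Ne.symm h]

variable {ι : Type*} [Fintype ι] [DecidableEq ι] (e : ι ↪ ℕ)

/-- extension by zero -/
noncomputable def eta : (ι → R) →ₗ[R] (ℕ →₀ R) :=
  Finsupp.lmapDomain R R e ∘ₗ (Finsupp.linearEquivFunOnFinite R R ι).symm.toLinearMap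

/-- restriction -/
def res : (ℕ →₀ R) →ₗ[R] (ι → R) where
  toFun v := fun i => v (e i)
  map_add' _ _ := rfl
  map_smul' _ _ := rfl

lemma res_apply (v : ℕ →₀ R) (i : ι) : res e v i = v (e i) := rfl

lemma eta_apply (x : ι → R) (i : ι) : eta e x (e i) = x i := by
  simp only [eta, LinearMap.comp_apply, Finsupp.lmapDomain_apply]
  rw [Finsupp.mapDomain_apply e.injective]; rfl

lemma eta_notMem (x : ι → R) {j : ℕ} (hj : j ∉ Set.range e) : eta e x j = 0 := by
  simp only [eta, LinearMap.comp_apply, Finsupp.lmapDomain_apply]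
  rw [Finsupp.mapDomain_of_notMem_range _ _ hj]

lemma res_eta (x : ι → R) : res e (eta e x) = x := funext fun i => eta_apply e x i

/-- matrices acting on the infinite module -/
noncomputable def FE : Matrix ι ι R →* Module.End R (ℕ →₀ R) where
  toFun A := LinearMap.id + eta e ∘ₗ (A - 1).mulVecLin ∘ₗ res e
  map_one' := by ext; simp
  map_mul' A B := by
    refine LinearMap.ext fun v => ?_
    simp only [Module.End.mul_apply, LinearMap.add_apply, LinearMap.id_apply, LinearMap.comp_apply,
      Matrix.mulVecLin_apply, map_add, res_eta]
    rw [add_assoc, ← map_add, ← map_add]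
    congr 2
    simp only [sub_mulVec, one_mulVec, mulVec_sub, mulVec_mulVec, sub_mul, one_mul]
    abel

lemma FE_apply (A : Matrix ι ι R) (v : ℕ →₀ R) : FE e A v = v + eta e ((A - 1) *ᵥ (res e v)) := rfl

lemma FE_apply_mem (A : Matrix ι ι R) (v : ℕ →₀ R) (i : ι) : FE e A v (e i) = (A *ᵥ (res e v)) i := by
  rw [FE_apply, Finsupp.add_apply, eta_apply, sub_mulVec, one_mulVec]
  simp [res_apply]

lemma FE_apply_notMem (A : Matrix ι ι R) (v : ℕ →₀ R) {j : ℕ} (hj : j ∉ Set.range e) :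
    FE e A v j = v j := by
  rw [FE_apply, Finsupp.add_apply, eta_notMem e _ hj, add_zero]

lemma FE_injective : Function.Injective (FE (R := R) e) := by
  intro A B h
  refine Matrix.ext_of_mulVec_single fun i => ?_
  funext i'
  have h2 := FE_apply_mem e A (eta e (Pi.single i 1)) i'
  rw [h, FE_apply_mem, res_eta] at h2
  exact h2.symm

/-- the embedding of the congruence group -/
noncomputable def fE (I : Ideal R) : ↥(CG (ι := ι) I) →* ((ℕ →₀ R) ≃ₗ[R] (ℕ →₀ R)) :=
  ((LinearMap.GeneralLinearGroup.generalLinearEquiv R (ℕ →₀ R)).toMonoidHom.comp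
    (Units.map (FE e))).comp (CG (ι := ι) I).subtype

variable {I : Ideal R}

lemma fE_apply (g : ↥(CG (ι := ι) I)) (v : ℕ →₀ R) : fE e I g v = FE e g.1.1 v := rfl

lemma fE_injective : Function.Injective (fE (ι := ι) e I) := by
  intro g h hgh
  apply Subtype.ext
  apply Units.ext
  apply FE_injective e
  refine LinearMap.ext fun v => ?_
  rw [← fE_apply, ← fE_apply, hgh]

lemma fE_mem (g : ↥(CG (ι := ι) I)) : fE e I g ∈ (gd I).Γ (Finset.univ.map e) := by
  refine ⟨?_, ?_⟩
  · intro v j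
    rw [fE_apply]
    by_cases hj : j ∈ Set.range e
    · obtain ⟨i, rfl⟩ := hj
      rw [FE_apply_mem]
      have := congrFun (CG_mulVec g.2 (res e v)) i
      simp only [Function.comp_apply] at this
      exact (Ideal.Quotient.eq).1 this
    · rw [FE_apply_notMem e _ _ hj]; simp
  · intro j hj
    have hj' : j ∉ Set.range e := by simpa using hj
    refine ⟨?_, fun v => ?_⟩
    · rw [fE_apply, FE_apply]
      have : res (R := R) e (Finsupp.single j 1) = 0 := by
        funext i
        simp only [res_apply, Pi.zero_apply]
        rw [Finsupp.single_eq_of_ne]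
        rintro h; exact hj' ⟨i, h⟩
      rw [this]; simp
    · rw [fE_apply, FE_apply_notMem e _ _ hj']

lemma fE_surj {g : (ℕ →₀ R) ≃ₗ[R] (ℕ →₀ R)} (hg : g ∈ (gd I).Γ (Finset.univ.map e)) :
    ∃ g' : ↥(CG (ι := ι) I), fE e I g' = g := by
  have key : ∀ g ∈ (gd I).Γ (Finset.univ.map e), ∃ A : Matrix ι ι R, FE e A = g.toLinearMap := by
    intro g hg
    refine ⟨Matrix.of fun i i' => g (Finsupp.single (e i') 1) (e i), ?_⟩
    refine Finsupp.lhom_ext' fun j => LinearMap.ext_ring ?_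
    refine Finsupp.ext fun j' => ?_
    simp only [LinearMap.comp_apply, Finsupp.lsingle_apply, LinearEquiv.coe_coe]
    by_cases hj' : j' ∈ Set.range e
    · obtain ⟨i, rfl⟩ := hj'
      rw [FE_apply_mem]
      by_cases hj : j ∈ Set.range e
      · obtain ⟨i', rfl⟩ := hj
        have : res (R := R) e (Finsupp.single (e i') 1) = Pi.single i' 1 := by
          funext a
          simp [res_apply, Finsupp.single_apply, Pi.single_apply, eq_comm]
        rw [this]; simp
      · have hF := hg.2 j (by simpa using hj)
        have : res (R := R) e (Finsupp.single j 1) = 0 := by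
          funext i
          simp only [res_apply, Pi.zero_apply]
          rw [Finsupp.single_eq_of_ne]
          rintro h; exact hj ⟨i, h⟩
        rw [this, mulVec_zero, hF.1, Pi.zero_apply, Finsupp.single_eq_of_ne]
        rintro h; exact hj ⟨i, h⟩
    · have hF := hg.2 j' (by simpa using hj')
      rw [FE_apply_notMem e _ _ hj', hF.2]
  obtain ⟨A, hA⟩ := key g hg
  obtain ⟨B, hB⟩ := key g⁻¹ (inv_mem hg)
  have hAB : A * B = 1 := by
    apply FE_injective e
    rw [map_mul, hA, hB, map_one]
    refine LinearMap.ext fun v => ?_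
    change g (g⁻¹ v) = v
    rw [← LinearEquiv.mul_apply]; simp
  have hBA : B * A = 1 := by
    apply FE_injective e
    rw [map_mul, hA, hB, map_one]
    refine LinearMap.ext fun v => ?_
    change g⁻¹ (g v) = v
    rw [← LinearEquiv.mul_apply]; simp
  refine ⟨⟨⟨A, B, hAB, hBA⟩, ?_⟩, ?_⟩
  · rw [mem_CG]
    intro i i'
    change A i i' - _ ∈ I
    have h := hg.1 (eta e (Pi.single i' 1)) (e i)
    have h2 : g (eta e (Pi.single i' 1)) = FE e A (eta e (Pi.single i' 1)) := by rw [hA]; rfl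
    rw [h2, FE_apply_mem, res_eta, eta_apply] at h
    simpa [Matrix.one_apply, Pi.single_apply] using h
  · refine LinearEquiv.ext fun v => ?_
    rw [fE_apply, hA]; rfl

lemma fE_fix (g : ↥(CG (ι := ι) I)) (i : ι) :
    fE e I g ∈ (gd I).Fx (e i) ↔ g ∈ (fixs i).subgroupOf (CG (ι := ι) I) := by
  rw [Subgroup.mem_subgroupOf, mem_fixs]
  have hsing : eta (R := R) e (Pi.single i 1) = Finsupp.single (e i) 1 := by
    refine Finsupp.ext fun j => ?_
    by_cases hj : j ∈ Set.range e
    · obtain ⟨a, rfl⟩ := hj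
      rw [eta_apply]
      simp [Finsupp.single_apply, Pi.single_apply, eq_comm]
    · rw [eta_notMem e _ hj, Finsupp.single_eq_of_ne]
      rintro h; exact hj ⟨i, h.symm⟩
  constructor
  · rintro ⟨h1, h2⟩
    constructor
    · funext a
      rw [← hsing] at h1
      have := DFunLike.congr_fun h1 (e a)
      rw [fE_apply, FE_apply_mem, res_eta, eta_apply] at this
      exact this
    · funext a
      have := h2 (eta e (Pi.single a 1))
      rw [fE_apply, FE_apply_mem, res_eta, eta_apply] at this
      rw [single_one_vecMul]
      rw [mulVec_single_one] at this
      change g.1.1 i a = _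
      have h3 : g.1.1 i a = (Pi.single a 1 : ι → R) i := this
      rw [h3]
      simp [Pi.single_apply, eq_comm]
  · rintro ⟨h1, h2⟩
    constructor
    · rw [← hsing]
      refine Finsupp.ext fun j => ?_
      rw [fE_apply]
      by_cases hj : j ∈ Set.range e
      · obtain ⟨a, rfl⟩ := hj
        rw [FE_apply_mem, res_eta, eta_apply]
        exact congrFun h1 a
      · rw [FE_apply_notMem e _ _ hj]
    · intro v
      rw [fE_apply, FE_apply_mem]
      have : (g.1.1 *ᵥ res e v) i = ee i ⬝ᵥ (g.1.1 *ᵥ res e v) := by simp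
      rw [this, dotProduct_mulVec, h2]
      simp [res_apply]

end Concrete
end Cong

namespace Cong

section Assemble
variable {R : Type} [CommRing R] {ι : Type} [Fintype ι] [DecidableEq ι] (e : ι ↪ ℕ)
variable {I : Ideal R} (k : Type) [Field k]

lemma list_lift {l' : List ((ℕ →₀ R) ≃ₗ[R] (ℕ →₀ R))}
    (h : ∀ g ∈ l', g ∈ (gd I).Γ (Finset.univ.map e)) :
    ∃ l : List ↥(CG (ι := ι) I), l.map (fE e I) = l' := by
  induction l' with
  | nil => exact ⟨[], rfl⟩
  | cons g l ih =>
    obtain ⟨l1, h1⟩ := ih fun x hx => h x (by simp [hx])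
    obtain ⟨g1, h2⟩ := fE_surj e (h g (by simp))
    exact ⟨g1 :: l1, by simp [h1, h2]⟩

lemma C_lift {j : ℕ} {z : List ((ℕ →₀ R) ≃ₗ[R] (ℕ →₀ R)) →₀ k}
    (hz : z ∈ (gd I).C k j (Finset.univ.map e)) :
    ∃ y ∈ Cl k j, fm k (fE (ι := ι) e I) y = z :=
  fm_lift k (fE e I) (K := fun _ => True) (fun l' hl' => by
    obtain ⟨l, hl⟩ := list_lift e hl'
    exact ⟨l, trivial, hl⟩) hz

lemma C_push {j : ℕ} {y : List ↥(CG (ι := ι) I) →₀ k} (hy : y ∈ Cl k j) :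
    fm k (fE (ι := ι) e I) y ∈ (gd I).C k j (Finset.univ.map e) := by
  refine fm_mem_Ch k (fE e I) ?_ hy
  intro l _ g hg
  obtain ⟨g', _, rfl⟩ := List.mem_map.1 hg
  exact fE_mem e g'

lemma CC_lift {j : ℕ} {A : Finset ι} {z : List ((ℕ →₀ R) ≃ₗ[R] (ℕ →₀ R)) →₀ k}
    (hz : z ∈ CCs ((gd I).C k) j (A.map e) (Finset.univ.map e)) :
    ∃ y ∈ Ch k (CCp (fun s : ↥A => (fixs s.1).subgroupOf (CG (ι := ι) I))) j,
      fm k (fE (ι := ι) e I) y = z := by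
  rw [GD.CCs_eq] at hz
  refine fm_lift k (fE e I) ?_ hz
  rintro l' ⟨a, ha, hl'⟩
  obtain ⟨i, hi, rfl⟩ := Finset.mem_map.1 ha
  obtain ⟨l, hl⟩ := list_lift e (fun g hg => (((gd I).Γ_erase (e i)).1 (hl' g hg)).1)
  refine ⟨l, ⟨⟨i, hi⟩, fun g hg => ?_⟩, hl⟩
  rw [← fE_fix e]
  refine (((gd I).Γ_erase (e i)).1 (hl' _ ?_)).2
  rw [← hl]; exact List.mem_map_of_mem hg

lemma CC_push {j : ℕ} {A : Finset ι} {y : List ↥(CG (ι := ι) I) →₀ k}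
    (hy : y ∈ Ch k (CCp (fun s : ↥A => (fixs s.1).subgroupOf (CG (ι := ι) I))) j) :
    fm k (fE (ι := ι) e I) y ∈ CCs ((gd I).C k) j (A.map e) (Finset.univ.map e) := by
  rw [GD.CCs_eq]
  refine fm_mem_Ch k (fE e I) ?_ hy
  rintro l ⟨s, hs⟩
  refine ⟨e s, by simp, fun g hg => ?_⟩
  obtain ⟨g', hg', rfl⟩ := List.mem_map.1 hg
  rw [(gd I).Γ_erase]
  exact ⟨fE_mem e g', (fE_fix e g' s.1).2 (hs g' hg')⟩

lemma van_emb [IsDedekindDomain R] (hI : I ≠ ⊤) (j : ℕ) (A : Finset ι) (hA : 6 * j + 10 ≤ A.card) :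
    ((gd I).sys k).Cyc j (A.map e) (Finset.univ.map e) ≤
      ((gd I).sys k).Bd j (A.map e) (Finset.univ.map e) := by
  rintro z ⟨h1, h2⟩
  obtain ⟨z', hz', rfl⟩ := C_lift e k h1
  obtain ⟨y0, hy0, h3⟩ := CC_lift e k h2
  have h4 : y0 = pd k z' := by
    apply fm_injective k _ (fE_injective e)
    rw [h3, fm_pd]; rfl
  subst h4
  obtain ⟨y, hy, h5⟩ := rel_matrix k hI j hA hz' (Finsupp.supported_mono (fun l hl => hl.1) hy0)
  refine Sys.mem_Bd.2 ⟨_, C_push e k hy, _, CC_push e k h5, ?_⟩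
  rw [map_sub, fm_pd]
  exact add_sub_cancel _ _

lemma van [IsDedekindDomain R] (hI : I ≠ ⊤) (j : ℕ) : ((gd I).sys k).Van j (6 * j + 10) := by
  intro A S hAS hA
  have h1 : Finset.univ.map (Function.Embedding.subtype (· ∈ S)) = S := by
    ext x; simp
  have h2 : (A.subtype (· ∈ S)).map (Function.Embedding.subtype (· ∈ S)) = A := by
    rw [Finset.subtype_map_of_mem]
    exact fun x hx => hAS hx
  have h3 := van_emb (ι := ↥S) (Function.Embedding.subtype (· ∈ S)) k hI j (A.subtype (· ∈ S))
    (by rw [← Finset.card_map, h2]; exact hA)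
  have h4 : Finset.map (Function.Embedding.subtype (· ∈ S)) (Finset.univ : Finset ↥S) = S := h1
  rw [h2, h4] at h3
  exact h3

lemma dim_eq (n j : ℕ) : ((gd I).sys k).dim j 0 n =
    sdim (Cl (Γ := ↥(CG (ι := Fin n) I)) k j ⊓ LinearMap.ker (pd k)) ((Cl k (j + 1)).map (pd k)) := by
  have hS : Finset.univ.map (Fin.valEmbedding (n := n)) = Finset.range n := by
    ext x; simp
  symm
  unfold Sys.dim
  rw [← hS, Finset.range_zero]
  have hB : ∀ i S, CCs ((gd I).C k) i ∅ S = ⊥ := fun i S => rfl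
  refine sdim_eq (fm k (fE (Fin.valEmbedding (n := n)) I)) _ _ _ _ ?_ ?_ ?_
  · rintro z ⟨h1, h2⟩
    refine ⟨C_push _ k h1, ?_⟩
    have h3 : pd k (fm k (fE (Fin.valEmbedding (n := n)) I) z) = 0 := by
      rw [← fm_pd, LinearMap.mem_ker.1 h2, map_zero]
    have h4 : pd k (fm k (fE (Fin.valEmbedding (n := n)) I) z) ∈
        (⊥ : Submodule k (List ((ℕ →₀ R) ≃ₗ[R] (ℕ →₀ R)) →₀ k)) := by
      rw [h3]; exact zero_mem _
    exact h4
  · rintro z ⟨h1, h2⟩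
    rw [Sys.mem_Bd]
    constructor
    · rintro ⟨y, hy, p, hp, h3⟩
      have hp0 : p = 0 := by rw [← Submodule.mem_bot k]; exact hp
      subst hp0
      obtain ⟨y', hy', rfl⟩ := C_lift _ k hy
      refine ⟨y', hy', ?_⟩
      apply fm_injective k _ (fE_injective (I := I) (Fin.valEmbedding (n := n)))
      rw [fm_pd, ← h3, add_zero]; rfl
    · rintro ⟨y, hy, rfl⟩
      refine ⟨_, C_push _ k hy, 0, zero_mem _, ?_⟩
      rw [add_zero, fm_pd]; rfl
  · rintro z ⟨h1, h2⟩
    obtain ⟨z', hz', rfl⟩ := C_lift _ k h1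
    refine ⟨z', ⟨hz', ?_⟩, by rw [sub_self]; exact zero_mem _⟩
    rw [SetLike.mem_coe, LinearMap.mem_ker]
    apply fm_injective k _ (fE_injective (I := I) (Fin.valEmbedding (n := n)))
    rw [fm_pd, map_zero, ← Submodule.mem_bot k]
    exact h2

theorem poly_sdim [IsDedekindDomain R] (hI : I ≠ ⊤) (j : ℕ) :
    ∃ (P : Polynomial ℚ) (N' : ℕ), ∀ n ≥ N',
      (((sdim (Cl (Γ := ↥(CG (ι := Fin n) I)) k j ⊓ LinearMap.ker (pd k))
        ((Cl k (j + 1)).map (pd k))).toNat : ℕ) : ℚ) = P.eval (n : ℚ) := by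
  obtain ⟨P, N', h⟩ := Sys.main ((gd I).sys k) (fun j => ⟨_, van k hI j⟩) j
  exact ⟨P, N', fun n hn => by rw [← dim_eq]; exact h n hn⟩

end Assemble
end Cong

namespace Cong

section Nerve
variable (k : Type) [Field k] {G : Type} [Group G]

lemma bd_ofFn {V : Type*} (n : ℕ) (w : Fin (n + 1) → V) : bd k (List.ofFn w) =
    ∑ i : Fin (n + 1), (-1 : k) ^ (i : ℕ) • Finsupp.single (List.ofFn (w ∘ i.succAbove)) 1 := by
  induction n with
  | zero => simp [bd_cons, bd_nil]
  | succ n ih =>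
    conv_rhs => rw [Fin.sum_univ_succ]
    rw [List.ofFn_succ, bd_cons, ih, map_sum, sub_eq_add_neg, ← Finset.sum_neg_distrib]
    congr 1
    · simp [Function.comp_def]
    · refine Finset.sum_congr rfl fun i _ => ?_
      rw [map_smul, cone_single, List.ofFn_succ (f := w ∘ i.succ.succAbove)]
      simp [pow_succ, Function.comp_def]

/-- the vertices, in homogeneous coordinates -/
def vv {p : ℕ} (F : Fin (p + 1) ⥤ SingleObj G) (i : Fin (p + 1)) : G :=
  ((F.map (homOfLE (Fin.zero_le i)) : G))⁻¹

lemma vv_zero {p : ℕ} (F : Fin (p + 1) ⥤ SingleObj G) : vv F 0 = 1 := by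
  have : F.map (homOfLE (Fin.zero_le (0 : Fin (p + 1)))) = 𝟙 _ := F.map_id 0
  unfold vv
  rw [this]
  exact inv_one

lemma map_eq {p : ℕ} (F : Fin (p + 1) ⥤ SingleObj G) {i j : Fin (p + 1)} (f : i ⟶ j) :
    (F.map f : G) = (vv F j)⁻¹ * vv F i := by
  have h : F.map (homOfLE (Fin.zero_le i)) ≫ F.map f = F.map (homOfLE (Fin.zero_le j)) := by
    rw [← F.map_comp]; rfl
  have h2 : (F.map f : G) * (F.map (homOfLE (Fin.zero_le i)) : G) =
    (F.map (homOfLE (Fin.zero_le j)) : G) := h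
  unfold vv
  rw [inv_inv, ← h2]
  exact (mul_inv_cancel_right (G := G) _ _).symm

/-- the list of a simplex -/
def LL {p : ℕ} (F : Fin (p + 1) ⥤ SingleObj G) : List G := List.ofFn fun i : Fin p => vv F i.succ

lemma cons_LL {p : ℕ} (F : Fin (p + 1) ⥤ SingleObj G) : 1 :: LL F = List.ofFn (vv F) := by
  rw [List.ofFn_succ, vv_zero]; rfl

lemma LL_injective (p : ℕ) : Function.Injective (LL (G := G) (p := p)) := by
  intro F F' h
  have h2 : vv F = vv F' := by
    apply List.ofFn_injective
    rw [← cons_LL, ← cons_LL, h]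
  refine CategoryTheory.Functor.hext (fun _ => rfl) ?_
  intro i j f
  apply heq_of_eq
  have := map_eq F f
  rw [h2, ← map_eq F' f] at this
  exact this

/-- the functor of a list of vertices -/
def ofV {p : ℕ} (w : Fin (p + 1) → G) : Fin (p + 1) ⥤ SingleObj G where
  obj _ := SingleObj.star G
  map {i j} _ := ((w j)⁻¹ * w i : G)
  map_id i := inv_mul_cancel (w i)
  map_comp {i j l} _ _ := by
    change (w l)⁻¹ * w i = ((w l)⁻¹ * w j) * ((w j)⁻¹ * w i)
    group

lemma LL_surj (l : List G) : ∃ F : Fin (l.length + 1) ⥤ SingleObj G, LL F = l := by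
  refine ⟨ofV (Fin.cons 1 l.get), ?_⟩
  conv_rhs => rw [← List.ofFn_get l]
  unfold LL
  congr 1
  funext i
  change ((Fin.cons (α := fun _ => G) 1 l.get i.succ)⁻¹ * (Fin.cons (α := fun _ => G) 1 l.get 0))⁻¹ = _
  simp

lemma vv_face {p : ℕ} (F : ComposableArrows (SingleObj G) (p + 1)) (i : Fin (p + 2)) (j : Fin (p + 1)) :
    vv ((nerve (SingleObj G)).δ i F : ComposableArrows (SingleObj G) p) j =
      (vv F (i.succAbove 0))⁻¹ * vv F (i.succAbove j) := by
  have h : vv ((nerve (SingleObj G)).δ i F : ComposableArrows (SingleObj G) p) j =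
    (F.map (homOfLE (Fin.strictMono_succAbove i |>.monotone (Fin.zero_le j))) : G)⁻¹ := rfl
  rw [h, map_eq F]
  rw [mul_inv_rev, inv_inv]

lemma pd_LL {p : ℕ} (F : ComposableArrows (SingleObj G) (p + 1)) :
    pd k (Finsupp.single (LL F) 1) = ∑ i : Fin (p + 2), (-1 : k) ^ (i : ℕ) •
      Finsupp.single (LL ((nerve (SingleObj G)).δ i F : ComposableArrows (SingleObj G) p)) (1 : k) := by
  rw [pd_apply, cone_single, cons_LL, dd_single, one_smul, bd_ofFn, map_sum]
  refine Finset.sum_congr rfl fun i _ => ?_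
  rw [map_smul, pi_single, one_smul, List.ofFn_succ]
  congr 1
  rw [tl, List.map_ofFn]
  congr 2
  funext j
  exact (vv_face F i j.succ).symm

/-- comparison map -/
noncomputable def phi (p : ℕ) : (ComposableArrows (SingleObj G) p →₀ k) →ₗ[k] (List G →₀ k) :=
  Finsupp.lmapDomain k k LL

lemma phi_inj (p : ℕ) : Function.Injective (phi k (G := G) p) :=
  Finsupp.mapDomain_injective (LL_injective p)

lemma phi_mem (p : ℕ) (z : ComposableArrows (SingleObj G) p →₀ k) : phi k p z ∈ Cl k p := by
  induction z using Finsupp.induction_linear with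
  | zero => rw [map_zero]; exact zero_mem _
  | add f g hf hg => rw [map_add]; exact add_mem hf hg
  | single F a =>
    have : phi k p (Finsupp.single F a) = Finsupp.single (LL F) a := by simp [phi]
    rw [this]
    exact single_mem_Ch k trivial (by simp [LL]) a

lemma phi_surj (p : ℕ) {z : List G →₀ k} (hz : z ∈ Cl k p) : ∃ y, phi k p y = z := by
  have : LinearMap.id (R := k) z ∈ LinearMap.range (phi k (G := G) p) := by
    refine supp_le k LinearMap.id _ ?_ hz
    rintro l ⟨-, rfl⟩
    obtain ⟨F, hF⟩ := LL_surj l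
    exact ⟨Finsupp.single F 1, by simp [phi, hF]⟩
  exact this

end Nerve
end Cong

namespace Cong

section Link
variable (k : Type) [Field k] {G : Type} [Group G]

lemma finrank_sc (S : ShortComplex (ModuleCat.{0} k)) :
    Module.finrank k S.homology = (sdim (LinearMap.ker S.g.hom) (LinearMap.range S.f.hom)).toNat := by
  have e1 := S.moduleCatHomologyIso.toLinearEquiv
  have h : LinearMap.range S.moduleCatToCycles =
      (LinearMap.range S.f.hom).submoduleOf (LinearMap.ker S.g.hom) := by
    ext ⟨x, hx⟩
    rw [Submodule.submoduleOf, Submodule.mem_comap, LinearMap.mem_range, LinearMap.mem_range]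
    refine exists_congr fun y => ?_
    rw [Subtype.ext_iff]
    rfl
  have e2 : (↥(LinearMap.ker S.g.hom) ⧸ LinearMap.range S.moduleCatToCycles) ≃ₗ[k]
    Sq (LinearMap.ker S.g.hom) (LinearMap.range S.f.hom) := Submodule.quotEquivOfEq _ _ h
  have e3 : S.homology ≃ₗ[k] Sq (LinearMap.ker S.g.hom) (LinearMap.range S.f.hom) := e1.trans e2
  rw [e3.finrank_eq]
  rfl

lemma next_eq (j : ℕ) : (ComplexShape.down ℕ).next j = j - 1 := by
  rcases j with _ | j
  · exact ChainComplex.next_nat_zero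
  · exact ChainComplex.next_nat_succ j

/-- the chain complex -/
noncomputable abbrev KK (k : Type) [Field k] (G : Type) [Group G] : ChainComplex (ModuleCat k) ℕ :=
  (alternatingFaceMapComplex (ModuleCat k)).obj (barChains k G)

/-- comparison, typed with the complex -/
noncomputable def ph (p : ℕ) : ((KK k G).X p) →ₗ[k] (List G →₀ k) := phi k p

lemma ph_injective (p : ℕ) : Function.Injective (ph k (G := G) p) := phi_inj k p

/-- basis elements -/
noncomputable def nb (p : ℕ) (F : ComposableArrows (SingleObj G) p) : (KK k G).X p :=
  show ComposableArrows (SingleObj G) p →₀ k from Finsupp.single F 1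

lemma phi_single (p : ℕ) (F : ComposableArrows (SingleObj G) p) :
    phi k p (Finsupp.single F 1) = Finsupp.single (LL F) 1 := by simp [phi]

lemma ph_bb (p : ℕ) (F : ComposableArrows (SingleObj G) p) :
    ph k p (nb k p F) = Finsupp.single (LL F) 1 := phi_single k p F

lemma KK_ext (p : ℕ) {M : Type} [AddCommGroup M] [Module k M] {f g : (KK k G).X p →ₗ[k] M}
    (h : ∀ F, f (nb k p F) = g (nb k p F)) : f = g :=
  Finsupp.lhom_ext' (α := ComposableArrows (SingleObj G) p) (M := k)
    fun F => LinearMap.ext_ring (h F)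

lemma face_bb (p : ℕ) (F : ComposableArrows (SingleObj G) (p + 1)) (i : Fin (p + 2)) :
    ((barChains k G).δ i).hom (nb k (p + 1) F) = nb k p ((nerve (SingleObj G)).δ i F) :=
  Finsupp.mapDomain_single

lemma d_bb (p : ℕ) (F : ComposableArrows (SingleObj G) (p + 1)) :
    ((KK k G).d (p + 1) p).hom (nb k (p + 1) F) =
      ∑ i : Fin (p + 2), (-1 : ℤ) ^ (i : ℕ) •
        (nb k p ((nerve (SingleObj G)).δ i F) : (KK k G).X p) := by
  have h : (KK k G).d (p + 1) p = ∑ i : Fin (p + 2), (-1 : ℤ) ^ (i : ℕ) • (barChains k G).δ i :=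
    alternatingFaceMapComplex_obj_d _ _
  have h3 : ((KK k G).d (p + 1) p).hom =
      ∑ i : Fin (p + 2), ((-1 : ℤ) ^ (i : ℕ) • ((barChains k G).δ i).hom) := by
    rw [h]
    exact ModuleCat.hom_sum _ _
  have h4 := LinearMap.congr_fun h3 (nb k (p + 1) F)
  refine h4.trans ((LinearMap.sum_apply _ _ _).trans ?_)
  refine Finset.sum_congr rfl fun i _ => ?_
  rw [← face_bb]
  rfl

lemma ph_d (p : ℕ) (z : (KK k G).X (p + 1)) :
    ph k p (((KK k G).d (p + 1) p).hom z) = pd k (ph k (p + 1) z) := by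
  suffices h : (ph k p) ∘ₗ ((KK k G).d (p + 1) p).hom = pd k ∘ₗ ph k (p + 1) from
    LinearMap.congr_fun h z
  refine KK_ext k (p + 1) fun F => ?_
  rw [LinearMap.comp_apply, LinearMap.comp_apply, d_bb, ph_bb, pd_LL, map_sum]
  refine Finset.sum_congr rfl fun i _ => ?_
  have h5 := ph_bb k p ((nerve (SingleObj G)).δ i F)
  have h6 : ∀ x : List G →₀ k, (-1 : ℤ) ^ (i : ℕ) • x = (-1 : k) ^ (i : ℕ) • x := by
    intro x
    rw [← Int.cast_smul_eq_zsmul k]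
    simp
  rw [map_zsmul]
  exact (congrArg (fun x => (-1 : ℤ) ^ (i : ℕ) • x) h5).trans (h6 _)

theorem finrank_grpHomology (j : ℕ) : Module.finrank k (grpHomology k G j) =
    (sdim (Cl (Γ := G) k j ⊓ LinearMap.ker (pd k)) ((Cl k (j + 1)).map (pd k))).toNat := by
  have e : grpHomology k G j ≅ ((KK k G).sc' (j + 1) j (j - 1)).homology :=
    (KK k G).homologyIsoSc' (j + 1) j (j - 1) (ChainComplex.prev ℕ j) (next_eq j)
  rw [e.toLinearEquiv.finrank_eq, finrank_sc]
  congr 1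
  have hinj : Function.Injective (ph k (G := G) j) := phi_inj k j
  refine sdim_eq (M := (KK k G).X j) (ph k j) _ _ _ _ ?_ ?_ ?_
  · intro z hz
    refine ⟨phi_mem k j z, ?_⟩
    rw [SetLike.mem_coe, LinearMap.mem_ker]
    rcases j with _ | j
    · exact pd_zero_len k (phi_mem k 0 z)
    · have h1 : ((KK k G).d (j + 1) j).hom z = 0 := hz
      rw [← ph_d, h1, map_zero]
  · intro z _
    constructor
    · rintro ⟨y, hy, h⟩
      obtain ⟨y', rfl⟩ := phi_surj k (j + 1) hy
      refine ⟨y', ?_⟩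
      apply hinj
      exact (ph_d k j y').trans h
    · rintro ⟨y, rfl⟩
      exact ⟨_, phi_mem k (j + 1) y, (ph_d k j y).symm⟩
  · rintro z ⟨h1, h2⟩
    obtain ⟨y, rfl⟩ := phi_surj k j h1
    refine ⟨y, ?_, ?_⟩
    · rcases j with _ | j
      · have h3 : (KK k G).d 0 0 = 0 := (KK k G).shape 0 0 (by simp)
        change ((KK k G).d 0 0).hom y = 0
        rw [h3]; rfl
      · change ((KK k G).d (j + 1) j).hom y = 0
        apply ph_injective k j
        exact ((ph_d k j y).trans h2).trans (map_zero (ph k j)).symm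
    · have : ph k j y - phi k j y = 0 := sub_self (phi k j y)
      rw [this]; exact zero_mem _

end Link
end Cong

/-- The mod-`k` Betti numbers of the congruence subgroups `Γ_n(𝔭)` are eventually given
by a polynomial in `n` with rational coefficients. -/
theorem stmt6 (K : Type) [Field K] [NumberField K]
    (𝔭 : Ideal (NumberField.RingOfIntegers K)) (h𝔭 : 𝔭 ≠ ⊤) (i : ℕ)
    (k : Type) [Field k] :
    ∃ (P : Polynomial ℚ) (N : ℕ), ∀ n ≥ N,
      (Module.finrank k (grpHomology k (congruenceSubgroup K 𝔭 n) i) : ℚ) =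
        P.eval (n : ℚ) := by
  obtain ⟨P, N, h⟩ := Cong.poly_sdim k h𝔭 i
  refine ⟨P, N, fun n hn => ?_⟩
  rw [Cong.finrank_grpHomology]
  exact h n hn
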